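/- arXiv:math/0502579 — 2 statements merged into one kernel-verified Lean document; each statement's English description precedes it below -/
import Mathlib

section
/- Let ε > 0 be fixed and let l = l(k) be a sequence of positive integers with l(k) ∈ [εk, ε^{-1}k]. Set β = l/k, and let c = c(β) > 0 be the solution of e^{-c} = (2(β+1)-c)/(2(β+1)+c). Then, as k → ∞, C(k, kβ) ~ A · B^k · k^{(1+β)k} · k^{-3/2}, where A = c(c-2β)/√(8πβ(1+c²f₂(c)/β)) · e^{-c(β/2+1)} and B = 2/(c^β √(4(β+1)² - c²)), with κ = c/(1-e^{-c}) and f₂(c) = κ[e^{-c}(-c^{-1}-2c^{-2}-2c^{-3}) + 2c^{-3}] - (κ[e^{-c}(-c^{-1}-c^{-2}) + c^{-2}])². -/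
open Filter Topology Real

/-- `connGraphCount k l` is the number of connected labeled graphs on `k` vertices
with `k - 1 + l` edges (i.e. complexity `l`). -/
noncomputable def connGraphCount (k l : ℕ) : ℕ :=
  Set.ncard {G : SimpleGraph (Fin k) | G.Connected ∧ G.edgeSet.ncard = k - 1 + l}

/-- The function `f₂(c)`, with `κ = c/(1-e^{-c})`:
`f₂(c) = κ[e^{-c}(-c^{-1}-2c^{-2}-2c^{-3}) + 2c^{-3}] - (κ[e^{-c}(-c^{-1}-c^{-2}) + c^{-2}])²`. -/
noncomputable def f2 (c : ℝ) : ℝ :=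
  (c / (1 - Real.exp (-c))) *
      (Real.exp (-c) * (-c⁻¹ - 2 * (c ^ 2)⁻¹ - 2 * (c ^ 3)⁻¹) + 2 * (c ^ 3)⁻¹) -
    ((c / (1 - Real.exp (-c))) * (Real.exp (-c) * (-c⁻¹ - (c ^ 2)⁻¹) + (c ^ 2)⁻¹)) ^ 2

/-- The constant `A = c(c-2β)/√(8πβ(1+c²f₂(c)/β)) · e^{-c(β/2+1)}`. -/
noncomputable def Aterm (β c : ℝ) : ℝ :=
  c * (c - 2 * β) / Real.sqrt (8 * Real.pi * β * (1 + c ^ 2 * f2 c / β)) *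
    Real.exp (-(c * (β / 2 + 1)))

/-- The constant `B = 2/(c^β √(4(β+1)² - c²))`. -/
noncomputable def Bterm (β c : ℝ) : ℝ :=
  2 / (c ^ β * Real.sqrt (4 * (β + 1) ^ 2 - c ^ 2))

/-!
Connected graphs on `n + 1` labeled vertices, counted by edges, have generating function
`(1 + x) ^ C(n+1, 2) * n! * W(x)`, where `W` sums, over all ways of throwing `n` balls into `n`
boxes with at least `j` balls in the first `j` boxes, the product of the weights
`(1 + x) ^ (-box) / mult!`: both sides satisfy the same recurrence, obtained on the left from the
component of a fixed vertex and on the right from the first failing box. With `1 + x = e ^ (w / n)`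
the main factor is `e ^ (w / 2) * (2 * sinh (w / 2)) ^ n`, and what remains is the probability that
independent balls with geometric weights satisfy the constraint. For `w → c` near the real axis this
probability tends to `(1 - λ) * e ^ λ * (1 - e ^ (-c))` with `λ = c * e ^ (-c) / (1 - e ^ (-c))`,
because the constraint matters only near the two ends, where the box occupancies become Poisson.
A saddle point evaluation of Cauchy's coefficient formula finishes the proof for convergent `c`;
uniformity in `β` follows by compactness.
-/

namespace ConnGraph

open Finset
open scoped Nat

section OccupancySums

variable {R S : Type*} [Field R] [Field S] (r : ℕ → ℕ → Prop) [DecidableRel r]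

/-- Constrained occupancy sum: the sum of `∏ uᵢ ^ kᵢ / kᵢ!` over all ways of putting
`h = k₀ + ⋯ + k_{t-1}` balls into `t` boxes such that `r j (k₀ + ⋯ + k_{j-1})` for `1 ≤ j ≤ t`.
The constraints used are `(· ≤ ·)` (at least `j` balls in the first `j` boxes) and `(· ≥ ·)`. -/
noncomputable def occSum (u : ℕ → R) : ℕ → ℕ → R
  | 0, h => if h = 0 then 1 else 0
  | t + 1, h => if r (t + 1) h then
      ∑ ij ∈ antidiagonal h, occSum u t ij.1 * (u t ^ ij.2 / (ij.2 ! : R)) else 0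

lemma occSum_const_mul (u : ℕ → R) (s : R) (t h : ℕ) :
    occSum r (fun i => s * u i) t h = s ^ h * occSum r u t h := by
  induction t generalizing h with
  | zero => by_cases h0 : h = 0 <;> simp [occSum, h0]
  | succ t ih =>
    simp only [occSum, mul_ite, mul_zero, Finset.mul_sum]
    refine if_congr Iff.rfl (sum_congr rfl fun ij hij => ?_) rfl
    rw [ih, mul_pow, ← mem_antidiagonal.1 hij, pow_add]
    ring

lemma map_occSum (f : R →+* S) (u : ℕ → R) (t h : ℕ) :
    f (occSum r u t h) = occSum r (fun i => f (u i)) t h := by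
  induction t generalizing h with
  | zero => simp [occSum, apply_ite f]
  | succ t ih => simp [occSum, apply_ite f, ih]

lemma occSum_nonneg {u : ℕ → ℝ} (hu : ∀ i, 0 ≤ u i) (t h : ℕ) : 0 ≤ occSum r u t h := by
  induction t generalizing h with
  | zero => simp only [occSum]; split_ifs <;> simp
  | succ t ih =>
    simp only [occSum]
    split_ifs
    · exact sum_nonneg fun ij _ => mul_nonneg (ih _) (div_nonneg (pow_nonneg (hu t) _) (by simp))
    · rfl

lemma tendsto_occSum [TopologicalSpace R] [IsTopologicalRing R] {ι : Type*} {f : Filter ι}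
    {u : ι → ℕ → R} {v : ℕ → R} {t : ℕ} (hu : ∀ s < t, Tendsto (fun i => u i s) f (𝓝 (v s)))
    (h : ℕ) : Tendsto (fun i => occSum r (u i) t h) f (𝓝 (occSum r v t h)) := by
  induction t generalizing h with
  | zero => simp [occSum, tendsto_const_nhds]
  | succ t ih =>
    simp only [occSum]
    split_ifs
    · exact tendsto_finsetSum _ fun ij _ => (ih (fun s hs => hu s (by omega)) _).mul
        (((hu t t.lt_succ_self).pow _).div_const _)
    · exact tendsto_const_nhds

lemma occSum_le_eq_zero (u : ℕ → R) {t h : ℕ} (hth : h < t) : occSum (· ≤ ·) u t h = 0 := by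
  cases t with
  | zero => omega
  | succ t => exact if_neg (by omega)

lemma occSum_ge_eq_zero (u : ℕ → R) {t h : ℕ} (hth : t < h) : occSum (· ≥ ·) u t h = 0 := by
  cases t with
  | zero => exact if_neg (by omega)
  | succ t => exact if_neg (by omega)

/-- The exponential power series `exp (a X)`. -/
noncomputable def expSeries [CharZero R] (a : R) : PowerSeries R :=
  PowerSeries.rescale a (PowerSeries.exp R)

section ExponentialSeries

open PowerSeries

variable [CharZero R]

lemma coeff_expSeries (a : R) (n : ℕ) : coeff n (expSeries a) = a ^ n / (n ! : R) := by
  simp [expSeries, coeff_rescale, coeff_exp, div_eq_mul_inv]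

lemma constantCoeff_expSeries (a : R) : constantCoeff (expSeries a) = 1 := by
  simp [← coeff_zero_eq_constantCoeff_apply, coeff_expSeries]

lemma expSeries_mul_expSeries (a b : R) : expSeries a * expSeries b = expSeries (a + b) :=
  exp_mul_exp_eq_exp_add a b

lemma expSeries_zero : expSeries (0 : R) = 1 := by
  simp [expSeries, rescale_zero]

lemma sum_antidiagonal_pow_div_factorial (a b : R) (h : ℕ) :
    ∑ ij ∈ antidiagonal h, a ^ ij.1 / (ij.1 ! : R) * (b ^ ij.2 / (ij.2 ! : R)) =
      (a + b) ^ h / (h ! : R) := by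
  simpa [coeff_mul, coeff_expSeries] using congrArg (coeff h) (expSeries_mul_expSeries a b)

end ExponentialSeries

lemma norm_occSum_le {𝕜 : Type*} [RCLike 𝕜] (u : ℕ → 𝕜) (t h : ℕ) :
    ‖occSum r u t h‖ ≤ (∑ i ∈ range t, ‖u i‖) ^ h / (h ! : ℝ) := by
  induction t generalizing h with
  | zero => by_cases h0 : h = 0 <;> simp [occSum, h0]
  | succ t ih =>
    simp only [occSum]
    split_ifs
    · rw [sum_range_succ, ← sum_antidiagonal_pow_div_factorial]
      refine (norm_sum_le _ _).trans (sum_le_sum fun ij _ => ?_)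
      rw [norm_mul, norm_div, norm_pow, RCLike.norm_natCast]
      exact mul_le_mul_of_nonneg_right (ih _) (by positivity)
    · simpa using by positivity

section FirstPassage

open PowerSeries

variable [CharZero R] (u : ℕ → R)

lemma mk_occSum_le_mul_expSeries (t : ℕ) :
    PowerSeries.mk (occSum (· ≤ ·) u t) * expSeries (u t) =
      PowerSeries.mk (occSum (· ≤ ·) u (t + 1)) + C (occSum (· ≤ ·) u t t) * X ^ t := by
  ext h
  rw [map_add, coeff_mul, coeff_C_mul, coeff_X_pow]
  simp only [coeff_mk, coeff_expSeries]
  rcases lt_trichotomy h t with hlt | rfl | hgt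
  · rw [occSum_le_eq_zero u (hlt.trans t.lt_succ_self), if_neg hlt.ne, mul_zero, add_zero]
    refine sum_eq_zero fun ij hij => ?_
    have := mem_antidiagonal.1 hij
    rw [occSum_le_eq_zero u (by omega), zero_mul]
  · rw [occSum_le_eq_zero u h.lt_succ_self, zero_add, sum_eq_single (h, 0) _ (by simp)]
    · simp
    · rintro ⟨a, b⟩ hab hne
      have : a + b = h := mem_antidiagonal.1 hab
      have : a ≠ h := fun ha => hne (Prod.ext ha (by simp only; omega))
      rw [occSum_le_eq_zero u (by simp only; omega), zero_mul]
  · simp [occSum, Nat.succ_le_of_lt hgt, hgt.ne']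

/-- The term of index `j` collects the occupancies for which `j` is the first time at which
only `j` balls lie in the first `j + 1` boxes. -/
lemma expSeries_sum_eq_mk_occSum_le_add (t : ℕ) :
    expSeries (∑ i ∈ range t, u i) = PowerSeries.mk (occSum (· ≤ ·) u t) +
      ∑ j ∈ range t, C (occSum (· ≤ ·) u j j) *
        (X ^ j * expSeries (∑ i ∈ range t, u i - ∑ i ∈ range (j + 1), u i)) := by
  induction t with
  | zero =>
    ext h
    simp [occSum, expSeries_zero, coeff_one]
  | succ t ih =>
    have shift (j : ℕ) : expSeries (∑ i ∈ range t, u i - ∑ i ∈ range (j + 1), u i) *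
        expSeries (u t) = expSeries (∑ i ∈ range (t + 1), u i - ∑ i ∈ range (j + 1), u i) := by
      rw [expSeries_mul_expSeries, sum_range_succ u t, sub_add_eq_add_sub]
    rw [sum_range_succ u t, ← expSeries_mul_expSeries, ih, add_mul, mk_occSum_le_mul_expSeries,
      sum_mul, sum_range_succ _ t, ← sum_range_succ u t, sub_self, expSeries_zero, mul_one,
      add_assoc, add_comm (C _ * X ^ t)]
    simp only [mul_assoc, shift]

lemma pow_div_factorial_eq_sum_occSum_le (S : R) (n : ℕ) :
    S ^ n / (n ! : R) = ∑ j ∈ range (n + 1), occSum (· ≤ ·) u j j *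
      ((S - ∑ i ∈ range (j + 1), u i) ^ (n - j) / ((n - j)! : R)) := by
  set U := ∑ i ∈ range (n + 1), u i with hU
  have key : expSeries S = PowerSeries.mk (occSum (· ≤ ·) u (n + 1)) * expSeries (S - U) +
      ∑ j ∈ range (n + 1), C (occSum (· ≤ ·) u j j) *
        (X ^ j * expSeries (S - ∑ i ∈ range (j + 1), u i)) := by
    have := congrArg (· * expSeries (S - U)) (expSeries_sum_eq_mk_occSum_le_add u (n + 1))
    simpa only [add_mul, sum_mul, mul_assoc, expSeries_mul_expSeries, ← hU, add_sub_cancel,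
      sub_add_sub_cancel'] using this
  have vanish : coeff n (PowerSeries.mk (occSum (· ≤ ·) u (n + 1)) * expSeries (S - U)) = 0 := by
    rw [coeff_mul]
    refine sum_eq_zero fun ij hij => ?_
    have := mem_antidiagonal.1 hij
    rw [coeff_mk, occSum_le_eq_zero u (by omega), zero_mul]
  rw [← coeff_expSeries, key, map_add, vanish, zero_add, map_sum]
  refine sum_congr rfl fun j hj => ?_
  rw [coeff_C_mul, coeff_X_pow_mul', if_pos (Nat.lt_succ_iff.1 (mem_range.1 hj)), coeff_expSeries]

end FirstPassage

lemma occSum_le_succ_sub (u : ℕ → R) {n s h : ℕ} (hs : s + 1 + h ≤ n) :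
    occSum (· ≤ ·) u (s + 1) (n - h) = ∑ k ∈ Ico h (n - s + 1),
      u s ^ (k - h) / ((k - h)! : R) * occSum (· ≤ ·) u s (n - k) := by
  rw [occSum, if_pos (by omega), ← Finset.Nat.sum_antidiagonal_swap,
    Finset.Nat.sum_antidiagonal_eq_sum_range_succ_mk, sum_Ico_eq_sum_range]
  symm
  refine sum_subset_zero_on_sdiff (range_subset_range.2 (by omega)) (fun b hb => ?_)
    fun b _ => ?_
  · rw [Finset.mem_sdiff, mem_range, mem_range] at hb
    simp only [Prod.fst_swap]
    rw [occSum_le_eq_zero u (by omega), zero_mul]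
  · simp only [Prod.fst_swap, Prod.snd_swap, Nat.add_sub_cancel_left, Nat.sub_add_eq, mul_comm]

lemma occSum_ge_succ (u : ℕ → R) {m k : ℕ} (hk : k ≤ m + 1) :
    occSum (· ≥ ·) u (m + 1) k = ∑ h ∈ range (k + 1) with h ≤ m,
      occSum (· ≥ ·) u m h * (u m ^ (k - h) / ((k - h)! : R)) := by
  rw [occSum, if_pos hk, Finset.Nat.sum_antidiagonal_eq_sum_range_succ_mk, sum_filter_of_ne]
  intro h _ hne
  contrapose! hne
  rw [occSum_ge_eq_zero u hne, zero_mul]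

/-- Read from the last box backwards, the constraint `(· ≤ ·)` with `n` balls in `n` boxes becomes
`(· ≥ ·)`. -/
lemma occSum_le_self_eq_sum (u : ℕ → R) {n m : ℕ} (hm : m ≤ n) :
    occSum (· ≤ ·) u n n = ∑ h ∈ range (m + 1),
      occSum (· ≥ ·) (fun i => u (n - 1 - i)) m h * occSum (· ≤ ·) u (n - m) (n - h) := by
  induction m with
  | zero => simp [occSum]
  | succ m ih =>
    obtain ⟨s, rfl⟩ : ∃ s, n = s + (m + 1) := ⟨n - (m + 1), by omega⟩
    rw [ih (by omega), show s + (m + 1) - m = s + 1 by omega, Nat.add_sub_cancel]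
    set v : ℕ → R := fun i => u (s + (m + 1) - 1 - i)
    have hv : v m = u s := congrArg u (by omega)
    have peel (h : ℕ) (hh : h ∈ range (m + 1)) :
        occSum (· ≤ ·) u (s + 1) (s + (m + 1) - h) = ∑ k ∈ Ico h (m + 2),
          v m ^ (k - h) / ((k - h)! : R) * occSum (· ≤ ·) u s (s + (m + 1) - k) := by
      rw [occSum_le_succ_sub u (by have := mem_range.1 hh; omega), Nat.add_sub_cancel_left, hv]
    calc
      _ = ∑ h ∈ range (m + 1), ∑ k ∈ Ico h (m + 2), occSum (· ≥ ·) v m h *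
            (v m ^ (k - h) / ((k - h)! : R)) * occSum (· ≤ ·) u s (s + (m + 1) - k) :=
        sum_congr rfl fun h hh => by simp only [peel h hh, mul_sum, mul_assoc]
      _ = ∑ k ∈ range (m + 2), ∑ h ∈ range (k + 1) with h ≤ m, occSum (· ≥ ·) v m h *
            (v m ^ (k - h) / ((k - h)! : R)) * occSum (· ≤ ·) u s (s + (m + 1) - k) := by
        refine sum_comm' fun h k => ?_
        simp only [mem_range, mem_Ico, mem_filter]
        omega
      _ = _ := sum_congr rfl fun k hk => by
        rw [occSum_ge_succ v (Nat.lt_succ_iff.1 (mem_range.1 hk)), sum_mul]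

end OccupancySums

section GraphGeneratingFunctions

open SimpleGraph

variable {R : Type*} [CommSemiring R] {V W : Type*}

/-- Edge generating function `∑ x ^ e(G)` of the graphs `G` on `V` with property `P`. -/
noncomputable def graphGenFun [Finite V] (P : SimpleGraph V → Prop) (x : R) : R :=
  ∑ G ∈ (Set.toFinite {G | P G}).toFinset, x ^ G.edgeSet.ncard

lemma graphGenFun_connected_congr [Finite V] [Finite W] (e : V ≃ W) (x : R) :
    graphGenFun (V := V) Connected x = graphGenFun (V := W) Connected x := by
  refine sum_equiv e.simpleGraph (fun G => ?_) fun G _ => ?_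
  · simpa using (Iso.comap e.symm G).connected_iff.symm
  · exact congrArg (x ^ ·) (Nat.card_congr (Iso.comap e.symm G).mapEdgeSet).symm

lemma graphGenFun_true [Finite V] (x : R) :
    graphGenFun (V := V) (fun _ => True) x = (1 + x) ^ (Nat.card V).choose 2 := by
  classical
  have := Fintype.ofFinite V
  have hcard : #{e : Sym2 V | ¬ e.IsDiag} = (Nat.card V).choose 2 := by
    rw [← Fintype.card_subtype, Sym2.card_subtype_not_diag, Nat.card_eq_fintype_card]
  have hbinom := Finset.sum_pow_mul_eq_add_pow x 1 ({e : Sym2 V | ¬ e.IsDiag} : Finset _)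
  rw [← hcard, add_comm, ← hbinom]
  refine sum_bij' (fun G _ => G.edgeFinset) (fun s _ => fromEdgeSet (s : Set (Sym2 V)))
    (fun G _ => ?_) (fun s _ => by simp) (fun G _ => by simp) (fun s hs => ?_) fun G _ => ?_
  · exact mem_powerset.2 fun e he =>
      mem_filter.2 ⟨mem_univ e, G.not_isDiag_of_mem_edgeSet (mem_edgeFinset.1 he)⟩
  · ext e
    have hdiag : e ∈ s → ¬ e.IsDiag := fun he => (mem_filter.1 (mem_powerset.1 hs he)).2
    simpa using hdiag
  · rw [one_pow, mul_one, Set.ncard_eq_toFinset_card', edgeFinset]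

section Glue

variable {S : Set V} (H : SimpleGraph S) (K : SimpleGraph ↑Sᶜ)

lemma sup_spanningCoe_adj {a b : V} : (H.spanningCoe ⊔ K.spanningCoe).Adj a b ↔
    (∃ (ha : a ∈ S) (hb : b ∈ S), H.Adj ⟨a, ha⟩ ⟨b, hb⟩) ∨
      ∃ (ha : a ∉ S) (hb : b ∉ S), K.Adj ⟨a, ha⟩ ⟨b, hb⟩ := by
  simp [map_adj]

lemma induce_sup_spanningCoe : (H.spanningCoe ⊔ K.spanningCoe).induce S = H := by
  ext a b
  simp [-sup_adj, sup_spanningCoe_adj]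

lemma induce_compl_sup_spanningCoe : (H.spanningCoe ⊔ K.spanningCoe).induce Sᶜ = K := by
  ext a b
  have ha : (a : V) ∉ S := a.2
  have hb : (b : V) ∉ S := b.2
  simp [-sup_adj, sup_spanningCoe_adj, ha, hb]

lemma ncard_edgeSet_sup_spanningCoe [Finite V] :
    (H.spanningCoe ⊔ K.spanningCoe).edgeSet.ncard = H.edgeSet.ncard + K.edgeSet.ncard := by
  have hdisj : Disjoint H.spanningCoe.edgeSet K.spanningCoe.edgeSet := by
    rw [Set.disjoint_left]
    intro e
    induction e using Sym2.ind with
    | _ a b => simp +contextual [map_adj]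
  rw [edgeSet_sup, Set.ncard_union_eq hdisj, edgeSet_map, edgeSet_map,
    Set.ncard_image_of_injective _ (Function.Embedding.injective _),
    Set.ncard_image_of_injective _ (Function.Embedding.injective _)]

end Glue

lemma sup_spanningCoe_induce {S : Set V} {G : SimpleGraph V}
    (hS : ∀ a ∈ S, ∀ b, G.Adj a b → b ∈ S) :
    (G.induce S).spanningCoe ⊔ (G.induce Sᶜ).spanningCoe = G := by
  ext a b
  have hab : G.Adj a b → (a ∈ S ↔ b ∈ S) := fun h => ⟨fun ha => hS a ha b h,
    fun hb => hS b hb a h.symm⟩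
  simp only [sup_spanningCoe_adj, comap_adj, Function.Embedding.subtype_apply, exists_prop]
  tauto

lemma supp_connectedComponentMk_eq_iff {G : SimpleGraph V} {v : V} {S : Set V} (hv : v ∈ S) :
    (G.connectedComponentMk v).supp = S ↔
      (G.induce S).Connected ∧ ∀ a ∈ S, ∀ b, G.Adj a b → b ∈ S := by
  constructor
  · rintro rfl
    exact ⟨(G.connectedComponentMk v).connected_toSimpleGraph,
      fun a ha b hab => ConnectedComponent.mem_supp_of_adj_mem_supp _ ha hab⟩
  · rintro ⟨hconn, hclosed⟩
    ext w
    rw [ConnectedComponent.mem_supp_iff, ConnectedComponent.eq]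
    refine ⟨fun ⟨p⟩ => ?_, fun hw => ?_⟩
    · by_contra hw
      obtain ⟨d, -, hd, hd'⟩ := p.reverse.exists_boundary_dart S hv hw
      exact hd' (hclosed _ hd _ d.adj)
    · exact (hconn.preconnected ⟨w, hw⟩ ⟨v, hv⟩).map (Embedding.induce S).toHom

lemma graphGenFun_supp_eq [Finite V] {v : V} {S : Set V} (hv : v ∈ S) (x : R) :
    graphGenFun (fun G : SimpleGraph V => (G.connectedComponentMk v).supp = S) x =
      graphGenFun (V := S) Connected x * (1 + x) ^ (Nat.card ↑Sᶜ).choose 2 := by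
  rw [← graphGenFun_true]
  simp only [graphGenFun]
  rw [Finset.sum_mul_sum, ← Finset.sum_product']
  symm
  refine sum_bij' (fun p _ => p.1.spanningCoe ⊔ p.2.spanningCoe)
    (fun G _ => (G.induce S, G.induce Sᶜ)) ?_ (fun G hG => ?_) (fun p _ => ?_) (fun G hG => ?_) ?_
  · rintro ⟨H, K⟩ hHK
    have hH : H.Connected := by simpa using hHK
    simp only [Set.Finite.mem_toFinset, Set.mem_ofPred_eq, supp_connectedComponentMk_eq_iff hv,
      induce_sup_spanningCoe, sup_spanningCoe_adj]
    refine ⟨hH, ?_⟩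
    rintro a ha b (⟨-, hb, -⟩ | ⟨ha', -⟩)
    exacts [hb, absurd ha ha']
  · simpa using ((supp_connectedComponentMk_eq_iff hv).1 (by simpa using hG)).1
  · rw [induce_sup_spanningCoe, induce_compl_sup_spanningCoe]
  · exact sup_spanningCoe_induce ((supp_connectedComponentMk_eq_iff hv).1 (by simpa using hG)).2
  · exact fun p _ => by rw [ncard_edgeSet_sup_spanningCoe, pow_add]

/-- Edge generating function of the connected graphs on `k` labelled vertices. -/
noncomputable def connGenFun (k : ℕ) (x : R) : R := graphGenFun (V := Fin k) Connected x

lemma graphGenFun_supp_eq_connGenFun [Fintype V] {v : V} {S : Finset V} (hv : v ∈ S) (x : R) :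
    graphGenFun (fun G : SimpleGraph V => (G.connectedComponentMk v).supp = S) x =
      connGenFun #S x * (1 + x) ^ (Fintype.card V - #S).choose 2 := by
  rw [graphGenFun_supp_eq (mem_coe.2 hv), connGenFun,
    graphGenFun_connected_congr (S.equivFin : ↥(S : Set V) ≃ _), Nat.card_coe_set_eq,
    Set.ncard_compl, Set.ncard_coe_finset, Nat.card_eq_fintype_card]

lemma graphGenFun_eq_sum_supp [Fintype V] [DecidableEq V] (v : V) (x : R) :
    graphGenFun (V := V) (fun _ => True) x = ∑ S ∈ (univ.erase v).powerset,
      graphGenFun (fun G : SimpleGraph V => (G.connectedComponentMk v).supp = ↑(insert v S)) x := by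
  classical
  simp only [graphGenFun]
  rw [← Finset.sum_fiberwise_of_maps_to
    (g := fun G => (G.connectedComponentMk v).supp.toFinset.erase v)
    fun G _ => mem_powerset.2 (erase_subset_erase v (subset_univ _))]
  refine sum_congr rfl fun S hS => sum_congr ?_ fun _ _ => rfl
  have hvS : v ∉ S := fun h => by simpa using mem_powerset.1 hS h
  ext G
  have hv : v ∈ (G.connectedComponentMk v).supp.toFinset := by simp
  rw [mem_filter, erase_eq_iff_eq_insert hv hvS, ← coe_inj, Set.coe_toFinset]
  simp

lemma one_add_pow_choose_two_eq_sum_connGenFun (n : ℕ) (x : R) :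
    (1 + x) ^ (n + 1).choose 2 = ∑ j ∈ range (n + 1),
      n.choose j * (connGenFun (j + 1) x * (1 + x) ^ (n - j).choose 2) := by
  have hterm : ∀ S ∈ (univ.erase (0 : Fin (n + 1))).powerset,
      graphGenFun (fun G : SimpleGraph (Fin (n + 1)) =>
        (G.connectedComponentMk 0).supp = ↑(insert 0 S)) x =
      connGenFun (#S + 1) x * (1 + x) ^ (n - #S).choose 2 := fun S hS => by
    have h0 : (0 : Fin (n + 1)) ∉ S := fun h => by simpa using mem_powerset.1 hS h
    rw [graphGenFun_supp_eq_connGenFun (mem_insert_self 0 S), card_insert_of_notMem h0,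
      Fintype.card_fin, Nat.add_sub_add_right]
  have htotal := graphGenFun_true (V := Fin (n + 1)) x
  rw [Nat.card_fin, graphGenFun_eq_sum_supp 0, sum_congr rfl hterm,
    sum_powerset_apply_card (fun j => connGenFun (j + 1) x * (1 + x) ^ (n - j).choose 2)] at htotal
  simpa [card_erase_of_mem] using htotal.symm

end GraphGeneratingFunctions

lemma add_choose_two (a b : ℕ) : (a + b).choose 2 = a.choose 2 + b.choose 2 + a * b := by
  rw [Nat.add_choose_eq]
  simp [Nat.antidiagonal_succ]
  ring

lemma eq_of_sum_choose_mul_eq {R : Type*} [CommRing R] {f g b : ℕ → R} (hb : b 0 = 1)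
    (h : ∀ n, ∑ j ∈ range (n + 1), n.choose j * (f j * b (n - j)) =
      ∑ j ∈ range (n + 1), n.choose j * (g j * b (n - j))) : f = g := by
  funext n
  induction n using Nat.strong_induction_on with
  | _ n ih =>
    have hn := h n
    rw [sum_range_succ, sum_range_succ,
      sum_congr rfl fun j hj => by rw [ih j (mem_range.1 hj)]] at hn
    simpa [hb] using hn

section TreeInversions

open Polynomial

lemma sum_choose_mul_occSum_geometric {K : Type*} [Field K] [CharZero K] {y : K} (hy : y ≠ 0)
    (n : ℕ) : ∑ j ∈ range (n + 1), n.choose j * (y ^ (j + 1).choose 2 *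
      (j ! * occSum (· ≤ ·) (fun t => (1 - y⁻¹) * y⁻¹ ^ t) j j) * y ^ (n - j).choose 2) =
      y ^ (n + 1).choose 2 := by
  set u : ℕ → K := fun t => (1 - y⁻¹) * y⁻¹ ^ t
  have hpartial (j : ℕ) : ∑ i ∈ range j, u i = 1 - y⁻¹ ^ j := by
    rw [← Finset.mul_sum, mul_comm, ← mul_neg_geom_sum, mul_comm]
  have hfact (m : ℕ) : ((m ! : ℕ) : K) ≠ 0 := mod_cast m.factorial_ne_zero
  have htotal := pow_div_factorial_eq_sum_occSum_le u 1 n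
  simp only [hpartial, sub_sub_cancel, one_pow] at htotal
  calc _ = ∑ j ∈ range (n + 1), y ^ (n + 1).choose 2 * n ! *
        (occSum (· ≤ ·) u j j * ((y⁻¹ ^ (j + 1)) ^ (n - j) / ((n - j)! : K))) := by
        refine sum_congr rfl fun j hj => ?_
        have hjn : j ≤ n := by grind
        have hexp : (n + 1).choose 2 =
            (j + 1).choose 2 + (n - j).choose 2 + (j + 1) * (n - j) := by
          rw [← add_choose_two]; congr 1; omega
        have hpow : (y⁻¹ ^ (j + 1)) ^ (n - j) = (y ^ ((j + 1) * (n - j)))⁻¹ := by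
          rw [← pow_mul, inv_pow]
        rw [Nat.cast_choose K hjn, hexp, hpow, pow_add, pow_add]
        field_simp [hfact]
    _ = y ^ (n + 1).choose 2 := by
        rw [← Finset.mul_sum, ← htotal, mul_assoc, mul_one_div_cancel (hfact n), mul_one]

/-- Both sides satisfy the same recurrence: deleting the component of vertex `0` corresponds to
splitting occupancies at the first box where the constraint fails. -/
lemma connGenFun_succ_eq_occSum {K : Type*} [Field K] [CharZero K] (n : ℕ) {x : K}
    (hx : 1 + x ≠ 0) : connGenFun (n + 1) x = (1 + x) ^ (n + 1).choose 2 *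
      (n ! * occSum (· ≤ ·) (fun t => (1 - (1 + x)⁻¹) * (1 + x)⁻¹ ^ t) n n) := by
  refine congrFun (eq_of_sum_choose_mul_eq (f := fun n => connGenFun (n + 1) x)
    (b := fun m => (1 + x) ^ m.choose 2)
    (g := fun n => (1 + x) ^ (n + 1).choose 2 *
      (n ! * occSum (· ≤ ·) (fun t => (1 - (1 + x)⁻¹) * (1 + x)⁻¹ ^ t) n n))
    (by simp) fun n => ?_) n
  rw [sum_choose_mul_occSum_geometric hx, ← one_add_pow_choose_two_eq_sum_connGenFun]

/-- The occupancy sums for the weights `y⁻¹ ^ s`, cleared of negative powers of `y`. Up to the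
factor `n!`, `treeInversionPoly n n` is the inversion enumerator of labelled trees on `n + 1`
vertices (Mallows–Riordan polynomial). -/
noncomputable def treeInversionPoly : ℕ → ℕ → ℝ[X]
  | 0, h => if h = 0 then 1 else 0
  | t + 1, h => if t + 1 ≤ h then X ^ (h - (t + 1)) *
      ∑ ij ∈ antidiagonal h, C (1 / (ij.2 ! : ℝ)) * treeInversionPoly t ij.1 else 0

lemma coeff_treeInversionPoly_nonneg (t h i : ℕ) : 0 ≤ (treeInversionPoly t h).coeff i := by
  induction t generalizing h i with
  | zero => simp only [treeInversionPoly]; split_ifs <;> simp [coeff_one, apply_ite]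
  | succ t ih =>
    simp only [treeInversionPoly]
    split_ifs
    · rw [coeff_X_pow_mul']
      split_ifs
      · rw [finsetSum_coeff]
        refine sum_nonneg fun ij _ => ?_
        rw [coeff_C_mul]
        exact mul_nonneg (by positivity) (ih _ _)
      · exact le_rfl
    · simp

lemma eval_one_treeInversionPoly (t h : ℕ) :
    (treeInversionPoly t h).eval 1 = occSum (· ≤ ·) (fun _ => (1 : ℝ)) t h := by
  induction t generalizing h with
  | zero => by_cases h0 : h = 0 <;> simp [treeInversionPoly, occSum, h0]
  | succ t ih =>
    simp only [treeInversionPoly, occSum]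
    split_ifs
    · simp [eval_finsetSum, ih, mul_comm]
    · simp

variable {K : Type*} [Field K] [Algebra ℝ K]

lemma pow_mul_aeval_treeInversionPoly {y : K} (hy : y ≠ 0) (t h : ℕ) :
    y ^ (t + 1).choose 2 * aeval y (treeInversionPoly t h) =
      y ^ (t * h) * occSum (· ≤ ·) (fun s => y⁻¹ ^ s) t h := by
  induction t generalizing h with
  | zero => by_cases h0 : h = 0 <;> simp [treeInversionPoly, occSum, h0]
  | succ t ih =>
    simp only [treeInversionPoly, occSum]
    split_ifs with hh
    swap
    · simp
    simp only [map_mul, map_pow, aeval_X, map_sum, aeval_C, Finset.mul_sum]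
    refine sum_congr rfl fun ⟨a, b⟩ hab => ?_
    have hab : a + b = h := mem_antidiagonal.1 hab
    have hleft : y ^ (t + 1 + 1).choose 2 * y ^ (h - (t + 1)) = y ^ (t + 1).choose 2 * y ^ h := by
      rw [← pow_add, ← pow_add, add_choose_two (t + 1) 1]
      congr 1
      simp
      omega
    have hright : y ^ ((t + 1) * h) * (y⁻¹ ^ t) ^ b = y ^ h * y ^ (t * a) := by
      rw [← hab, inv_pow, inv_pow, ← pow_mul, mul_inv_eq_iff_eq_mul₀ (pow_ne_zero _ hy)]
      ring
    calc _ = y ^ (t + 1 + 1).choose 2 * y ^ (h - (t + 1)) *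
          (1 / (b ! : K) * aeval y (treeInversionPoly t a)) := by simp; ring
      _ = y ^ (t + 1).choose 2 * aeval y (treeInversionPoly t a) * y ^ h * (1 / (b ! : K)) := by
          rw [hleft]; ring
      _ = occSum (· ≤ ·) (fun s => y⁻¹ ^ s) t a * (y ^ h * y ^ (t * a)) / (b ! : K) := by
          rw [ih]; ring
      _ = _ := by rw [← hright]; ring

lemma connGenFun_succ_eq_aeval [CharZero K] (n : ℕ) {x : K} (hx : 1 + x ≠ 0) :
    connGenFun (n + 1) x = x ^ n * n ! * aeval (1 + x) (treeInversionPoly n n) := by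
  have hmul := pow_mul_aeval_treeInversionPoly hx n n
  have hbase : (1 + x) ^ n * (1 - (1 + x)⁻¹) ^ n = x ^ n := by
    rw [← mul_pow, mul_sub, mul_inv_cancel₀ hx, mul_one, add_sub_cancel_left]
  have hexp : (1 + x) ^ (n + 1).choose 2 * (1 + x) ^ (n + 1).choose 2 =
      (1 + x) ^ (n * n) * (1 + x) ^ n := by
    rw [← pow_add, ← pow_add, ← mul_two,
      show (n + 1).choose 2 * 2 = _ from (Nat.add_one_mul_choose_eq n 1).symm, Nat.choose_one_right]
    ring
  rw [connGenFun_succ_eq_occSum n hx, occSum_const_mul]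
  apply mul_left_cancel₀ (pow_ne_zero ((n + 1).choose 2) hx)
  linear_combination (n ! * (1 - (1 + x)⁻¹) ^ n * occSum (· ≤ ·) (fun s => (1 + x)⁻¹ ^ s) n n)
    * hexp + ((1 + x) ^ (n * n) * n ! * occSum (· ≤ ·) (fun s => (1 + x)⁻¹ ^ s) n n) * hbase -
    (x ^ n * n !) * hmul

end TreeInversions

section Domination

open Polynomial

section NonnegCoeff

variable {p : ℝ[X]} (hp : ∀ i, 0 ≤ p.coeff i)
include hp

lemma eval_nonneg_of_coeff_nonneg {a : ℝ} (ha : 0 ≤ a) : 0 ≤ p.eval a := by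
  rw [eval_eq_sum_range]
  exact sum_nonneg fun i _ => mul_nonneg (hp i) (pow_nonneg ha i)

lemma norm_aeval_le_eval_norm {A : Type*} [NormedRing A] [NormOneClass A] [NormedAlgebra ℝ A]
    (z : A) : ‖aeval z p‖ ≤ p.eval ‖z‖ := by
  rw [aeval_eq_sum_range, eval_eq_sum_range]
  refine (norm_sum_le _ _).trans (sum_le_sum fun i _ => ?_)
  rw [norm_smul, Real.norm_of_nonneg (hp i)]
  exact mul_le_mul_of_nonneg_left (norm_pow_le z i) (hp i)

lemma eval_le_pow_mul_eval_add {a b E : ℝ} (hb : 0 ≤ b) (ha : 1 ≤ a) (hE : 0 ≤ E) (hE1 : E ≤ 1)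
    (hbE : b ≤ a * E) (D : ℕ) : p.eval b ≤ E ^ D * p.eval a + a ^ D * p.eval 1 := by
  simp only [eval_eq_sum_range, one_pow, mul_one, Finset.mul_sum, ← sum_add_distrib]
  refine sum_le_sum fun i _ => ?_
  have hpow : b ^ i ≤ E ^ D * a ^ i + a ^ D := by
    have hi : b ^ i ≤ a ^ i * E ^ i := mul_pow a E i ▸ pow_le_pow_left₀ hb hbE i
    rcases le_total D i with h | h
    · nlinarith [pow_le_pow_of_le_one hE hE1 h, pow_nonneg (zero_le_one.trans ha) i,
        pow_nonneg (zero_le_one.trans ha) D]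
    · nlinarith [pow_le_one₀ (n := i) hE hE1, pow_le_pow_right₀ ha h,
        pow_nonneg (zero_le_one.trans ha) i, mul_nonneg (pow_nonneg hE D)
          (pow_nonneg (zero_le_one.trans ha) i)]
  nlinarith [mul_le_mul_of_nonneg_left hpow (hp i)]

end NonnegCoeff

lemma norm_one_add_mul_exp_mul_I_le {x θ : ℝ} (hx : 0 ≤ x) (hx1 : x ≤ 1) (hθ : |θ| ≤ π) :
    ‖(1 : ℂ) + x * Complex.exp (θ * Complex.I)‖ ≤
      (1 + x) * Real.exp (-(x * θ ^ 2 / (2 * π ^ 2))) := by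
  have hnorm : ‖(1 : ℂ) + x * Complex.exp (θ * Complex.I)‖ ^ 2 =
      (1 + x) ^ 2 - 2 * x * (1 - cos θ) := by
    rw [Complex.sq_norm, Complex.normSq_apply]
    simp only [Complex.add_re, Complex.add_im, Complex.mul_re, Complex.mul_im, Complex.one_re,
      Complex.one_im, Complex.ofReal_re, Complex.ofReal_im, Complex.exp_ofReal_mul_I_re,
      Complex.exp_ofReal_mul_I_im]
    linear_combination x ^ 2 * Real.sin_sq_add_cos_sq θ
  set s := x * θ ^ 2 / π ^ 2 with hs
  have hs0 : 0 ≤ s := by positivity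
  have hcos : 4 * s ≤ 2 * x * (1 - cos θ) := by
    have := mul_le_mul_of_nonneg_left (Real.cos_le_one_sub_mul_cos_sq hθ) hx
    have hrw : x * (1 - 2 / π ^ 2 * θ ^ 2) = x - 2 * s := by rw [hs]; ring
    linarith
  have hexp : 1 - s ≤ Real.exp (-(x * θ ^ 2 / (2 * π ^ 2))) ^ 2 := by
    have hrw : (2 : ℕ) * -(x * θ ^ 2 / (2 * π ^ 2)) = -s := by rw [hs]; push_cast; field_simp
    rw [← Real.exp_nat_mul, hrw]
    linarith [Real.add_one_le_exp (-s)]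
  refine le_of_sq_le_sq ?_ (by positivity)
  calc _ ≤ (1 + x) ^ 2 - 4 * s := by rw [hnorm]; linarith
    _ ≤ (1 + x) ^ 2 * (1 - s) := by
        have : (1 + x) ^ 2 ≤ 4 := by nlinarith
        nlinarith
    _ ≤ _ := by rw [mul_pow]; gcongr

/-- Factors `1 + x e ^ {iθ}` of degree at least `D` gain `E ^ D`; the others are bounded through
the value of the inversion enumerator at `1`. -/
lemma norm_connGenFun_mul_exp_le (n D : ℕ) {x θ : ℝ} (hx : 0 < x) (hx1 : x < 1) (hθ : |θ| ≤ π) :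
    ‖connGenFun (n + 1) (x * Complex.exp (θ * Complex.I))‖ ≤
      Real.exp (-(x * θ ^ 2 / (2 * π ^ 2))) ^ D * ‖connGenFun (n + 1) (x : ℂ)‖ +
        (n * x) ^ n * (1 + x) ^ D := by
  set p := treeInversionPoly n n
  have hp : ∀ i, 0 ≤ p.coeff i := coeff_treeInversionPoly_nonneg n n
  set z : ℂ := x * Complex.exp (θ * Complex.I)
  set E := Real.exp (-(x * θ ^ 2 / (2 * π ^ 2)))
  have hzx : ‖z‖ = x := by
    rw [norm_mul, Complex.norm_exp_ofReal_mul_I, mul_one, Complex.norm_real, norm_of_nonneg hx.le]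
  have hz : 1 + z ≠ 0 := fun h => by
    rw [← neg_eq_iff_add_eq_zero.2 h, norm_neg, norm_one] at hzx
    exact hx1.ne hzx.symm
  have hE1 : E ≤ 1 := Real.exp_le_one_iff.2 (neg_nonpos.2 (by positivity))
  have heval_one : p.eval 1 ≤ (n : ℝ) ^ n / n ! := by
    rw [eval_one_treeInversionPoly]
    simpa using (le_norm_self _).trans (norm_occSum_le (· ≤ ·) (fun _ => (1 : ℝ)) n n)
  have hreal : ‖connGenFun (n + 1) (x : ℂ)‖ = x ^ n * n ! * p.eval (1 + x) := by
    have hcast : (1 : ℂ) + x = algebraMap ℝ ℂ (1 + x) := by simp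
    have hne : (1 : ℂ) + x ≠ 0 := mod_cast (by positivity : 1 + x ≠ 0)
    rw [connGenFun_succ_eq_aeval n hne,
      hcast, aeval_algebraMap_apply_eq_algebraMap_eval, norm_mul, norm_mul, norm_pow,
      Complex.norm_natCast, Complex.norm_real, norm_algebraMap', norm_of_nonneg hx.le,
      norm_of_nonneg (eval_nonneg_of_coeff_nonneg hp (by positivity))]
  rw [hreal, connGenFun_succ_eq_aeval n hz, norm_mul, norm_mul, norm_pow, Complex.norm_natCast, hzx]
  calc _ ≤ x ^ n * n ! * (E ^ D * p.eval (1 + x) + (1 + x) ^ D * ((n : ℝ) ^ n / n !)) := by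
        gcongr
        refine (norm_aeval_le_eval_norm hp _).trans ((eval_le_pow_mul_eval_add hp (norm_nonneg _)
          (by linarith) (Real.exp_nonneg _) hE1
          (norm_one_add_mul_exp_mul_I_le hx.le hx1.le hθ) D).trans ?_)
        gcongr
    _ = _ := by rw [mul_pow]; field_simp

end Domination

section BallotSums

lemma hasSum_pow_div_factorial (a : ℝ) : HasSum (fun h : ℕ => a ^ h / (h ! : ℝ)) (rexp a) := by
  rw [Real.exp_eq_exp_ℝ]
  exact NormedSpace.expSeries_div_hasSum_exp a

lemma one_sub_exp_neg_pos {x : ℝ} (hx : 0 < x) : 0 < 1 - rexp (-x) :=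
  sub_pos.2 (Real.exp_lt_one_iff.2 (neg_lt_zero.2 hx))

lemma mul_exp_one_sub_lt_one {x : ℝ} (hx : x ≠ 1) : x * rexp (1 - x) < 1 := by
  have := Real.add_one_lt_exp (sub_ne_zero.2 hx)
  rw [sub_add_cancel, ← neg_sub, Real.exp_neg] at this
  simpa using mul_lt_mul_of_pos_right this (Real.exp_pos (1 - x))

lemma tendsto_mul_exp_one_sub_pow {x : ℝ} (hx : 0 ≤ x) (hx1 : x < 1) :
    Tendsto (fun t : ℕ => (x * rexp (1 - x)) ^ t) atTop (𝓝 0) :=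
  tendsto_pow_atTop_nhds_zero_of_lt_one (by positivity) (mul_exp_one_sub_lt_one hx1.ne)

/-- Chernoff: the weights `x ^ h`, `h ≥ t`, are at most `x ^ t`. -/
lemma exp_neg_mul_tail_mem_Icc {a : ℕ → ℝ} {t : ℕ} {s x : ℝ} (hx : 0 ≤ x) (hx1 : x ≤ 1)
    (ha : ∀ h, 0 ≤ a h) (hat : ∀ h, a h ≤ (t : ℝ) ^ h / (h ! : ℝ)) (ha0 : ∀ h < t, a h = 0)
    (hs : HasSum (fun h => a h * x ^ h) s) :
    rexp (-(t * x)) * s ∈ Set.Icc 0 ((x * rexp (1 - x)) ^ t) := by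
  have hle : s ≤ x ^ t * rexp t := by
    refine hasSum_le (fun h => ?_) hs ((hasSum_pow_div_factorial t).mul_left (x ^ t))
    rcases lt_or_ge h t with hh | hh
    · rw [ha0 h hh, zero_mul]; positivity
    · rw [mul_comm]
      exact mul_le_mul (pow_le_pow_of_le_one hx hx1 hh) (hat h) (ha h) (by positivity)
  have hchernoff : rexp (-(t * x)) * (x ^ t * rexp t) = (x * rexp (1 - x)) ^ t := by
    rw [mul_pow, ← Real.exp_nat_mul, mul_left_comm, ← Real.exp_add]
    ring_nf
  have hs0 : 0 ≤ s := hs.nonneg fun h => mul_nonneg (ha h) (pow_nonneg hx h)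
  exact ⟨by positivity, hchernoff ▸ mul_le_mul_of_nonneg_left hle (Real.exp_nonneg _)⟩

lemma tendsto_exp_neg_mul_sum_pow_div_factorial {x : ℝ} (hx : 0 ≤ x) (hx1 : x < 1) :
    Tendsto (fun M : ℕ => rexp (-(M * x)) * ∑ h ∈ range M, (M * x) ^ h / (h ! : ℝ))
      atTop (𝓝 1) := by
  have hmem (M : ℕ) : rexp (-(M * x)) * (rexp (M * x) - ∑ h ∈ range M, (M * x) ^ h / (h ! : ℝ)) ∈
      Set.Icc 0 ((x * rexp (1 - x)) ^ M) := by
    refine exp_neg_mul_tail_mem_Icc (a := fun h => if h < M then 0 else (M : ℝ) ^ h / (h ! : ℝ))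
      hx hx1.le (fun h => ?_) (fun h => ?_) (fun h hh => if_pos hh) ?_
    · split_ifs <;> positivity
    · split_ifs <;> [positivity; exact le_rfl]
    · have hhead : HasSum (fun h => if h < M then (M * x) ^ h / (h ! : ℝ) else 0)
          (∑ h ∈ range M, (M * x) ^ h / (h ! : ℝ)) := by
        rw [← sum_congr rfl fun h hh => if_pos (mem_range.1 hh)]
        exact hasSum_sum_of_ne_finset_zero fun h hh => if_neg (by simpa using hh)
      refine ((hasSum_pow_div_factorial (M * x)).sub hhead).congr_fun fun h => ?_
      split_ifs
      · simp
      · rw [mul_pow]; ring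
  have hlim := squeeze_zero (fun M => (hmem M).1) (fun M => (hmem M).2)
    (tendsto_mul_exp_one_sub_pow hx hx1)
  refine (hlim.const_sub 1).congr' (.of_forall fun M => ?_) |>.trans (by simp)
  rw [mul_sub, ← Real.exp_add]
  simp

lemma occSum_ge_one {R : Type*} [Field R] [CharZero R] (m h : ℕ) (hh : h ≤ m + 1) :
    occSum (· ≥ ·) (fun _ => (1 : R)) m h =
      PowerSeries.coeff h ((1 - PowerSeries.X) * expSeries ((m : R) + 1)) := by
  have hcoeff (a : R) (h : ℕ) : PowerSeries.coeff (h + 1) ((1 - PowerSeries.X) * expSeries a) =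
      a ^ (h + 1) / ((h + 1)! : R) - a ^ h / (h ! : R) := by
    rw [sub_mul, one_mul, map_sub, PowerSeries.coeff_succ_X_mul, coeff_expSeries, coeff_expSeries]
  induction m generalizing h with
  | zero =>
    obtain rfl | rfl : h = 0 ∨ h = 1 := by omega
    · simp [occSum, constantCoeff_expSeries]
    · simp [occSum, hcoeff]
  | succ m ih =>
    rcases hh.lt_or_eq with hlt | rfl
    · simp only [occSum, if_pos (Nat.lt_succ_iff.1 hlt)]
      rw [Nat.cast_succ, ← expSeries_mul_expSeries _ 1, ← mul_assoc, PowerSeries.coeff_mul]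
      refine sum_congr rfl fun ij hij => ?_
      have := mem_antidiagonal.1 hij
      rw [ih ij.1 (by omega), coeff_expSeries]
    · have hfact : ((m + 1)! : R) ≠ 0 := mod_cast (m + 1).factorial_ne_zero
      have hm : (m : R) + 1 + 1 ≠ 0 := mod_cast (m + 1).succ_ne_zero
      rw [occSum_ge_eq_zero _ (by omega), hcoeff, Nat.factorial_succ (m + 1)]
      push_cast
      field_simp
      ring

lemma sum_mul_occSum_ge_one (x : ℝ) (m : ℕ) :
    ∑ h ∈ range (m + 1), x ^ h * occSum (· ≥ ·) (fun _ => (1 : ℝ)) m h =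
      (1 - x) * ∑ h ∈ range (m + 1), ((m + 1 : ℕ) * x) ^ h / (h ! : ℝ) +
        ((m + 1 : ℕ) * x) ^ (m + 1) / ((m + 1)! : ℝ) := by
  have hterm (h : ℕ) (hh : h < m) : x ^ (h + 1) * occSum (· ≥ ·) (fun _ => (1 : ℝ)) m (h + 1) =
      ((m + 1 : ℕ) * x) ^ (h + 1) / ((h + 1)! : ℝ) - x * (((m + 1 : ℕ) * x) ^ h / (h ! : ℝ)) := by
    rw [occSum_ge_one _ _ (by omega), sub_mul, one_mul, map_sub, PowerSeries.coeff_succ_X_mul,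
      coeff_expSeries, coeff_expSeries]
    push_cast
    rw [mul_pow, mul_pow]
    ring
  have hlast : ((m + 1 : ℕ) * x) ^ (m + 1) / ((m + 1)! : ℝ) =
      x * (((m + 1 : ℕ) * x) ^ m / (m ! : ℝ)) := by
    rw [Nat.factorial_succ]
    push_cast
    field_simp
    ring
  have hzero : occSum (· ≥ ·) (fun _ => (1 : ℝ)) m 0 = 1 := by
    simp [occSum_ge_one, constantCoeff_expSeries]
  have hhead := sum_range_succ' (fun h => ((m + 1 : ℕ) * x) ^ h / (h ! : ℝ)) m
  have htail := sum_range_succ (fun h => ((m + 1 : ℕ) * x) ^ h / (h ! : ℝ)) m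
  rw [sum_range_succ', sum_congr rfl fun h hh => hterm h (mem_range.1 hh), sum_sub_distrib,
    ← Finset.mul_sum, hlast, hzero]
  simp only [pow_zero, Nat.factorial_zero, Nat.cast_one, div_one] at hhead
  linear_combination -hhead + x * htail

lemma tendsto_exp_neg_mul_sum_occSum_ge_one {x : ℝ} (hx : 0 ≤ x) (hx1 : x < 1) :
    Tendsto (fun m : ℕ => rexp (-(m * x)) *
      ∑ h ∈ range (m + 1), x ^ h * occSum (· ≥ ·) (fun _ => (1 : ℝ)) m h)
      atTop (𝓝 (rexp x * (1 - x))) := by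
  have hlast : Tendsto (fun M : ℕ => rexp (-(M * x)) * ((M * x) ^ M / (M ! : ℝ))) atTop (𝓝 0) := by
    refine squeeze_zero (fun M => by positivity) (fun M => ?_) (tendsto_mul_exp_one_sub_pow hx hx1)
    calc _ ≤ rexp (-(M * x)) * (x ^ M * rexp M) := by
          rw [mul_pow, mul_comm ((M : ℝ) ^ M), mul_div_assoc]
          gcongr
          exact Real.pow_div_factorial_le_exp _ (by positivity) _
      _ = (x * rexp (1 - x)) ^ M := by
          rw [mul_pow, ← Real.exp_nat_mul, mul_left_comm, ← Real.exp_add]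
          ring_nf
  have hlim := (((tendsto_exp_neg_mul_sum_pow_div_factorial hx hx1).const_mul (1 - x)).add
    hlast).const_mul (rexp x) |>.comp (tendsto_add_atTop_nat 1)
  rw [mul_one, add_zero] at hlim
  refine hlim.congr fun m => ?_
  have hexp : rexp (-(m * x)) = rexp x * rexp (-((m + 1 : ℕ) * x)) := by
    rw [← Real.exp_add]; push_cast; ring_nf
  rw [sum_mul_occSum_ge_one, hexp, Function.comp_apply]
  ring

lemma hasSum_coeff_X_pow_mul_expSeries (a x : ℝ) (j : ℕ) : HasSum (fun h =>
    PowerSeries.coeff h (PowerSeries.X ^ j * expSeries a) * x ^ h) (x ^ j * rexp (a * x)) := by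
  rw [← hasSum_nat_add_iff' j, sum_eq_zero, sub_zero]
  · refine ((hasSum_pow_div_factorial (a * x)).mul_left (x ^ j)).congr_fun fun h => ?_
    simp only [PowerSeries.coeff_X_pow_mul, coeff_expSeries, mul_pow, pow_add]
    ring
  · intro i hi
    rw [PowerSeries.coeff_X_pow_mul', if_neg (not_le.2 (mem_range.1 hi)), zero_mul]

lemma hasSum_occSum_le_one (x : ℝ) (t : ℕ) :
    HasSum (fun h => occSum (· ≤ ·) (fun _ => (1 : ℝ)) t h * x ^ h)
      (rexp (t * x) - ∑ j ∈ range t, occSum (· ≤ ·) (fun _ => (1 : ℝ)) j j *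
        (x ^ j * rexp ((t - (j + 1)) * x))) := by
  have hsum := (hasSum_pow_div_factorial (t * x)).sub (hasSum_sum (s := range t) fun j _ =>
    (hasSum_coeff_X_pow_mul_expSeries ((t : ℝ) - (j + 1)) x j).mul_left
      (occSum (· ≤ ·) (fun _ => (1 : ℝ)) j j))
  refine hsum.congr_fun fun h => ?_
  have hpass := congrArg (PowerSeries.coeff h)
    (expSeries_sum_eq_mk_occSum_le_add (fun _ => (1 : ℝ)) t)
  simp only [map_add, map_sum, PowerSeries.coeff_C_mul, PowerSeries.coeff_mk, sum_const,
    card_range, nsmul_eq_mul, mul_one, coeff_expSeries, Nat.cast_succ] at hpass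
  simp only [mul_pow, mul_div_right_comm, hpass, add_mul, sum_mul, mul_assoc, add_sub_cancel_right]

/-- Partial sums of the distribution of the first time at which `Poisson x` many balls per box
violate the constraint `(· ≤ ·)`. -/
noncomputable def ballotSum (x : ℝ) (m : ℕ) : ℝ :=
  ∑ j ∈ range m, occSum (· ≤ ·) (fun _ => (1 : ℝ)) j j * (x ^ j * rexp (-(x * (j + 1))))

lemma tendsto_ballotSum {x : ℝ} (hx : 0 ≤ x) (hx1 : x < 1) :
    Tendsto (ballotSum x) atTop (𝓝 1) := by
  have hmem (t : ℕ) : 1 - ballotSum x t ∈ Set.Icc 0 ((x * rexp (1 - x)) ^ t) := by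
    convert exp_neg_mul_tail_mem_Icc hx hx1.le
      (occSum_nonneg (· ≤ ·) (fun _ => zero_le_one) t) (fun h => ?_)
      (fun h hh => occSum_le_eq_zero _ hh) (hasSum_occSum_le_one x t) using 1
    · rw [mul_sub, ← Real.exp_add, neg_add_cancel, Real.exp_zero, ballotSum, Finset.mul_sum]
      refine congrArg (1 - ·) (sum_congr rfl fun j _ => ?_)
      rw [mul_left_comm (rexp _), mul_left_comm (rexp _), ← Real.exp_add]
      ring_nf
    · simpa using (le_norm_self _).trans (norm_occSum_le (· ≤ ·) (fun _ => (1 : ℝ)) t h)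
  simpa using (squeeze_zero (fun t => (hmem t).1) (fun t => (hmem t).2)
    (tendsto_mul_exp_one_sub_pow hx hx1)).const_sub 1

lemma ballotSum_eq_exp_neg_mul {κ c : ℝ} (h : κ = κ * rexp (-c) + c) (m : ℕ) :
    ballotSum κ m = rexp (-c) * ballotSum (κ * rexp (-c)) m := by
  rw [ballotSum, ballotSum, Finset.mul_sum]
  refine sum_congr rfl fun j _ => ?_
  have hexp : rexp (-(κ * (j + 1))) =
      rexp (-c) * (rexp (-c) ^ j * rexp (-(κ * rexp (-c) * (j + 1)))) := by
    rw [← Real.exp_nat_mul, ← Real.exp_add, ← Real.exp_add]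
    congr 1
    linear_combination -(j + 1) * h
  rw [hexp, mul_pow]
  ring

end BallotSums

section Truncation

lemma sum_range_eq_sum_range_sub_add {M : Type*} [AddCommMonoid M] (u : ℕ → M) {m n : ℕ}
    (hm : m ≤ n) :
    ∑ i ∈ range n, u i = ∑ i ∈ range (n - m), u i + ∑ i ∈ range m, u (n - 1 - i) := by
  obtain ⟨d, rfl⟩ := Nat.exists_eq_add_of_le' hm
  rw [Finset.sum_range_add, Nat.add_sub_cancel, ← Finset.sum_range_reflect (fun x => u (d + x))]
  refine congrArg _ (sum_congr rfl fun i hi => congrArg u ?_)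
  have := mem_range.1 hi
  omega

lemma occSum_le_eq_sub {R : Type*} [Field R] [CharZero R] (u : ℕ → R) {t h : ℕ} (hth : t ≤ h) :
    occSum (· ≤ ·) u t h = (∑ i ∈ range t, u i) ^ h / (h ! : R) -
      ∑ j ∈ range t, occSum (· ≤ ·) u j j *
        ((∑ i ∈ range t, u i - ∑ i ∈ range (j + 1), u i) ^ (h - j) / ((h - j)! : R)) := by
  have hcoeff := congrArg (PowerSeries.coeff h) (expSeries_sum_eq_mk_occSum_le_add u t)
  simp only [map_add, map_sum, PowerSeries.coeff_C_mul, PowerSeries.coeff_mk, coeff_expSeries,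
    PowerSeries.coeff_X_pow_mul'] at hcoeff
  rw [hcoeff, sum_congr rfl fun j hj => by rw [if_pos ((mem_range.1 hj).le.trans hth)]]
  exact (add_sub_cancel_right _ _).symm

/-- Approximation to `n ! * occSum (· ≤ ·) u n n` in which the constraint is only imposed on the
first `m` and the last `m` boxes. -/
noncomputable def truncOccSum {R : Type*} [Field R] (u : ℕ → R) (n m : ℕ) : R :=
  ∑ h ∈ range (m + 1), n ! * occSum (· ≥ ·) (fun i => u (n - 1 - i)) m h *
    ((∑ i ∈ range (n - m), u i) ^ (n - h) / ((n - h)! : R) -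
      ∑ j ∈ range m, occSum (· ≤ ·) u j j *
        ((∑ i ∈ range (n - m), u i - ∑ i ∈ range (j + 1), u i) ^ (n - h - j) /
          ((n - h - j)! : R)))

lemma truncOccSum_sub {R : Type*} [Field R] [CharZero R] (u : ℕ → R) {m n : ℕ} (hm : 2 * m ≤ n) :
    truncOccSum u n m - n ! * occSum (· ≤ ·) u n n = ∑ j ∈ Ico m (n - m), ∑ h ∈ range (m + 1),
      n ! * occSum (· ≥ ·) (fun i => u (n - 1 - i)) m h * (occSum (· ≤ ·) u j j *
        ((∑ i ∈ range (n - m), u i - ∑ i ∈ range (j + 1), u i) ^ (n - h - j) /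
          ((n - h - j)! : R))) := by
  rw [occSum_le_self_eq_sum u (show m ≤ n by omega), truncOccSum, Finset.mul_sum,
    ← sum_sub_distrib, sum_comm]
  refine sum_congr rfl fun h hh => ?_
  have := mem_range.1 hh
  rw [occSum_le_eq_sub u (show n - m ≤ n - h by omega), ← Finset.mul_sum,
    sum_Ico_eq_sub _ (show m ≤ n - m by omega)]
  ring

lemma norm_sub_truncOccSum_le {𝕜 : Type*} [RCLike 𝕜] (u : ℕ → 𝕜) {m n : ℕ} (hm : 2 * m ≤ n) :
    ‖n ! * occSum (· ≤ ·) u n n - truncOccSum u n m‖ ≤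
      ∑ j ∈ Ico m (n - m), (n.choose j : ℝ) * ((∑ t ∈ range j, ‖u t‖) ^ j *
        (∑ t ∈ range n, ‖u t‖ - ∑ t ∈ range j, ‖u t‖) ^ (n - j)) := by
  rw [norm_sub_rev, truncOccSum_sub u hm]
  refine (norm_sum_le _ _).trans (sum_le_sum fun j hj => ?_)
  have hj' := mem_Ico.1 hj
  set a := ∑ t ∈ range j, ‖u t‖
  set b := ∑ t ∈ Ico j (n - m), ‖u t‖ with hb
  set d := ∑ i ∈ range m, ‖u (n - 1 - i)‖
  have hgap : ‖∑ i ∈ range (n - m), u i - ∑ i ∈ range (j + 1), u i‖ ≤ b := by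
    rw [← sum_Ico_eq_sub _ (show j + 1 ≤ n - m by omega)]
    exact (norm_sum_le _ _).trans (sum_le_sum_of_subset_of_nonneg
      (Ico_subset_Ico_left j.le_succ) fun _ _ _ => norm_nonneg _)
  have htotal : ∑ t ∈ range n, ‖u t‖ - a = d + b := by
    rw [sum_range_eq_sum_range_sub_add (fun t => ‖u t‖) (show m ≤ n by omega), hb,
      sum_Ico_eq_sub _ hj'.2.le]
    ring
  have hterm (h : ℕ) : ‖n ! * occSum (· ≥ ·) (fun i => u (n - 1 - i)) m h * (occSum (· ≤ ·) u j j *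
      ((∑ i ∈ range (n - m), u i - ∑ i ∈ range (j + 1), u i) ^ (n - h - j) /
        ((n - h - j)! : 𝕜)))‖ ≤ n ! * (a ^ j / (j ! : ℝ)) *
          (d ^ h / (h ! : ℝ) * (b ^ (n - j - h) / ((n - j - h)! : ℝ))) := by
    rw [Nat.sub_right_comm, norm_mul, norm_mul, norm_mul, norm_div, norm_pow, RCLike.norm_natCast,
      RCLike.norm_natCast]
    calc _ ≤ n ! * (d ^ h / (h ! : ℝ)) * (a ^ j / (j ! : ℝ) *
          (b ^ (n - j - h) / ((n - j - h)! : ℝ))) := by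
          gcongr <;> exact norm_occSum_le _ _ _ _
      _ = _ := by ring
  calc _ ≤ ∑ h ∈ range (n - j + 1), n ! * (a ^ j / (j ! : ℝ)) *
        (d ^ h / (h ! : ℝ) * (b ^ (n - j - h) / ((n - j - h)! : ℝ))) := by
        refine (norm_sum_le_of_le _ fun h _ => hterm h).trans
          (sum_le_sum_of_subset_of_nonneg (range_subset_range.2 (by omega)) fun h _ _ => ?_)
        positivity
    _ = _ := by
        rw [← Finset.mul_sum, ← Finset.Nat.sum_antidiagonal_eq_sum_range_succ fun h i =>
          d ^ h / (h ! : ℝ) * (b ^ i / (i ! : ℝ)), sum_antidiagonal_pow_div_factorial, htotal,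
          Nat.cast_choose ℝ (show j ≤ n by omega)]
        ring

end Truncation

lemma choose_mul_pow_mul_pow_le_exp {n i : ℕ} {s v : ℝ} (hi : i ≤ n) (hs : 0 ≤ s) (hv : 0 ≤ v)
    (hv1 : v ≤ 1) :
    (n.choose i : ℝ) * ((v * s) ^ i * (1 - v) ^ (n - i)) ≤ rexp (n * (v * (s - 1))) := by
  have : 0 ≤ 1 - v := sub_nonneg.2 hv1
  calc _ ≤ ∑ m ∈ range (n + 1), (v * s) ^ m * (1 - v) ^ (n - m) * (n.choose m : ℝ) := by
        rw [mul_comm]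
        exact single_le_sum (f := fun m => (v * s) ^ m * (1 - v) ^ (n - m) * (n.choose m : ℝ))
          (fun m _ => by positivity) (mem_range_succ_iff.2 hi)
    _ = (v * s + (1 - v)) ^ n := (add_pow _ _ _).symm
    _ ≤ rexp (v * (s - 1)) ^ n := by
        gcongr
        linarith [Real.add_one_le_exp (v * (s - 1))]
    _ = _ := (Real.exp_nat_mul _ _).symm

lemma choose_mul_pow_mul_pow_le {n i : ℕ} {a v : ℝ} (hi : i ≤ n) (ha : 0 < a) (hv : 0 ≤ v)
    (hv1 : v ≤ 1) (h : 0 ≤ (a - 1) * (n * v - a * i)) :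
    (n.choose i : ℝ) * (v ^ i * (1 - v) ^ (n - i)) ≤ (a * rexp (1 - a)) ^ i := by
  calc _ = a ^ i * ((n.choose i : ℝ) * ((v * a⁻¹) ^ i * (1 - v) ^ (n - i))) := by
        rw [mul_pow, inv_pow]; field_simp
    _ ≤ a ^ i * rexp (n * (v * (a⁻¹ - 1))) := by
        gcongr
        exact choose_mul_pow_mul_pow_le_exp hi (by positivity) hv hv1
    _ ≤ a ^ i * rexp (i * (1 - a)) := by
        refine mul_le_mul_of_nonneg_left (Real.exp_le_exp.2 (sub_nonneg.1 ?_)) (by positivity)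
        have : i * (1 - a) - n * (v * (a⁻¹ - 1)) = a⁻¹ * ((a - 1) * (n * v - a * i)) := by
          field_simp; ring
        rw [this]
        positivity
    _ = _ := by rw [mul_pow, Real.exp_nat_mul]

lemma sum_Ico_pow_add_pow_sub_le {r : ℝ} (h0 : 0 ≤ r) (h1 : r < 1) (m n : ℕ) :
    ∑ j ∈ Ico m (n - m), (r ^ j + r ^ (n - j)) ≤ 2 / (1 - r) * r ^ m := by
  have hgeom : ∑ j ∈ range (n - m - m), r ^ j ≤ 1 / (1 - r) := by
    rw [one_div, ← tsum_geometric_of_lt_one h0 h1]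
    exact (summable_geometric_of_lt_one h0 h1).sum_le_tsum _ fun _ _ => by positivity
  have hlow : ∑ j ∈ Ico m (n - m), r ^ j = r ^ m * ∑ j ∈ range (n - m - m), r ^ j := by
    simp_rw [sum_Ico_eq_sum_range, Finset.mul_sum, pow_add]
  have hhigh : ∑ j ∈ Ico m (n - m), r ^ (n - j) ≤ r ^ m * ∑ j ∈ range (n - m - m), r ^ j := by
    rw [sum_Ico_eq_sum_range, ← sum_range_reflect, Finset.mul_sum]
    refine sum_le_sum fun j hj => ?_
    have := mem_range.1 hj
    rw [← pow_add]
    exact pow_le_pow_of_le_one h0 h1.le (by omega)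
  calc _ ≤ r ^ m * (1 / (1 - r)) + r ^ m * (1 / (1 - r)) := by
        rw [sum_add_distrib, hlow]
        have := mul_le_mul_of_nonneg_left hgeom (pow_nonneg h0 m)
        linarith
    _ = _ := by ring

section TruncatedExponential

/-- Distribution function of the exponential law of rate `ρ` conditioned on `[0, 1]`. -/
noncomputable def truncExpCDF (ρ x : ℝ) : ℝ := (1 - rexp (-(ρ * x))) / (1 - rexp (-ρ))

/-- Twice the value at `1 / 2` of `truncExpCDF ρ`, a concave function: by concavity its slope
from `0` is at least this on `[0, 1 / 2]`, and correspondingly near `1`. -/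
noncomputable def truncExpSlope (ρ : ℝ) : ℝ := 2 / (1 + rexp (-(ρ / 2)))

lemma truncExpSlope_mono {ρ₀ ρ : ℝ} (h : ρ₀ ≤ ρ) : truncExpSlope ρ₀ ≤ truncExpSlope ρ := by
  simp only [truncExpSlope]; gcongr

lemma truncExpSlope_mem_Ioo {ρ : ℝ} (hρ : 0 < ρ) : truncExpSlope ρ ∈ Set.Ioo 1 2 := by
  have hpos := Real.exp_pos (-(ρ / 2))
  have hlt := sub_pos.1 (one_sub_exp_neg_pos (half_pos hρ))
  simp only [truncExpSlope, Set.mem_Ioo, lt_div_iff₀ (show 0 < 1 + rexp (-(ρ / 2)) by linarith),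
    div_lt_iff₀ (show 0 < 1 + rexp (-(ρ / 2)) by linarith)]
  constructor <;> linarith

lemma truncExpCDF_half {ρ : ℝ} (hρ : 0 < ρ) : truncExpCDF ρ (1 / 2) = truncExpSlope ρ / 2 := by
  have hne : 1 - rexp (-ρ) ≠ 0 := (one_sub_exp_neg_pos hρ).ne'
  have hsq : rexp (-ρ) = rexp (-(ρ / 2)) ^ 2 := by rw [← Real.exp_nat_mul]; push_cast; ring_nf
  have : 0 < rexp (-(ρ / 2)) := Real.exp_pos _
  rw [truncExpCDF, truncExpSlope, mul_one_div, div_eq_iff hne, hsq]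
  field_simp
  ring

lemma concaveOn_truncExpCDF {ρ : ℝ} (hρ : 0 < ρ) : ConcaveOn ℝ Set.univ (truncExpCDF ρ) := by
  have hpos := one_sub_exp_neg_pos hρ
  have hconv : ConvexOn ℝ Set.univ fun x => rexp (-(ρ * x)) := by
    refine (convexOn_exp.comp_linearMap (LinearMap.mulLeft ℝ (-ρ))).congr fun x _ => ?_
    simp
  refine (((concaveOn_const (1 : ℝ) convex_univ).sub hconv).smul (inv_nonneg.2 hpos.le)).congr
    fun x _ => ?_
  simp [truncExpCDF, div_eq_inv_mul]

lemma truncExpCDF_zero (ρ : ℝ) : truncExpCDF ρ 0 = 0 := by simp [truncExpCDF]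

lemma truncExpCDF_one {ρ : ℝ} (hρ : 0 < ρ) : truncExpCDF ρ 1 = 1 := by
  rw [truncExpCDF, mul_one, div_self (one_sub_exp_neg_pos hρ).ne']

lemma slope_mul_le_truncExpCDF {ρ₀ ρ x : ℝ} (hρ₀ : 0 < ρ₀) (hρ : ρ₀ ≤ ρ) (hx : 0 ≤ x)
    (hx' : x ≤ 1 / 2) : truncExpSlope ρ₀ * x ≤ truncExpCDF ρ x := by
  have hρ' := hρ₀.trans_le hρ
  have h := (concaveOn_truncExpCDF hρ').2 (Set.mem_univ 0) (Set.mem_univ (1 / 2))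
    (show 0 ≤ 1 - 2 * x by linarith) (show 0 ≤ 2 * x by linarith) (by ring)
  rw [truncExpCDF_zero, truncExpCDF_half hρ'] at h
  simp only [smul_eq_mul] at h
  have hmono := mul_le_mul_of_nonneg_right (truncExpSlope_mono hρ) hx
  ring_nf at h hmono ⊢
  linarith

lemma one_sub_truncExpCDF_le {ρ₀ ρ x : ℝ} (hρ₀ : 0 < ρ₀) (hρ : ρ₀ ≤ ρ) (hx : 1 / 2 ≤ x)
    (hx' : x ≤ 1) : 1 - truncExpCDF ρ x ≤ (2 - truncExpSlope ρ₀) * (1 - x) := by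
  have hρ' := hρ₀.trans_le hρ
  have h := (concaveOn_truncExpCDF hρ').2 (Set.mem_univ (1 / 2)) (Set.mem_univ 1)
    (show 0 ≤ 2 * (1 - x) by linarith) (show 0 ≤ 2 * x - 1 by linarith) (by ring)
  rw [truncExpCDF_one hρ', truncExpCDF_half hρ'] at h
  simp only [smul_eq_mul] at h
  have hmono := mul_le_mul_of_nonneg_right (truncExpSlope_mono hρ) (sub_nonneg.2 hx')
  ring_nf at h hmono ⊢
  linarith

lemma truncExpCDF_mem_Icc {ρ x : ℝ} (hρ : 0 < ρ) (hx : x ∈ Set.Icc (0 : ℝ) 1) :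
    truncExpCDF ρ x ∈ Set.Icc 0 1 := by
  have hpos := one_sub_exp_neg_pos hρ
  have h0 : rexp (-(ρ * x)) ≤ 1 := Real.exp_le_one_iff.2 (neg_nonpos.2 (mul_nonneg hρ.le hx.1))
  have h1 : rexp (-ρ) ≤ rexp (-(ρ * x)) := Real.exp_le_exp.2 (by nlinarith [hx.2])
  exact ⟨div_nonneg (sub_nonneg.2 h0) hpos.le, (div_le_one hpos).2 (by linarith)⟩

lemma exists_choose_mul_truncExpCDF_pow_le {ρ₀ : ℝ} (hρ₀ : 0 < ρ₀) :
    ∃ r : ℝ, 0 ≤ r ∧ r < 1 ∧ ∀ (ρ : ℝ) (n j : ℕ), ρ₀ ≤ ρ → j ≤ n →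
      (n.choose j : ℝ) * (truncExpCDF ρ (j / n) ^ j * (1 - truncExpCDF ρ (j / n)) ^ (n - j)) ≤
        r ^ j + r ^ (n - j) := by
  obtain ⟨ha1, ha2⟩ := truncExpSlope_mem_Ioo hρ₀
  set a := truncExpSlope ρ₀
  have hb : 0 < 2 - a := by linarith
  refine ⟨max (a * rexp (1 - a)) ((2 - a) * rexp (1 - (2 - a))), le_max_of_le_left (by positivity),
    max_lt (mul_exp_one_sub_lt_one ha1.ne') (mul_exp_one_sub_lt_one (by linarith)),
    fun ρ n j hρ hj => ?_⟩
  have hr : 0 ≤ max (a * rexp (1 - a)) ((2 - a) * rexp (1 - (2 - a))) :=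
    le_max_of_le_left (by positivity)
  rcases n.eq_zero_or_pos with rfl | hn
  · obtain rfl : j = 0 := by omega
    norm_num
  have hjn : (j : ℝ) / n ≤ 1 := (div_le_one (by positivity)).2 (by exact_mod_cast hj)
  have hcancel : (n : ℝ) * (j / n) = j := by field_simp
  obtain ⟨hg0, hg1⟩ := truncExpCDF_mem_Icc (hρ₀.trans_le hρ) ⟨by positivity, hjn⟩
  rcases le_total ((j : ℝ) / n) (1 / 2) with hx | hx
  · have hslope := mul_le_mul_of_nonneg_left (slope_mul_le_truncExpCDF hρ₀ hρ (by positivity) hx)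
      n.cast_nonneg
    rw [mul_left_comm, hcancel] at hslope
    have hbinom := choose_mul_pow_mul_pow_le hj (by linarith) hg0 hg1
      (mul_nonneg (sub_nonneg.2 ha1.le) (sub_nonneg.2 hslope))
    exact (hbinom.trans (pow_le_pow_left₀ (by positivity) (le_max_left _ _) j)).trans
      (le_add_of_nonneg_right (pow_nonneg hr _))
  · have hslope := mul_le_mul_of_nonneg_left (one_sub_truncExpCDF_le hρ₀ hρ hx hjn) n.cast_nonneg
    rw [mul_left_comm, mul_one_sub (n : ℝ) ((j : ℝ) / n), hcancel, ← Nat.cast_sub hj] at hslope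
    have hbinom := choose_mul_pow_mul_pow_le (n.sub_le j) hb (sub_nonneg.2 hg1)
      (sub_le_self 1 hg0)
      (mul_nonneg_of_nonpos_of_nonpos (by linarith) (sub_nonpos.2 hslope))
    rw [Nat.choose_symm hj, Nat.sub_sub_self hj, sub_sub_cancel, mul_comm (_ ^ (n - j))] at hbinom
    exact (hbinom.trans (pow_le_pow_left₀ (by positivity) (le_max_right _ _) _)).trans
      (le_add_of_nonneg_left (pow_nonneg hr _))

end TruncatedExponential

section GeometricWeights

/-- The weights `e^{-w t / n}`, `t < n`, normalised to have sum one. -/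
noncomputable def geomWeight (n : ℕ) (w : ℂ) (t : ℕ) : ℂ :=
  Complex.exp (-(w / n)) ^ t / ∑ s ∈ range n, Complex.exp (-(w / n)) ^ s

variable {n : ℕ} {w : ℂ}

lemma norm_exp_neg_div_natCast (n : ℕ) (w : ℂ) : ‖Complex.exp (-(w / n))‖ = rexp (-(w.re / n)) := by
  rw [Complex.norm_exp, Complex.neg_re, Complex.div_natCast_re]

lemma exp_neg_div_natCast_lt_one (hn : 0 < n) (hw : 0 < w.re) : rexp (-(w.re / n)) < 1 := by
  rw [Real.exp_lt_one_iff, neg_lt_zero]; positivity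

lemma exp_neg_div_natCast_ne_one (hn : 0 < n) (hw : 0 < w.re) : Complex.exp (-(w / n)) ≠ 1 :=
  fun h => (exp_neg_div_natCast_lt_one hn hw).ne (by rw [← norm_exp_neg_div_natCast, h, norm_one])

lemma exp_neg_ne_one (hw : 0 < w.re) : Complex.exp (-w) ≠ 1 := by
  simpa using exp_neg_div_natCast_ne_one one_pos hw

lemma exp_neg_div_natCast_pow (hn : 0 < n) (w : ℂ) :
    Complex.exp (-(w / n)) ^ n = Complex.exp (-w) := by
  rw [← Complex.exp_nat_mul, mul_neg, mul_div_cancel₀ _ (by exact_mod_cast hn.ne')]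

lemma geom_sum_exp_neg_div_natCast (hn : 0 < n) (hw : 0 < w.re) :
    ∑ s ∈ range n, Complex.exp (-(w / n)) ^ s =
      (1 - Complex.exp (-w)) / (1 - Complex.exp (-(w / n))) := by
  rw [geom_sum_eq (exp_neg_div_natCast_ne_one hn hw), exp_neg_div_natCast_pow hn, ← neg_div_neg_eq,
    neg_sub, neg_sub]

lemma geom_sum_exp_neg_div_natCast_ne_zero (hn : 0 < n) (hw : 0 < w.re) :
    ∑ s ∈ range n, Complex.exp (-(w / n)) ^ s ≠ 0 := by
  rw [geom_sum_exp_neg_div_natCast hn hw]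
  exact div_ne_zero (sub_ne_zero.2 (exp_neg_ne_one hw).symm)
    (sub_ne_zero.2 (exp_neg_div_natCast_ne_one hn hw).symm)

lemma sum_geomWeight (hn : 0 < n) (hw : 0 < w.re) : ∑ t ∈ range n, geomWeight n w t = 1 := by
  simp only [geomWeight]
  rw [← sum_div, div_self (geom_sum_exp_neg_div_natCast_ne_zero hn hw)]

lemma sum_range_norm_geomWeight (hn : 0 < n) (hw : 0 < w.re) (j : ℕ) :
    ∑ t ∈ range j, ‖geomWeight n w t‖ = (1 - rexp (-(w.re * (j / n)))) /
      (1 - rexp (-(w.re / n))) / ‖∑ s ∈ range n, Complex.exp (-(w / n)) ^ s‖ := by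
  simp only [geomWeight, norm_div, norm_pow, norm_exp_neg_div_natCast]
  rw [← sum_div, geom_sum_eq (exp_neg_div_natCast_lt_one hn hw).ne, ← Real.exp_nat_mul,
    ← neg_div_neg_eq (_ - 1), neg_sub, neg_sub]
  ring_nf

lemma sum_range_norm_geomWeight_eq_mul_truncExpCDF (hn : 0 < n) (hw : 0 < w.re) (j : ℕ) :
    ∑ t ∈ range j, ‖geomWeight n w t‖ =
      (∑ t ∈ range n, ‖geomWeight n w t‖) * truncExpCDF w.re (j / n) := by
  have hn' : (n : ℝ) ≠ 0 := by positivity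
  have : 1 - rexp (-w.re) ≠ 0 := (one_sub_exp_neg_pos hw).ne'
  rw [sum_range_norm_geomWeight hn hw, sum_range_norm_geomWeight hn hw, truncExpCDF, div_self hn',
    mul_one]
  field_simp

lemma exists_norm_sub_truncOccSum_geomWeight_le {ρ₀ : ℝ} (hρ₀ : 0 < ρ₀) :
    ∃ K r : ℝ, 0 ≤ K ∧ 0 ≤ r ∧ r < 1 ∧ ∀ (n m : ℕ) (w : ℂ), 0 < n → ρ₀ ≤ w.re → 2 * m ≤ n →
      ‖n ! * occSum (· ≤ ·) (geomWeight n w) n n - truncOccSum (geomWeight n w) n m‖ ≤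
        (∑ t ∈ range n, ‖geomWeight n w t‖) ^ n * (K * r ^ m) := by
  obtain ⟨r, hr0, hr1, hbinom⟩ := exists_choose_mul_truncExpCDF_pow_le hρ₀
  refine ⟨2 / (1 - r), r, div_nonneg two_pos.le (sub_nonneg.2 hr1.le), hr0, hr1,
    fun n m w hn hw hm => ?_⟩
  refine (norm_sub_truncOccSum_le _ hm).trans (le_trans ?_ (mul_le_mul_of_nonneg_left
    (sum_Ico_pow_add_pow_sub_le hr0 hr1 m n) (by positivity)))
  rw [Finset.mul_sum]
  refine sum_le_sum fun j hj => ?_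
  have hjn : j ≤ n := by have := mem_Ico.1 hj; omega
  rw [sum_range_norm_geomWeight_eq_mul_truncExpCDF hn (hρ₀.trans_le hw) j, ← mul_one_sub, mul_pow,
    mul_pow, mul_mul_mul_comm, ← pow_add, Nat.add_sub_cancel' hjn, mul_left_comm]
  exact mul_le_mul_of_nonneg_left (hbinom w.re n j hw hjn) (by positivity)

end GeometricWeights

section ScaledLimits

variable {ι : Type*} {f : Filter ι} {a g : ι → ℂ} {t : ℂ} {N : ι → ℕ}

lemma tendsto_mul_sub_of_hasDerivAt {F : ℂ → ℂ} {x d : ℂ} (hF : HasDerivAt F d x)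
    (hg : Tendsto g f (𝓝 0)) (hag : Tendsto (fun i => a i * g i) f (𝓝 t)) :
    Tendsto (fun i => a i * (F (x + g i) - F x)) f (𝓝 (t * d)) := by
  simpa using hF.hasFDerivAt.hasFDerivWithinAt.lim (s := Set.univ) hg (by simp) hag

lemma tendsto_mul_exp_sub_one (hg : Tendsto g f (𝓝 0))
    (hag : Tendsto (fun i => a i * g i) f (𝓝 t)) :
    Tendsto (fun i => a i * (Complex.exp (g i) - 1)) f (𝓝 t) := by
  simpa using tendsto_mul_sub_of_hasDerivAt (Complex.hasDerivAt_exp 0) hg hag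

lemma tendsto_mul_log_one_add (hg : Tendsto g f (𝓝 0))
    (hag : Tendsto (fun i => a i * g i) f (𝓝 t)) :
    Tendsto (fun i => a i * Complex.log (1 + g i)) f (𝓝 t) := by
  simpa using tendsto_mul_sub_of_hasDerivAt
    (Complex.hasDerivAt_log (Complex.one_mem_slitPlane)) hg hag

lemma tendsto_zero_of_tendsto_mul (ha : Tendsto a f (Bornology.cobounded ℂ))
    (hag : Tendsto (fun i => a i * g i) f (𝓝 t)) : Tendsto g f (𝓝 0) := by
  have hinv := (tendsto_inv₀_cobounded.comp ha).mul hag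
  rw [zero_mul] at hinv
  refine hinv.congr' ?_
  filter_upwards [ha.eventually (Bornology.eventually_ne_cobounded 0)] with i hi
  exact inv_mul_cancel_left₀ hi _

lemma tendsto_one_add_pow_exp (hN : Tendsto N f atTop)
    (hg : Tendsto (fun i => (N i : ℂ) * g i) f (𝓝 t)) :
    Tendsto (fun i => (1 + g i) ^ N i) f (𝓝 (Complex.exp t)) := by
  have hg0 := tendsto_zero_of_tendsto_mul (tendsto_natCast_atTop_cobounded.comp hN) hg
  refine ((Complex.continuous_exp.tendsto t).comp (tendsto_mul_log_one_add hg0 hg)).congr' ?_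
  have hne : Tendsto (fun i => 1 + g i) f (𝓝 1) := by simpa using hg0.const_add 1
  filter_upwards [hne.eventually_ne one_ne_zero] with i hi
  rw [Function.comp_apply, Complex.exp_nat_mul, Complex.exp_log hi]

lemma tendsto_one_add_pow_sub_exp (hN : Tendsto N f atTop)
    (hg : Tendsto (fun i => (N i : ℂ) * g i) f (𝓝 t)) (h : ℕ) :
    Tendsto (fun i => (1 + g i) ^ (N i - h)) f (𝓝 (Complex.exp t)) := by
  have hg0 := tendsto_zero_of_tendsto_mul (tendsto_natCast_atTop_cobounded.comp hN) hg
  have hpow : Tendsto (fun i => (1 + g i) ^ h) f (𝓝 1) := by simpa using (hg0.const_add 1).pow h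
  have hdiv := (tendsto_one_add_pow_exp hN hg).div hpow one_ne_zero
  rw [div_one] at hdiv
  refine hdiv.congr' ?_
  filter_upwards [hpow.eventually_ne one_ne_zero, hN.eventually_ge_atTop h] with i hi hNi
  rw [Pi.div_apply, div_eq_iff hi, ← pow_add, Nat.sub_add_cancel hNi]

lemma tendsto_factorial_div_factorial_sub_div_pow (hN : Tendsto N f atTop) (h : ℕ) :
    Tendsto (fun i => ((N i)! : ℂ) / ((N i - h)! : ℂ) / (N i : ℂ) ^ h) f (𝓝 1) := by
  have hdesc : Tendsto (fun n : ℕ => (n.descFactorial h : ℝ) / (n : ℝ) ^ h) atTop (𝓝 1) := by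
    refine (Asymptotics.isEquivalent_iff_tendsto_one ?_).1 (isEquivalent_descFactorial h)
    filter_upwards [eventually_gt_atTop 0] with n hn
    positivity
  refine ((Complex.continuous_ofReal.tendsto 1).comp (hdesc.comp hN)).congr' ?_
  filter_upwards [hN.eventually_ge_atTop h] with i hi
  rw [Function.comp_apply, Function.comp_apply, Nat.descFactorial_eq_div hi,
    Nat.cast_div (Nat.factorial_dvd_factorial (Nat.sub_le _ _)) (by positivity)]
  push_cast
  rfl

lemma tendsto_factorial_mul_one_add_pow_div_factorial {α : ℂ} (hN : Tendsto N f atTop) {h : ℕ}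
    (ha : Tendsto (fun i => (N i : ℂ) ^ h * a i) f (𝓝 α))
    (hg : Tendsto (fun i => (N i : ℂ) * g i) f (𝓝 t)) :
    Tendsto (fun i => ((N i)! : ℂ) * a i * ((1 + g i) ^ (N i - h) / ((N i - h)! : ℂ))) f
      (𝓝 (α * Complex.exp t)) := by
  have hprod := ((tendsto_factorial_div_factorial_sub_div_pow hN h).mul ha).mul
    (tendsto_one_add_pow_sub_exp hN hg h)
  rw [one_mul] at hprod
  refine hprod.congr' ?_
  filter_upwards [hN.eventually_gt_atTop 0] with i hi
  have hpow : (N i : ℂ) ^ h ≠ 0 := pow_ne_zero h (by exact_mod_cast hi.ne')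
  field_simp

lemma tendsto_pow_mul_occSum (r : ℕ → ℕ → Prop) [DecidableRel r] {u : ι → ℕ → ℂ} {z : ℂ} (s : ℕ)
    (hu : ∀ j, Tendsto (fun i => (N i : ℂ) * u i j) f (𝓝 z)) (h : ℕ) :
    Tendsto (fun i => (N i : ℂ) ^ h * occSum r (u i) s h) f
      (𝓝 (z ^ h * occSum r (fun _ => (1 : ℂ)) s h)) := by
  simp only [← occSum_const_mul, mul_one]
  exact tendsto_occSum r (fun j _ => hu j) h

lemma tendsto_of_eventually_dist_le {κ α : Type*} [PseudoMetricSpace α] {l : Filter κ} [l.NeBot]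
    {F : ι → α} {G : κ → ι → α} {b : κ → α} {L : α} {ε : κ → ℝ}
    (hFG : ∀ m, ∀ᶠ i in f, dist (F i) (G m i) ≤ ε m) (hε : Tendsto ε l (𝓝 0))
    (hG : ∀ m, Tendsto (G m) f (𝓝 (b m))) (hb : Tendsto b l (𝓝 L)) : Tendsto F f (𝓝 L) := by
  refine Metric.tendsto_nhds.2 fun δ hδ => ?_
  obtain ⟨m, hεm, hbm⟩ := ((hε.eventually (gt_mem_nhds (show 0 < δ / 3 by positivity))).and
    (Metric.tendsto_nhds.1 hb (δ / 3) (by positivity))).exists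
  filter_upwards [hFG m, Metric.tendsto_nhds.1 (hG m) (δ / 3) (by positivity)] with i hFi hGi
  linarith [dist_triangle4 (F i) (G m i) (b m) L]

end ScaledLimits

section GeometricWeightLimits

variable {ι : Type*} {f : Filter ι} {N : ι → ℕ} {w : ι → ℂ} {c : ℝ}

/-- The limit `c / (1 - e^{-c})` of `n` times a weight at the left end of `geomWeight n w`,
as `w → c`; this is the paper's `κ`. -/
noncomputable def headRate (c : ℝ) : ℝ := c / (1 - rexp (-c))

/-- The limit of `n` times a weight at the right end of `geomWeight n w`, as `w → c`. -/
noncomputable def tailRate (c : ℝ) : ℝ := headRate c * rexp (-c)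

lemma tailRate_nonneg (hc : 0 < c) : 0 ≤ tailRate c :=
  mul_nonneg (div_nonneg hc.le (one_sub_exp_neg_pos hc).le) (Real.exp_pos _).le

lemma tailRate_lt_one (hc : 0 < c) : tailRate c < 1 := by
  rw [tailRate, headRate, div_mul_eq_mul_div, div_lt_one (one_sub_exp_neg_pos hc)]
  have hlt := mul_lt_mul_of_pos_right (Real.add_one_lt_exp hc.ne') (Real.exp_pos (-c))
  rw [← Real.exp_add, add_neg_cancel, Real.exp_zero] at hlt
  linarith

lemma headRate_eq_tailRate_add (hc : 0 < c) : headRate c = headRate c * rexp (-c) + c := by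
  rw [headRate]
  field_simp [(one_sub_exp_neg_pos hc).ne']
  ring

lemma eventually_half_le_re (hc : 0 < c) (hw : Tendsto w f (𝓝 (c : ℂ))) :
    ∀ᶠ i in f, c / 2 ≤ (w i).re :=
  ((Complex.continuous_re.tendsto _).comp hw).eventually (eventually_ge_nhds (half_lt_self hc))

lemma tendsto_natCast_mul_neg_div (hN : Tendsto N f atTop) {z : ℂ} (hw : Tendsto w f (𝓝 z)) :
    Tendsto (fun i => (N i : ℂ) * -(w i / N i)) f (𝓝 (-z)) := by
  refine hw.neg.congr' ?_
  filter_upwards [hN.eventually_gt_atTop 0] with i hi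
  rw [mul_neg, mul_div_cancel₀ _ (by exact_mod_cast hi.ne')]

lemma tendsto_neg_div_natCast (hN : Tendsto N f atTop) {z : ℂ} (hw : Tendsto w f (𝓝 z)) :
    Tendsto (fun i => -(w i / N i)) f (𝓝 0) :=
  tendsto_zero_of_tendsto_mul (tendsto_natCast_atTop_cobounded.comp hN)
    (tendsto_natCast_mul_neg_div hN hw)

lemma tendsto_natCast_mul_exp_neg_div_sub_one (hN : Tendsto N f atTop) {z : ℂ}
    (hw : Tendsto w f (𝓝 z)) :
    Tendsto (fun i => (N i : ℂ) * (Complex.exp (-(w i / N i)) - 1)) f (𝓝 (-z)) :=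
  tendsto_mul_exp_sub_one (tendsto_neg_div_natCast hN hw) (tendsto_natCast_mul_neg_div hN hw)

lemma tendsto_exp_neg_div_pow_sub (hN : Tendsto N f atTop) {z : ℂ} (hw : Tendsto w f (𝓝 z))
    (t : ℕ) :
    Tendsto (fun i => Complex.exp (-(w i / N i)) ^ (N i - t)) f (𝓝 (Complex.exp (-z))) := by
  simpa using tendsto_one_add_pow_sub_exp hN (tendsto_natCast_mul_exp_neg_div_sub_one hN hw) t

lemma tendsto_exp_neg_div_pow (hN : Tendsto N f atTop) {z : ℂ} (hw : Tendsto w f (𝓝 z)) (t : ℕ) :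
    Tendsto (fun i => Complex.exp (-(w i / N i)) ^ t) f (𝓝 1) := by
  have hsub := tendsto_zero_of_tendsto_mul (tendsto_natCast_atTop_cobounded.comp hN)
    (tendsto_natCast_mul_exp_neg_div_sub_one hN hw)
  simpa using (hsub.const_add 1).pow t

lemma tendsto_natCast_div_geom_sum (hN : Tendsto N f atTop) (hc : 0 < c)
    (hw : Tendsto w f (𝓝 (c : ℂ))) :
    Tendsto (fun i => (N i : ℂ) / ∑ s ∈ range (N i), Complex.exp (-(w i / N i)) ^ s) f
      (𝓝 (headRate c : ℂ)) := by
  have hne : Complex.exp (-c) - 1 ≠ 0 := sub_ne_zero.2 (exp_neg_ne_one (by simpa using hc))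
  have hdiv := (tendsto_natCast_mul_exp_neg_div_sub_one hN hw).div
    ((tendsto_exp_neg_div_pow_sub hN hw 0).sub_const 1) hne
  convert hdiv.congr' ?_ using 2
  · rw [headRate, ← neg_div_neg_eq (-(c : ℂ)), neg_neg, neg_sub]
    push_cast
    rfl
  · filter_upwards [hN.eventually_gt_atTop 0, eventually_half_le_re hc hw] with i hi hre
    rw [Pi.div_apply, Nat.sub_zero,
      geom_sum_eq (exp_neg_div_natCast_ne_one hi ((half_pos hc).trans_le hre)), div_div_eq_mul_div]

lemma tendsto_natCast_mul_geomWeight (hN : Tendsto N f atTop) (hc : 0 < c)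
    (hw : Tendsto w f (𝓝 (c : ℂ))) (t : ℕ) :
    Tendsto (fun i => (N i : ℂ) * geomWeight (N i) (w i) t) f (𝓝 (headRate c : ℂ)) := by
  have hmul := (tendsto_natCast_div_geom_sum hN hc hw).mul (tendsto_exp_neg_div_pow hN hw t)
  rw [mul_one] at hmul
  exact hmul.congr fun i => by rw [geomWeight]; ring

lemma tendsto_natCast_mul_geomWeight_rev (hN : Tendsto N f atTop) (hc : 0 < c)
    (hw : Tendsto w f (𝓝 (c : ℂ))) (t : ℕ) :
    Tendsto (fun i => (N i : ℂ) * geomWeight (N i) (w i) (N i - 1 - t)) f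
      (𝓝 (tailRate c : ℂ)) := by
  have hmul := (tendsto_natCast_div_geom_sum hN hc hw).mul
    (tendsto_exp_neg_div_pow_sub hN hw (1 + t))
  rw [tailRate]
  push_cast
  exact hmul.congr fun i => by rw [geomWeight, Nat.sub_sub]; ring

lemma tendsto_mul_neg_sum_range {u : ι → ℕ → ℂ} {z : ℂ}
    (hu : ∀ j, Tendsto (fun i => (N i : ℂ) * u i j) f (𝓝 z)) (m : ℕ) :
    Tendsto (fun i => (N i : ℂ) * -∑ j ∈ range m, u i j) f (𝓝 (-(m * z))) := by
  simpa [Finset.mul_sum] using (tendsto_finsetSum (range m) fun j _ => hu j).neg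

lemma ofReal_occSum_one (r : ℕ → ℕ → Prop) [DecidableRel r] (t h : ℕ) :
    ((occSum r (fun _ => (1 : ℝ)) t h : ℝ) : ℂ) = occSum r (fun _ => (1 : ℂ)) t h := by
  simpa using map_occSum r Complex.ofRealHom (fun _ => 1) t h

lemma tendsto_truncOccSum_geomWeight (hN : Tendsto N f atTop) (hc : 0 < c)
    (hw : Tendsto w f (𝓝 (c : ℂ))) (m : ℕ) :
    Tendsto (fun i => truncOccSum (geomWeight (N i) (w i)) (N i) m) f
      (𝓝 ((rexp (-(m * tailRate c)) * ∑ h ∈ range (m + 1),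
        tailRate c ^ h * occSum (· ≥ ·) (fun _ => (1 : ℝ)) m h) *
          (1 - ballotSum (headRate c) m) : ℝ)) := by
  have hhead := tendsto_natCast_mul_geomWeight hN hc hw
  have htail := tendsto_natCast_mul_geomWeight_rev hN hc hw
  have hV := tendsto_mul_neg_sum_range htail m
  have hmain (h : ℕ) := tendsto_factorial_mul_one_add_pow_div_factorial hN
    (tendsto_pow_mul_occSum (· ≥ ·) m htail h) hV
  have hcorr (h j : ℕ) := tendsto_factorial_mul_one_add_pow_div_factorial hN (h := h + j)
    (((tendsto_pow_mul_occSum (· ≥ ·) m htail h).mul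
      (tendsto_pow_mul_occSum (· ≤ ·) j hhead j)).congr fun i => by rw [mul_mul_mul_comm, pow_add])
    ((hV.add (tendsto_mul_neg_sum_range hhead (j + 1))).congr fun i => (mul_add _ _ _).symm)
  convert (tendsto_finsetSum (range (m + 1)) fun h _ =>
    (hmain h).sub (tendsto_finsetSum (range m) fun j _ => hcorr h j)).congr' ?_ using 2
  · rw [ballotSum, Finset.mul_sum, Finset.sum_mul]
    push_cast [ofReal_occSum_one]
    refine sum_congr rfl fun h _ => ?_
    rw [mul_sub, mul_one, Finset.mul_sum]
    congr 1
    · ring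
    · refine sum_congr rfl fun j _ => ?_
      rw [Complex.exp_add, mul_comm (headRate c : ℂ) (j + 1)]
      ring
  · filter_upwards [hN.eventually_gt_atTop m, eventually_half_le_re hc hw] with i hi hre
    have hsum : ∑ s ∈ range (N i - m), geomWeight (N i) (w i) s =
        1 + -∑ s ∈ range m, geomWeight (N i) (w i) (N i - 1 - s) := by
      rw [← sum_geomWeight (m.zero_le.trans_lt hi) ((half_pos hc).trans_le hre),
        sum_range_eq_sum_range_sub_add _ hi.le, add_neg_cancel_right]
    rw [truncOccSum, hsum]
    refine sum_congr rfl fun h _ => ?_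
    rw [mul_sub, Finset.mul_sum]
    congr 1
    refine sum_congr rfl fun j _ => ?_
    rw [Nat.sub_sub, mul_assoc, mul_assoc, mul_assoc, ← add_assoc, ← sub_eq_add_neg]

/-- The limit of the normalised occupancy sum `n! * occSum (· ≤ ·) (geomWeight n w) n n` as
`w → c`: the probability that the ballot constraints hold. -/
noncomputable def ballotProb (c : ℝ) : ℝ :=
  (1 - tailRate c) * rexp (tailRate c) * (1 - rexp (-c))

lemma tendsto_mul_one_sub_ballotSum (hc : 0 < c) :
    Tendsto (fun m : ℕ => (rexp (-(m * tailRate c)) * ∑ h ∈ range (m + 1),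
      tailRate c ^ h * occSum (· ≥ ·) (fun _ => (1 : ℝ)) m h) * (1 - ballotSum (headRate c) m))
      atTop (𝓝 (ballotProb c)) := by
  have h0 := tailRate_nonneg hc
  have h1 := tailRate_lt_one hc
  have hprod := (tendsto_exp_neg_mul_sum_occSum_ge_one h0 h1).mul
    (((tendsto_ballotSum h0 h1).const_mul (rexp (-c))).const_sub 1)
  convert hprod using 2
  · rw [ballotSum_eq_exp_neg_mul (headRate_eq_tailRate_add hc), tailRate]
  · rw [ballotProb]
    ring

section NormBound

variable {n : ℕ} {w : ℂ}

lemma sum_norm_geomWeight_le (hn : 0 < n) (hw : 0 < w.re) :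
    ∑ t ∈ range n, ‖geomWeight n w t‖ ≤
      ‖1 - Complex.exp (-(w / n))‖ / (1 - rexp (-(w.re / n))) := by
  have hn' : (n : ℝ) ≠ 0 := by positivity
  have hq := sub_pos.2 (exp_neg_div_natCast_lt_one hn hw)
  have hpos : 0 < ‖1 - Complex.exp (-w)‖ := norm_pos_iff.2 (sub_ne_zero.2 (exp_neg_ne_one hw).symm)
  have hle := norm_sub_norm_le 1 (Complex.exp (-w))
  rw [norm_one, Complex.norm_exp, Complex.neg_re] at hle
  rw [sum_range_norm_geomWeight hn hw, div_self hn', mul_one, geom_sum_exp_neg_div_natCast hn hw,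
    norm_div, div_div_eq_mul_div, div_le_iff₀ hpos, div_mul_eq_mul_div, div_mul_eq_mul_div,
    div_le_div_iff_of_pos_right hq, mul_comm ‖_‖ ‖_‖]
  gcongr

lemma norm_one_sub_exp_neg_sq_le (z : ℂ) :
    ‖1 - Complex.exp (-z)‖ ^ 2 ≤ (1 - rexp (-z.re)) ^ 2 + rexp (-z.re) * z.im ^ 2 := by
  have heq : ‖1 - Complex.exp (-z)‖ ^ 2 =
      (1 - rexp (-z.re)) ^ 2 + rexp (-z.re) * (2 * (1 - cos z.im)) := by
    rw [Complex.sq_norm, Complex.normSq_apply, Complex.sub_re, Complex.sub_im, Complex.exp_re,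
      Complex.exp_im, Complex.neg_re, Complex.neg_im, Real.cos_neg, Real.sin_neg, Complex.one_re,
      Complex.one_im]
    linear_combination rexp (-z.re) ^ 2 * Real.sin_sq_add_cos_sq z.im
  rw [heq]
  gcongr
  linarith [Real.one_sub_sq_div_two_le_cos (x := z.im)]

lemma mul_exp_neg_le_one_sub_exp_neg (x : ℝ) : x * rexp (-x) ≤ 1 - rexp (-x) := by
  have hle := mul_le_mul_of_nonneg_right (Real.add_one_le_exp x) (Real.exp_pos (-x)).le
  rw [← Real.exp_add, add_neg_cancel, Real.exp_zero] at hle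
  linarith

lemma sum_norm_geomWeight_sq_le (hn : 0 < n) (hw : 0 < w.re) :
    (∑ t ∈ range n, ‖geomWeight n w t‖) ^ 2 ≤ 1 + w.im ^ 2 * (rexp w.re / w.re ^ 2) := by
  have hq := sub_pos.2 (exp_neg_div_natCast_lt_one hn hw)
  set ρ := w.re
  have hsq := norm_one_sub_exp_neg_sq_le (w / n)
  rw [Complex.div_natCast_re, Complex.div_natCast_im] at hsq
  have him : rexp (-(ρ / n)) * (w.im / n) ^ 2 ≤
      (1 - rexp (-(ρ / n))) ^ 2 * (w.im ^ 2 * (rexp ρ / ρ ^ 2)) := by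
    have hexp : 1 ≤ rexp (-(ρ / n)) * rexp ρ := by
      rw [← Real.exp_add, Real.one_le_exp_iff]
      linarith [div_le_self hw.le (Nat.one_le_cast.2 hn : (1 : ℝ) ≤ n)]
    calc rexp (-(ρ / n)) * (w.im / n) ^ 2
        ≤ rexp (-(ρ / n)) * (w.im / n) ^ 2 * (rexp (-(ρ / n)) * rexp ρ) :=
          le_mul_of_one_le_right (by positivity) hexp
      _ = (ρ / n * rexp (-(ρ / n))) ^ 2 * (w.im ^ 2 * (rexp ρ / ρ ^ 2)) := by field_simp
      _ ≤ _ := by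
          gcongr
          exact mul_exp_neg_le_one_sub_exp_neg _
  calc (∑ t ∈ range n, ‖geomWeight n w t‖) ^ 2
      ≤ (‖1 - Complex.exp (-(w / n))‖ / (1 - rexp (-(ρ / n)))) ^ 2 := by
        gcongr
        exact sum_norm_geomWeight_le hn hw
    _ = ‖1 - Complex.exp (-(w / n))‖ ^ 2 / (1 - rexp (-(ρ / n))) ^ 2 := div_pow _ _ _
    _ ≤ _ := by
        rw [div_le_iff₀ (by positivity)]
        linarith

lemma sum_norm_geomWeight_pow_le (hn : 0 < n) (hw : 0 < w.re) :
    (∑ t ∈ range n, ‖geomWeight n w t‖) ^ n ≤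
      1 + rexp (n * w.im ^ 2 * (rexp w.re / w.re ^ 2)) := by
  set A := ∑ t ∈ range n, ‖geomWeight n w t‖
  have hsq : (A ^ n) ^ 2 ≤ rexp (n * w.im ^ 2 * (rexp w.re / w.re ^ 2)) := by
    rw [← pow_mul, mul_comm n 2, pow_mul, mul_assoc, Real.exp_nat_mul]
    refine pow_le_pow_left₀ (sq_nonneg _) ((sum_norm_geomWeight_sq_le hn hw).trans ?_) n
    linarith [Real.add_one_le_exp (w.im ^ 2 * (rexp w.re / w.re ^ 2))]
  nlinarith [sq_nonneg (A ^ n - 1)]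

end NormBound

lemma eventually_sum_norm_geomWeight_pow_le (hN : Tendsto N f atTop) (hc : 0 < c)
    (hw : Tendsto w f (𝓝 (c : ℂ))) {M : ℝ} (hM : ∀ᶠ i in f, (N i : ℝ) * (w i).im ^ 2 ≤ M) :
    ∃ K : ℝ, ∀ᶠ i in f, (∑ t ∈ range (N i), ‖geomWeight (N i) (w i) t‖) ^ N i ≤ K := by
  have hre : Tendsto (fun i => (w i).re) f (𝓝 c) := (Complex.continuous_re.tendsto _).comp hw
  have hlim : Tendsto (fun i => rexp (w i).re / (w i).re ^ 2) f (𝓝 (rexp c / c ^ 2)) :=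
    ((Real.continuous_exp.tendsto c).comp hre).div (hre.pow 2) (by positivity)
  refine ⟨1 + rexp (|M| * (rexp c / c ^ 2 + 1)), ?_⟩
  filter_upwards [hM, hN.eventually_gt_atTop 0, eventually_half_le_re hc hw,
    hlim.eventually (eventually_le_nhds (lt_add_one _))] with i hMi hi hrei hlei
  refine (sum_norm_geomWeight_pow_le hi ((half_pos hc).trans_le hrei)).trans ?_
  gcongr
  exact hMi.trans (le_abs_self M)

lemma tendsto_factorial_mul_occSum_geomWeight (hN : Tendsto N f atTop) (hc : 0 < c)
    (hw : Tendsto w f (𝓝 (c : ℂ))) {M : ℝ} (hM : ∀ᶠ i in f, (N i : ℝ) * (w i).im ^ 2 ≤ M) :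
    Tendsto (fun i => ((N i)! : ℂ) * occSum (· ≤ ·) (geomWeight (N i) (w i)) (N i) (N i)) f
      (𝓝 (ballotProb c : ℂ)) := by
  obtain ⟨K, r, hK, hr0, hr1, htrunc⟩ := exists_norm_sub_truncOccSum_geomWeight_le (half_pos hc)
  obtain ⟨K', hK'⟩ := eventually_sum_norm_geomWeight_pow_le hN hc hw hM
  have hgeom : Tendsto (fun m : ℕ => K' * (K * r ^ m)) atTop (𝓝 0) := by
    simpa using ((tendsto_pow_atTop_nhds_zero_of_lt_one hr0 hr1).const_mul K).const_mul K'
  refine tendsto_of_eventually_dist_le (fun m => ?_) hgeom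
    (tendsto_truncOccSum_geomWeight hN hc hw)
    ((Complex.continuous_ofReal.tendsto _).comp (tendsto_mul_one_sub_ballotSum hc))
  filter_upwards [hK', eventually_half_le_re hc hw, hN.eventually_gt_atTop 0,
    hN.eventually_ge_atTop (2 * m)] with i hKi hre hi him
  rw [dist_eq_norm]
  exact (htrunc _ m _ hi hre him).trans (by gcongr)

end GeometricWeightLimits

section CauchyFormula

lemma connGenFun_succ_eq_sinh_pow_mul {n : ℕ} {w x : ℂ} (hn : 0 < n) (hw : 0 < w.re)
    (hx : 1 + x = Complex.exp (w / n)) :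
    connGenFun (n + 1) x = Complex.exp (w / 2) * (2 * Complex.sinh (w / 2)) ^ n *
      (n ! * occSum (· ≤ ·) (geomWeight n w) n n) := by
  have hn0 : (n : ℂ) ≠ 0 := Nat.cast_ne_zero.2 hn.ne'
  have hinv : (1 + x)⁻¹ = Complex.exp (-(w / n)) := by rw [hx, Complex.exp_neg]
  have hweight : (fun t => (1 - (1 + x)⁻¹) * (1 + x)⁻¹ ^ t) =
      fun t => (1 - Complex.exp (-w)) * geomWeight n w t := by
    funext t
    have h1 := sub_ne_zero.2 (exp_neg_ne_one hw).symm
    have h2 := sub_ne_zero.2 (exp_neg_div_natCast_ne_one hn hw).symm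
    rw [geomWeight, geom_sum_exp_neg_div_natCast hn hw, hinv]
    field_simp
  have hprefactor : (1 + x) ^ (n + 1).choose 2 * (1 - Complex.exp (-w)) ^ n =
      Complex.exp (w / 2) * (2 * Complex.sinh (w / 2)) ^ n := by
    have hsinh : 2 * Complex.sinh (w / 2) = Complex.exp (w / 2) * (1 - Complex.exp (-w)) := by
      rw [Complex.two_sinh, mul_sub, mul_one, ← Complex.exp_add]
      ring_nf
    rw [hsinh, mul_pow, ← mul_assoc, hx, ← Complex.exp_nat_mul, ← Complex.exp_nat_mul,
      ← Complex.exp_add, Nat.cast_choose_two]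
    congr 2
    push_cast
    field_simp
    ring
  rw [connGenFun_succ_eq_occSum n (hx ▸ Complex.exp_ne_zero _), hweight, occSum_const_mul,
    ← hprefactor]
  ring

lemma integral_exp_int_mul (m : ℤ) :
    ∫ θ in (-π)..π, Complex.exp (m * Complex.I * θ) = if m = 0 then (2 * π : ℂ) else 0 := by
  split_ifs with hm
  · simp [hm, two_mul]
  · have hm0 : (m : ℂ) * Complex.I ≠ 0 := mul_ne_zero (Int.cast_ne_zero.2 hm) Complex.I_ne_zero
    rw [integral_exp_mul_complex hm0, div_eq_zero_iff, sub_eq_zero,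
      Complex.exp_eq_exp_iff_exists_int]
    exact Or.inl ⟨m, by push_cast; ring⟩

lemma continuous_connGenFun (k : ℕ) : Continuous (connGenFun k : ℂ → ℂ) := by
  unfold connGenFun graphGenFun
  fun_prop

lemma integral_mul_exp_pow_mul_exp_neg (x : ℂ) (j m : ℕ) :
    ∫ θ in (-π)..π, (x * Complex.exp (θ * Complex.I)) ^ j * Complex.exp (-(θ * m * Complex.I)) =
      if j = m then 2 * π * x ^ m else 0 := by
  have hpow (θ : ℝ) : (x * Complex.exp (θ * Complex.I)) ^ j *
      Complex.exp (-(θ * m * Complex.I)) =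
      x ^ j * Complex.exp (((j - m : ℤ) : ℂ) * Complex.I * θ) := by
    rw [mul_pow, ← Complex.exp_nat_mul, mul_assoc, ← Complex.exp_add]
    push_cast
    ring_nf
  simp_rw [hpow, intervalIntegral.integral_const_mul, integral_exp_int_mul, sub_eq_zero,
    Nat.cast_inj]
  split_ifs with h
  · rw [h, mul_comm]
  · rw [mul_zero]

lemma integral_connGenFun_mul_exp_neg (k l : ℕ) (x : ℂ) :
    ∫ θ in (-π)..π, connGenFun k (x * Complex.exp (θ * Complex.I)) *
      Complex.exp (-(θ * (k - 1 + l : ℕ) * Complex.I)) =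
      2 * π * (connGraphCount k l * x ^ (k - 1 + l)) := by
  simp only [connGenFun, graphGenFun, Finset.sum_mul]
  rw [intervalIntegral.integral_finsetSum fun G _ =>
    Continuous.intervalIntegrable (by fun_prop) _ _]
  simp_rw [integral_mul_exp_pow_mul_exp_neg]
  have hcard : connGraphCount k l = #{G ∈ (Set.toFinite {G : SimpleGraph (Fin k) |
      G.Connected}).toFinset | G.edgeSet.ncard = k - 1 + l} := by
    rw [connGraphCount, ← Set.ncard_coe_finset]
    congr 1
    ext G
    simp
  rw [← sum_filter, sum_const, nsmul_eq_mul, hcard]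
  ring

end CauchyFormula

section SecondOrderLimits

variable {ι : Type*} {f : Filter ι} {a g : ι → ℂ} {t : ℂ}

lemma tendsto_exp_of_tendsto_zero (hg : Tendsto g f (𝓝 0)) :
    Tendsto (fun i => Complex.exp (g i)) f (𝓝 1) :=
  Complex.exp_zero ▸ (Complex.continuous_exp.tendsto 0).comp hg

lemma tendsto_mul_comp_of_isBigO_pow {F : ℂ → ℂ} {m : ℕ} (hF : F =O[𝓝 0] fun z => z ^ m)
    (hg : Tendsto g f (𝓝 0)) (hag : Tendsto (fun i => a i * g i ^ m) f (𝓝 0)) :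
    Tendsto (fun i => a i * F (g i)) f (𝓝 0) :=
  ((Asymptotics.isBigO_refl a f).mul (hF.comp_tendsto hg)).trans_tendsto hag

lemma tendsto_mul_exp_sub_one_sub (hg : Tendsto g f (𝓝 0))
    (hag : Tendsto (fun i => a i * g i ^ 2) f (𝓝 t)) :
    Tendsto (fun i => a i * (Complex.exp (g i) - 1 - g i)) f (𝓝 (t / 2)) := by
  have hcubic : Tendsto (fun i => a i * g i ^ 3) f (𝓝 0) := by
    simpa [pow_succ, mul_assoc] using hag.mul hg
  have hrem := tendsto_mul_comp_of_isBigO_pow (Complex.exp_sub_sum_range_isBigO_pow 3) hg hcubic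
  have hsum := hrem.add (hag.div_const 2)
  rw [zero_add] at hsum
  refine hsum.congr fun i => ?_
  simp only [sum_range_succ, range_zero, sum_empty, Nat.factorial]
  push_cast
  ring

lemma tendsto_mul_log_one_add_sub (hg : Tendsto g f (𝓝 0))
    (hag : Tendsto (fun i => a i * g i ^ 2) f (𝓝 0)) :
    Tendsto (fun i => a i * (Complex.log (1 + g i) - g i)) f (𝓝 0) := by
  simpa [Complex.logTaylor_succ, Complex.logTaylor_zero] using
    tendsto_mul_comp_of_isBigO_pow (Complex.log_sub_logTaylor_isBigO 1) hg hag

lemma tendsto_mul_cosh_sub_one (hg : Tendsto g f (𝓝 0))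
    (hag : Tendsto (fun i => a i * g i ^ 2) f (𝓝 t)) :
    Tendsto (fun i => a i * (Complex.cosh (g i) - 1)) f (𝓝 (t / 2)) := by
  have hneg : Tendsto (fun i => a i * (-g i) ^ 2) f (𝓝 t) := by simpa using hag
  have hsum := (tendsto_mul_exp_sub_one_sub hg hag).add
    (tendsto_mul_exp_sub_one_sub (by simpa using hg.neg) hneg)
  rw [add_halves] at hsum
  refine (hsum.div_const 2).congr fun i => ?_
  rw [Complex.cosh]
  ring

lemma tendsto_mul_sinh_sub (hg : Tendsto g f (𝓝 0))
    (hag : Tendsto (fun i => a i * g i ^ 2) f (𝓝 t)) :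
    Tendsto (fun i => a i * (Complex.sinh (g i) - g i)) f (𝓝 0) := by
  have hneg : Tendsto (fun i => a i * (-g i) ^ 2) f (𝓝 t) := by simpa using hag
  have hsum := (tendsto_mul_exp_sub_one_sub hg hag).sub
    (tendsto_mul_exp_sub_one_sub (by simpa using hg.neg) hneg)
  rw [sub_self] at hsum
  convert hsum.div_const 2 using 2
  · rw [Complex.sinh]
    ring
  · rw [zero_div]

/-- The first-order terms of `u` and of the exponential cancel up to `(b - B) * θ`. -/
lemma tendsto_mul_one_add_mul_exp_neg_sub_one {u θ b B : ι → ℂ} {α b₀ : ℂ}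
    (hθ : Tendsto θ f (𝓝 0)) (haθ : Tendsto (fun i => a i * θ i ^ 2) f (𝓝 t))
    (hu : Tendsto (fun i => a i * (u i - b i * θ i)) f (𝓝 α)) (hb : Tendsto b f (𝓝 b₀))
    (hB : Tendsto B f (𝓝 b₀)) (hbB : Tendsto (fun i => a i * ((b i - B i) * θ i)) f (𝓝 0)) :
    Tendsto (fun i => a i * ((1 + u i) * Complex.exp (-(B i * θ i)) - 1)) f
      (𝓝 (α - b₀ ^ 2 * t / 2)) := by
  have hBθ : Tendsto (fun i => -(B i * θ i)) f (𝓝 0) := by simpa using (hB.mul hθ).neg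
  have hquad : Tendsto (fun i => a i * (-(B i * θ i)) ^ 2) f (𝓝 (b₀ ^ 2 * t)) :=
    ((hB.pow 2).mul haθ).congr fun i => by ring
  have hexp : Tendsto (fun i => Complex.exp (-(B i * θ i)) - 1) f (𝓝 0) := by
    simpa using (tendsto_exp_of_tendsto_zero hBθ).sub_const 1
  have hsecond := tendsto_mul_exp_sub_one_sub hBθ hquad
  have hmixed : Tendsto (fun i => a i * (b i * θ i * (Complex.exp (-(B i * θ i)) - 1))) f
      (𝓝 (-(b₀ ^ 2 * t))) := by
    convert ((hb.mul hθ).mul hsecond).sub (hb.mul (hB.mul haθ)) using 2 <;> ring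
  convert (((hu.add hsecond).add hbB).add (hu.mul hexp)).add hmixed using 2 <;> ring

end SecondOrderLimits

section SaddlePoint

variable {ι : Type*} {f : Filter ι} {N : ι → ℕ}

/-- The displacement of the exponent `c` caused by rotating `x = e^{c/n} - 1` to `x e^θ`:
`1 + (e^{c/n} - 1) e^θ = e^{(c + saddleShift n c θ)/n}`. -/
noncomputable def saddleShift (n : ℕ) (c θ : ℂ) : ℂ :=
  n * Complex.log (1 + (1 - Complex.exp (-(c / n))) * (Complex.exp θ - 1))

lemma one_add_mul_exp_eq_exp_saddleShift {n : ℕ} {c θ : ℂ} (hn : n ≠ 0)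
    (h : 1 + (1 - Complex.exp (-(c / n))) * (Complex.exp θ - 1) ≠ 0) :
    1 + (Complex.exp (c / n) - 1) * Complex.exp θ = Complex.exp ((c + saddleShift n c θ) / n) := by
  have hn0 : (n : ℂ) ≠ 0 := Nat.cast_ne_zero.2 hn
  have hc := Complex.exp_ne_zero (c / n)
  rw [add_div, Complex.exp_add, saddleShift, mul_div_cancel_left₀ _ hn0, Complex.exp_log h,
    Complex.exp_neg]
  field_simp
  ring

variable {θ : ι → ℂ} {τ : ℂ}

section Shift

variable {c : ι → ℂ} {c₀ : ℂ}

lemma tendsto_natCast_mul_one_sub_exp_neg_div_sub (hN : Tendsto N f atTop)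
    (hc : Tendsto c f (𝓝 c₀)) :
    Tendsto (fun i => (N i : ℂ) * (N i * (1 - Complex.exp (-(c i / N i))) - c i)) f
      (𝓝 (-(c₀ ^ 2 / 2))) := by
  have hne : ∀ᶠ i in f, (N i : ℂ) ≠ 0 :=
    (hN.eventually_ne_atTop 0).mono fun i hi => Nat.cast_ne_zero.2 hi
  have hsq : Tendsto (fun i => (N i : ℂ) ^ 2 * (-(c i / N i)) ^ 2) f (𝓝 (c₀ ^ 2)) := by
    refine (hc.pow 2).congr' ?_
    filter_upwards [hne] with i hi
    field_simp
  refine (tendsto_mul_exp_sub_one_sub (tendsto_neg_div_natCast hN hc) hsq).neg.congr' ?_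
  filter_upwards [hne] with i hi
  field_simp
  ring

/-- `saddleShift` has the second-order expansion `c θ + c θ² / 2`, up to `o(θ²) + O(θ / n)`. -/
lemma tendsto_mul_saddleShift_sub (hN : Tendsto N f atTop) (hc : Tendsto c f (𝓝 c₀))
    (hθ : Tendsto θ f (𝓝 0)) (hNθ : Tendsto (fun i => (N i : ℂ) * θ i ^ 2) f (𝓝 τ)) :
    Tendsto (fun i => (N i : ℂ) * (saddleShift (N i) (c i) (θ i) - c i * θ i)) f
      (𝓝 (c₀ * τ / 2)) := by
  set y : ι → ℂ := fun i => N i * (1 - Complex.exp (-(c i / N i)))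
  have hy : Tendsto y f (𝓝 c₀) := by
    simpa [y, ← mul_neg] using (tendsto_natCast_mul_exp_neg_div_sub_one hN hc).neg
  have hexp : Tendsto (fun i => Complex.exp (θ i) - 1) f (𝓝 0) := by
    simpa using (tendsto_exp_of_tendsto_zero hθ).sub_const 1
  have hNz : Tendsto (fun i => (N i : ℂ) *
      ((1 - Complex.exp (-(c i / N i))) * (Complex.exp (θ i) - 1))) f (𝓝 0) := by
    simpa [y, mul_assoc] using hy.mul hexp
  have hz := tendsto_zero_of_tendsto_mul (tendsto_natCast_atTop_cobounded.comp hN) hNz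
  have hlog := tendsto_mul_log_one_add_sub (a := fun i => (N i : ℂ) ^ 2) hz
    (by simpa [mul_pow] using hNz.pow 2)
  have hmain := (hy.mul (tendsto_mul_exp_sub_one_sub hθ hNθ)).add
    ((tendsto_natCast_mul_one_sub_exp_neg_div_sub hN hc).mul hθ)
  convert hmain.add hlog using 2
  · simp only [saddleShift, y]
    ring
  · ring

lemma tendsto_saddleShift_zero (hN : Tendsto N f atTop) (hc : Tendsto c f (𝓝 c₀))
    (hθ : Tendsto θ f (𝓝 0)) (hNθ : Tendsto (fun i => (N i : ℂ) * θ i ^ 2) f (𝓝 τ)) :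
    Tendsto (fun i => saddleShift (N i) (c i) (θ i)) f (𝓝 0) := by
  have hsub := tendsto_zero_of_tendsto_mul (tendsto_natCast_atTop_cobounded.comp hN)
    (tendsto_mul_saddleShift_sub hN hc hθ hNθ)
  simpa using hsub.add (hc.mul hθ)

lemma tendsto_mul_saddleShift_sq (hN : Tendsto N f atTop) (hc : Tendsto c f (𝓝 c₀))
    (hθ : Tendsto θ f (𝓝 0)) (hNθ : Tendsto (fun i => (N i : ℂ) * θ i ^ 2) f (𝓝 τ)) :
    Tendsto (fun i => (N i : ℂ) * saddleShift (N i) (c i) (θ i) ^ 2) f (𝓝 (c₀ ^ 2 * τ)) := by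
  have hsum := ((tendsto_mul_saddleShift_sub hN hc hθ hNθ).mul
    ((tendsto_saddleShift_zero hN hc hθ hNθ).add (hc.mul hθ))).add ((hc.pow 2).mul hNθ)
  rw [mul_zero, add_zero, mul_zero, zero_add] at hsum
  exact hsum.congr fun i => by ring

end Shift

/-- With weight `x ^ e` for `e` edges and `x = e^{c/n} - 1`, a random connected graph on `n + 1`
vertices has about `n * edgeMean c` edges: `edgeMean c` is `c` times the derivative of
`log (2 sinh (c / 2))`. -/
noncomputable def edgeMean (c : ℝ) : ℝ := c / 2 * (cosh (c / 2) / sinh (c / 2))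

/-- The variance of the number of edges, divided by `n`, in the setting of `edgeMean`. -/
noncomputable def edgeVariance (c : ℝ) : ℝ := edgeMean c + c ^ 2 / 4 - edgeMean c ^ 2

variable {c : ι → ℝ} {c₀ : ℝ}

lemma sinh_half_pos {x : ℝ} (hx : 0 < x) : 0 < sinh (x / 2) := Real.sinh_pos_iff.2 (half_pos hx)

lemma continuousAt_coth_half {x : ℝ} (hx : 0 < x) :
    ContinuousAt (fun c => cosh (c / 2) / sinh (c / 2)) x := by
  have hs := (sinh_half_pos hx).ne'
  fun_prop (disch := exact hs)

lemma tendsto_edgeMean (hc₀ : 0 < c₀) (hc : Tendsto c f (𝓝 c₀)) :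
    Tendsto (fun i => edgeMean (c i)) f (𝓝 (edgeMean c₀)) :=
  (hc.div_const 2).mul ((continuousAt_coth_half hc₀).tendsto.comp hc)

lemma sinh_add_half_div_sinh_half {x : ℝ} (hx : 0 < x) (d : ℂ) :
    Complex.sinh ((x + d) / 2) / Complex.sinh (x / 2) =
      1 + ((Complex.cosh (d / 2) - 1) +
        (cosh (x / 2) / sinh (x / 2) : ℝ) * Complex.sinh (d / 2)) := by
  have hs : Complex.sinh (x / 2) ≠ 0 := by exact_mod_cast (sinh_half_pos hx).ne'
  rw [add_div, Complex.sinh_add]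
  push_cast
  field_simp
  ring

lemma tendsto_mul_sinh_saddleShift_sub (hN : Tendsto N f atTop) (hc₀ : 0 < c₀)
    (hc : Tendsto c f (𝓝 c₀)) (hθ : Tendsto θ f (𝓝 0))
    (hNθ : Tendsto (fun i => (N i : ℂ) * θ i ^ 2) f (𝓝 τ)) :
    Tendsto (fun i => (N i : ℂ) *
      (Complex.sinh ((c i + saddleShift (N i) (c i) (θ i)) / 2) / Complex.sinh (c i / 2) - 1 -
        edgeMean (c i) * θ i)) f (𝓝 ((c₀ ^ 2 / 8 + edgeMean c₀ / 2 : ℝ) * τ)) := by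
  have hcC : Tendsto (fun i => (c i : ℂ)) f (𝓝 c₀) := (Complex.continuous_ofReal.tendsto _).comp hc
  set D : ι → ℂ := fun i => saddleShift (N i) (c i) (θ i)
  have hD : Tendsto (fun i => D i / 2) f (𝓝 0) := by
    simpa using (tendsto_saddleShift_zero hN hcC hθ hNθ).div_const 2
  have hND : Tendsto (fun i => (N i : ℂ) * (D i / 2) ^ 2) f (𝓝 (c₀ ^ 2 * τ / 4)) :=
    ((tendsto_mul_saddleShift_sq hN hcC hθ hNθ).div_const 4).congr fun i => by ring
  have hcoth : Tendsto (fun i => ((cosh (c i / 2) / sinh (c i / 2) : ℝ) : ℂ)) f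
      (𝓝 (cosh (c₀ / 2) / sinh (c₀ / 2) : ℝ)) :=
    (Complex.continuous_ofReal.tendsto _).comp ((continuousAt_coth_half hc₀).tendsto.comp hc)
  have hsinh := hcoth.mul ((tendsto_mul_sinh_sub hD hND).add
    ((tendsto_mul_saddleShift_sub hN hcC hθ hNθ).div_const 2))
  have hlim : c₀ ^ 2 * τ / 4 / 2 + (cosh (c₀ / 2) / sinh (c₀ / 2) : ℝ) * (0 + c₀ * τ / 2 / 2) =
      (c₀ ^ 2 / 8 + edgeMean c₀ / 2 : ℝ) * τ := by
    rw [edgeMean]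
    push_cast
    ring
  rw [← hlim]
  refine ((tendsto_mul_cosh_sub_one hD hND).add hsinh).congr' ?_
  filter_upwards [hc.eventually (lt_mem_nhds hc₀)] with i hi
  rw [sinh_add_half_div_sinh_half hi, edgeMean]
  push_cast
  ring

lemma eventually_one_add_mul_exp_eq_exp_saddleShift (hN : Tendsto N f atTop)
    (hc : Tendsto c f (𝓝 c₀)) (hθ : Tendsto θ f (𝓝 0)) : ∀ᶠ i in f,
      1 + (Complex.exp (c i / N i) - 1) * Complex.exp (θ i) =
        Complex.exp ((c i + saddleShift (N i) (c i) (θ i)) / N i) := by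
  have hcC : Tendsto (fun i => (c i : ℂ)) f (𝓝 c₀) := (Complex.continuous_ofReal.tendsto _).comp hc
  have hone := (((tendsto_exp_of_tendsto_zero (tendsto_neg_div_natCast hN hcC)).const_sub 1).mul
    ((tendsto_exp_of_tendsto_zero hθ).sub_const 1)).const_add 1
  filter_upwards [hone.eventually_ne (b₂ := 0) (by simp), hN.eventually_ne_atTop 0] with i hi hNi
  exact one_add_mul_exp_eq_exp_saddleShift hNi hi

lemma tendsto_factorial_mul_occSum_saddleShift (hN : Tendsto N f atTop) (hc₀ : 0 < c₀)
    (hc : Tendsto c f (𝓝 c₀)) (hθ : Tendsto θ f (𝓝 0))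
    (hNθ : Tendsto (fun i => (N i : ℂ) * θ i ^ 2) f (𝓝 τ)) :
    Tendsto (fun i => ((N i)! : ℂ) * occSum (· ≤ ·)
      (geomWeight (N i) (c i + saddleShift (N i) (c i) (θ i))) (N i) (N i)) f
      (𝓝 (ballotProb c₀)) := by
  have hcC : Tendsto (fun i => (c i : ℂ)) f (𝓝 c₀) := (Complex.continuous_ofReal.tendsto _).comp hc
  have hbound := (tendsto_mul_saddleShift_sq hN hcC hθ hNθ).norm.eventually_le_const
    (lt_add_one ‖(c₀ : ℂ) ^ 2 * τ‖)
  have hw := hcC.add (tendsto_saddleShift_zero hN hcC hθ hNθ)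
  rw [add_zero] at hw
  refine tendsto_factorial_mul_occSum_geomWeight hN hc₀ hw (M := ‖(c₀ : ℂ) ^ 2 * τ‖ + 1) ?_
  filter_upwards [hbound] with i hi
  rw [norm_mul, norm_pow, Complex.norm_natCast] at hi
  rw [Complex.add_im, Complex.ofReal_im, zero_add, ← sq_abs]
  refine le_trans ?_ hi
  gcongr
  exact Complex.abs_im_le_norm _

lemma tendsto_sinh_saddleShift_mul_exp_pow (hN : Tendsto N f atTop) (hc₀ : 0 < c₀)
    (hc : Tendsto c f (𝓝 c₀)) (hθ : Tendsto θ f (𝓝 0))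
    (hNθ : Tendsto (fun i => (N i : ℂ) * θ i ^ 2) f (𝓝 τ)) {B : ι → ℂ}
    (hB : Tendsto B f (𝓝 (edgeMean c₀)))
    (hbB : Tendsto (fun i => (N i : ℂ) * ((edgeMean (c i) - B i) * θ i)) f (𝓝 0)) :
    Tendsto (fun i => (Complex.sinh ((c i + saddleShift (N i) (c i) (θ i)) / 2) /
      Complex.sinh (c i / 2) * Complex.exp (-(B i * θ i))) ^ N i) f
      (𝓝 (Complex.exp (edgeVariance c₀ * τ / 2))) := by
  have hb := (Complex.continuous_ofReal.tendsto _).comp (tendsto_edgeMean hc₀ hc)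
  have hpow := tendsto_one_add_pow_exp hN (tendsto_mul_one_add_mul_exp_neg_sub_one hθ hNθ
    (tendsto_mul_sinh_saddleShift_sub hN hc₀ hc hθ hNθ) hb hB hbB)
  convert hpow using 3
  · ring
  · rw [edgeVariance]
    push_cast
    ring

/-- On the scale `θ ~ n ^ (-1/2)` the generating function is Gaussian, because `edgeMean` cancels
the first-order phase. -/
lemma tendsto_connGenFun_div (hN : Tendsto N f atTop) (hc₀ : 0 < c₀) (hc : Tendsto c f (𝓝 c₀))
    (hθ : Tendsto θ f (𝓝 0)) (hNθ : Tendsto (fun i => (N i : ℂ) * θ i ^ 2) f (𝓝 τ)) {B : ι → ℂ}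
    (hB : Tendsto B f (𝓝 (edgeMean c₀)))
    (hbB : Tendsto (fun i => (N i : ℂ) * ((edgeMean (c i) - B i) * θ i)) f (𝓝 0)) :
    Tendsto (fun i =>
      connGenFun (N i + 1) ((Complex.exp (c i / N i) - 1) * Complex.exp (θ i)) *
        Complex.exp (-(N i * B i * θ i)) /
          (Complex.exp (c i / 2) * (2 * Complex.sinh (c i / 2)) ^ N i)) f
      (𝓝 (Complex.exp (edgeVariance c₀ * τ / 2) * ballotProb c₀)) := by
  have hcC : Tendsto (fun i => (c i : ℂ)) f (𝓝 c₀) := (Complex.continuous_ofReal.tendsto _).comp hc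
  have hD := tendsto_saddleShift_zero hN hcC hθ hNθ
  have hexp := tendsto_exp_of_tendsto_zero (by simpa using hD.div_const 2)
  have hw := hcC.add hD
  rw [add_zero] at hw
  have hprod := (hexp.mul (tendsto_sinh_saddleShift_mul_exp_pow hN hc₀ hc hθ hNθ hB hbB)).mul
    (tendsto_factorial_mul_occSum_saddleShift hN hc₀ hc hθ hNθ)
  rw [one_mul] at hprod
  refine hprod.congr' ?_
  filter_upwards [eventually_one_add_mul_exp_eq_exp_saddleShift hN hc hθ,
    eventually_half_le_re hc₀ hw, hN.eventually_gt_atTop 0, hc.eventually (lt_mem_nhds hc₀)]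
    with i hx hre hNi hci
  have hs : Complex.sinh (c i / 2) ≠ 0 := by exact_mod_cast (sinh_half_pos hci).ne'
  have hphase : Complex.exp (-(N i * B i * θ i)) = Complex.exp (-(B i * θ i)) ^ N i := by
    rw [← Complex.exp_nat_mul]
    ring_nf
  rw [connGenFun_succ_eq_sinh_pow_mul hNi ((half_pos hc₀).trans_le hre) hx, hphase, add_div,
    Complex.exp_add]
  simp only [mul_pow, div_pow]
  have := Complex.exp_ne_zero ((c i : ℂ) / 2)
  field_simp

end SaddlePoint

section CoefficientAsymptotics

/-- The size of `connGenFun (n + 1)` at `x = e^{c/n} - 1`, up to a factor that converges. -/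
noncomputable def saddleScale (n : ℕ) (c : ℝ) : ℝ := rexp (c / 2) * (2 * sinh (c / 2)) ^ n

/-- The integrand of Cauchy's formula for `connGraphCount (n + 1) l` on the circle of radius
`e^{c/n} - 1`, divided by `saddleScale n c`; the angle is `t / √n`. -/
noncomputable def saddleIntegrand (n l : ℕ) (c t : ℝ) : ℂ :=
  connGenFun (n + 1) ((rexp (c / n) - 1 : ℝ) * Complex.exp ((t / √n : ℝ) * Complex.I)) *
    Complex.exp (-((t / √n : ℝ) * (n + l : ℕ) * Complex.I)) / saddleScale n c

section SingleIndex

variable {n l : ℕ} {c t : ℝ}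

lemma saddleScale_pos (hc : 0 < c) : 0 < saddleScale n c :=
  mul_pos (exp_pos _) (pow_pos (mul_pos two_pos (sinh_half_pos hc)) n)

lemma continuous_saddleIntegrand (n l : ℕ) (c : ℝ) : Continuous (saddleIntegrand n l c) := by
  unfold saddleIntegrand
  have := continuous_connGenFun (n + 1)
  fun_prop

lemma integral_saddleIntegrand (hn : 0 < n) (l : ℕ) (c : ℝ) :
    ∫ t in (-(π * √n))..(π * √n), saddleIntegrand n l c t =
      (2 * π * (√n * (connGraphCount (n + 1) l * (rexp (c / n) - 1) ^ (n + l) /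
        saddleScale n c)) : ℝ) := by
  have hsqrt : √(n : ℝ) ≠ 0 := by positivity
  have hsubst := intervalIntegral.integral_comp_div (a := -(π * √n)) (b := π * √n)
    (fun θ : ℝ => connGenFun (n + 1) ((rexp (c / n) - 1 : ℝ) * Complex.exp (θ * Complex.I)) *
      Complex.exp (-(θ * (n + l : ℕ) * Complex.I)) / saddleScale n c) hsqrt
  have hcauchy := integral_connGenFun_mul_exp_neg (n + 1) l (rexp (c / n) - 1 : ℝ)
  rw [Nat.add_sub_cancel] at hcauchy
  simp only [saddleIntegrand]
  rw [hsubst, intervalIntegral.integral_div, neg_div, mul_div_cancel_right₀ _ hsqrt, hcauchy,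
    Complex.real_smul]
  push_cast
  ring

lemma saddleIntegrand_eq (hn : 0 < n) (l : ℕ) (c t : ℝ) :
    saddleIntegrand n l c t =
      connGenFun (n + 1)
          ((Complex.exp (c / n) - 1) * Complex.exp ((t / √n : ℝ) * Complex.I)) *
        Complex.exp (-(n * (1 + l / n : ℝ) * ((t / √n : ℝ) * Complex.I))) /
          (Complex.exp (c / 2) * (2 * Complex.sinh (c / 2)) ^ n) := by
  have hphase : (n : ℂ) * (1 + l / n : ℝ) = (n + l : ℕ) := by
    have : (n : ℂ) ≠ 0 := Nat.cast_ne_zero.2 hn.ne'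
    push_cast
    field_simp
  rw [hphase, saddleIntegrand, saddleScale]
  push_cast
  ring_nf

lemma norm_saddleIntegrand (hc : 0 < c) :
    ‖saddleIntegrand n l c t‖ = ‖connGenFun (n + 1)
      ((rexp (c / n) - 1 : ℝ) * Complex.exp ((t / √n : ℝ) * Complex.I))‖ / saddleScale n c := by
  have hphase : ‖Complex.exp (-((t / √n : ℝ) * (n + l : ℕ) * Complex.I))‖ = 1 := by
    rw [Complex.norm_exp]
    simp
  rw [saddleIntegrand, norm_div, norm_mul, hphase, mul_one, Complex.norm_real,
    norm_of_nonneg (saddleScale_pos hc).le]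

lemma exp_sub_one_le_mul_exp (y : ℝ) : rexp y - 1 ≤ y * rexp y := by
  have h := mul_exp_neg_le_one_sub_exp_neg (-y)
  rw [neg_neg] at h
  linarith

lemma pow_mul_pow_div_saddleScale_le (hn : 0 < n) (hc : 0 < c) (D : ℕ) :
    (n * (rexp (c / n) - 1)) ^ n * (1 + (rexp (c / n) - 1)) ^ D / saddleScale n c ≤
      (c * rexp (c / n) * rexp (c * (D / (n : ℝ) ^ 2)) / (2 * sinh (c / 2))) ^ n := by
  have := sinh_half_pos hc
  have hx : 0 ≤ rexp (c / n) - 1 := sub_nonneg.2 (Real.one_le_exp (by positivity))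
  have hbase : n * (rexp (c / n) - 1) ≤ c * rexp (c / n) := by
    calc _ ≤ n * (c / n * rexp (c / n)) := by gcongr; exact exp_sub_one_le_mul_exp _
      _ = _ := by field_simp
  have hpow : (1 + (rexp (c / n) - 1)) ^ D = rexp (c * (D / (n : ℝ) ^ 2)) ^ n := by
    rw [add_sub_cancel, ← Real.exp_nat_mul, ← Real.exp_nat_mul]
    field_simp
  have hle : (2 * sinh (c / 2)) ^ n ≤ saddleScale n c :=
    le_mul_of_one_le_left (by positivity) (Real.one_le_exp (by positivity))
  rw [hpow, div_pow, mul_pow (c * _)]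
  gcongr

lemma norm_saddleIntegrand_le (hn : 0 < n) (hc : 0 < c) (hcn : rexp (c / n) < 2)
    (ht : |t| ≤ π * √n) (D : ℕ) :
    ‖saddleIntegrand n l c t‖ ≤
      rexp (-(c * (D / (n : ℝ) ^ 2) / (2 * π ^ 2)) * t ^ 2) * ‖saddleIntegrand n l c 0‖ +
        (c * rexp (c / n) * rexp (c * (D / (n : ℝ) ^ 2)) / (2 * sinh (c / 2))) ^ n := by
  have hn0 : (0 : ℝ) < n := Nat.cast_pos.2 hn
  have hscale := saddleScale_pos (n := n) hc
  have hxc : c / n ≤ rexp (c / n) - 1 := by linarith [Real.add_one_le_exp (c / n)]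
  have hθ : |t / √n| ≤ π := by
    rw [abs_div, abs_of_pos (by positivity : 0 < √(n : ℝ)), div_le_iff₀ (by positivity)]
    exact ht
  have hnorm := norm_connGenFun_mul_exp_le n D ((by positivity : 0 < c / n).trans_le hxc)
    (by linarith) hθ
  have hdecay : rexp (-((rexp (c / n) - 1) * (t / √n) ^ 2 / (2 * π ^ 2))) ^ D ≤
      rexp (-(c * (D / (n : ℝ) ^ 2) / (2 * π ^ 2)) * t ^ 2) := by
    rw [← Real.exp_nat_mul, Real.exp_le_exp, div_pow, Real.sq_sqrt hn0.le, mul_neg, neg_mul,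
      neg_le_neg_iff]
    calc c * (D / (n : ℝ) ^ 2) / (2 * π ^ 2) * t ^ 2 = D * (c / n * (t ^ 2 / n) / (2 * π ^ 2)) := by
          field_simp
      _ ≤ _ := by gcongr
  have h0 : ‖saddleIntegrand n l c 0‖ =
      ‖connGenFun (n + 1) ((rexp (c / n) - 1 : ℝ) : ℂ)‖ / saddleScale n c := by
    simp [norm_saddleIntegrand hc]
  rw [norm_saddleIntegrand hc, h0]
  calc _ ≤ _ := div_le_div_of_nonneg_right hnorm hscale.le
    _ = _ := add_div _ _ _
    _ ≤ _ := by
      rw [mul_div_assoc]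
      gcongr
      exact pow_mul_pow_div_saddleScale_le hn hc D

lemma pow_le_exp_mul_sq {ρ : ℝ} (hρ₀ : 0 < ρ) (hρ₁ : ρ ≤ 1) (ht : |t| ≤ π * √n) :
    ρ ^ n ≤ rexp (Real.log ρ / π ^ 2 * t ^ 2) := by
  have hsq : t ^ 2 ≤ n * π ^ 2 := by
    calc t ^ 2 = |t| ^ 2 := (sq_abs t).symm
      _ ≤ (π * √n) ^ 2 := by gcongr
      _ = n * π ^ 2 := by rw [mul_pow, Real.sq_sqrt n.cast_nonneg, mul_comm]
  calc ρ ^ n = rexp (Real.log ρ * n) := by rw [mul_comm, Real.exp_nat_mul, Real.exp_log hρ₀]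
    _ ≤ rexp (Real.log ρ * (t ^ 2 / π ^ 2)) := by
      rw [Real.exp_le_exp]
      exact mul_le_mul_of_nonpos_left ((div_le_iff₀ (by positivity)).2 hsq)
        (Real.log_nonpos hρ₀.le hρ₁)
    _ = _ := by ring_nf

end SingleIndex

variable {ι : Type*} {f : Filter ι} {N l : ι → ℕ} {c : ι → ℝ} {c₀ : ℝ}

lemma exists_pos_mul_exp_div_sinh_lt_one (hc₀ : 0 < c₀) :
    ∃ δ > 0, c₀ * rexp (c₀ * δ) / (2 * sinh (c₀ / 2)) < 1 := by
  have hsinh : c₀ < 2 * sinh (c₀ / 2) := by linarith [Real.self_lt_sinh_iff.2 (half_pos hc₀)]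
  have hcont : Tendsto (fun δ => c₀ * rexp (c₀ * δ) / (2 * sinh (c₀ / 2))) (𝓝[>] 0)
      (𝓝 (c₀ * rexp (c₀ * 0) / (2 * sinh (c₀ / 2)))) :=
    (Continuous.tendsto (by fun_prop) 0).mono_left nhdsWithin_le_nhds
  rw [mul_zero, Real.exp_zero, mul_one] at hcont
  have hpos : ∀ᶠ δ : ℝ in 𝓝[>] 0, 0 < δ := self_mem_nhdsWithin
  exact (hpos.and
    (hcont.eventually_lt_const ((div_lt_one (hc₀.trans hsinh)).2 hsinh))).exists

lemma exists_eventually_norm_saddleIntegrand_le (hN : Tendsto N f atTop) (hc₀ : 0 < c₀)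
    (hc : Tendsto c f (𝓝 c₀)) {K : ℝ} (hK : ∀ᶠ i in f, ‖saddleIntegrand (N i) (l i) (c i) 0‖ ≤ K) :
    ∃ α > 0, ∀ᶠ i in f, ∀ t : ℝ, |t| ≤ π * √(N i) →
      ‖saddleIntegrand (N i) (l i) (c i) t‖ ≤ (K + 1) * rexp (-α * t ^ 2) := by
  obtain ⟨δ, hδ, hδlt⟩ := exists_pos_mul_exp_div_sinh_lt_one hc₀
  obtain ⟨ρ, hρ, hρ₁⟩ := exists_between hδlt
  have := sinh_half_pos hc₀
  have hρ₀ : 0 < ρ := lt_trans (by positivity) hρ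
  set D : ι → ℕ := fun i => ⌊δ * (N i : ℝ) ^ 2⌋₊
  have hNr : Tendsto (fun i => (N i : ℝ)) f atTop := tendsto_natCast_atTop_atTop.comp hN
  have hD : Tendsto (fun i => (D i : ℝ) / (N i : ℝ) ^ 2) f (𝓝 δ) :=
    (tendsto_nat_floor_mul_div_atTop hδ.le).comp ((tendsto_pow_atTop two_ne_zero).comp hNr)
  have hexp : Tendsto (fun i => rexp (c i / N i)) f (𝓝 1) := by
    simpa using (hc.div_atTop hNr).rexp
  have hbase : Tendsto (fun i => c i * rexp (c i / N i) * rexp (c i * (D i / (N i : ℝ) ^ 2)) /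
      (2 * sinh (c i / 2))) f (𝓝 (c₀ * rexp (c₀ * δ) / (2 * sinh (c₀ / 2)))) := by
    have hden : Tendsto (fun i => 2 * sinh (c i / 2)) f (𝓝 (2 * sinh (c₀ / 2))) :=
      (Continuous.tendsto (by fun_prop : Continuous fun y => 2 * sinh (y / 2)) c₀).comp hc
    have h := ((hc.mul hexp).mul (hc.mul hD).rexp).div hden (by positivity)
    rwa [mul_one] at h
  have hrate : Tendsto (fun i => c i * (D i / (N i : ℝ) ^ 2) / (2 * π ^ 2)) f
      (𝓝 (c₀ * δ / (2 * π ^ 2))) := (hc.mul hD).div_const _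
  have hα₁ : 0 < c₀ * δ / (2 * π ^ 2) / 2 := by positivity
  have hα₂ : 0 < -(Real.log ρ / π ^ 2) :=
    neg_pos.2 (div_neg_of_neg_of_pos (Real.log_neg hρ₀ hρ₁) (by positivity))
  refine ⟨min _ _, lt_min hα₁ hα₂, ?_⟩
  filter_upwards [hK, hN.eventually_gt_atTop 0, hexp.eventually_lt_const one_lt_two,
    hc.eventually_const_lt hc₀, hbase.eventually_le_const hρ,
    hrate.eventually_const_le (half_lt_self (by positivity))] with i hKi hNi hexpi hci hbasei hratei
    t ht
  have := sinh_half_pos hci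
  refine (norm_saddleIntegrand_le hNi hci hexpi ht (D i)).trans ?_
  rw [add_mul, one_mul, mul_comm K]
  gcongr
  · exact (min_le_left _ _).trans hratei
  · calc _ ≤ ρ ^ N i := by gcongr
      _ ≤ rexp (Real.log ρ / π ^ 2 * t ^ 2) := pow_le_exp_mul_sq hρ₀ hρ₁.le ht
      _ ≤ _ := by
        gcongr
        exact le_neg.2 (min_le_right _ _)

lemma tendsto_div_sqrt_mul_I (hN : Tendsto N f atTop) (t : ℝ) :
    Tendsto (fun i => ((t / √(N i) : ℝ) : ℂ) * Complex.I) f (𝓝 0) := by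
  have hsqrt := Real.tendsto_sqrt_atTop.comp (tendsto_natCast_atTop_atTop.comp hN)
  have h : Tendsto (fun i => ((t / √(N i) : ℝ) : ℂ)) f (𝓝 (0 : ℝ)) :=
    (Complex.continuous_ofReal.tendsto _).comp (hsqrt.const_div_atTop t)
  simpa using h.mul_const Complex.I

lemma mul_div_sqrt_mul_I_sq {n : ℕ} (hn : 0 < n) (t : ℝ) :
    (n : ℂ) * (((t / √n : ℝ) : ℂ) * Complex.I) ^ 2 = -t ^ 2 := by
  have hreal : n * (t / √n) ^ 2 = t ^ 2 := by
    rw [div_pow, Real.sq_sqrt (Nat.cast_nonneg _)]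
    field_simp
  rw [mul_pow, Complex.I_sq, ← mul_assoc, mul_neg_one]
  exact_mod_cast congr(-$hreal)

lemma tendsto_one_add_div (hN : Tendsto N f atTop) (hc₀ : 0 < c₀) (hc : Tendsto c f (𝓝 c₀))
    (hmean : Tendsto (fun i => √(N i) * (edgeMean (c i) - (1 + (l i : ℝ) / N i))) f (𝓝 0)) :
    Tendsto (fun i => 1 + (l i : ℝ) / N i) f (𝓝 (edgeMean c₀)) := by
  have hsqrt : Tendsto (fun i => √(N i : ℝ)) f atTop :=
    Real.tendsto_sqrt_atTop.comp (tendsto_natCast_atTop_atTop.comp hN)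
  have h := (tendsto_edgeMean hc₀ hc).sub (hmean.mul hsqrt.inv_tendsto_atTop)
  rw [mul_zero, sub_zero] at h
  refine h.congr' ?_
  filter_upwards [hN.eventually_gt_atTop 0] with i hNi
  simp only [Pi.inv_apply]
  field_simp
  ring

lemma tendsto_saddleIntegrand (hN : Tendsto N f atTop) (hc₀ : 0 < c₀) (hc : Tendsto c f (𝓝 c₀))
    (hmean : Tendsto (fun i => √(N i) * (edgeMean (c i) - (1 + (l i : ℝ) / N i))) f (𝓝 0)) (t : ℝ) :
    Tendsto (fun i => saddleIntegrand (N i) (l i) (c i) t) f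
      (𝓝 (ballotProb c₀ * rexp (-(edgeVariance c₀ / 2) * t ^ 2) : ℝ)) := by
  have hNθ : Tendsto (fun i => (N i : ℂ) * (((t / √(N i) : ℝ) : ℂ) * Complex.I) ^ 2) f
      (𝓝 (-t ^ 2 : ℂ)) := by
    refine tendsto_const_nhds.congr' ?_
    filter_upwards [hN.eventually_gt_atTop 0] with i hNi
    exact (mul_div_sqrt_mul_I_sq hNi t).symm
  have hB : Tendsto (fun i => ((1 + l i / N i : ℝ) : ℂ)) f (𝓝 (edgeMean c₀)) :=
    (Complex.continuous_ofReal.tendsto _).comp (tendsto_one_add_div hN hc₀ hc hmean)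
  have hbB : Tendsto (fun i => (N i : ℂ) * ((edgeMean (c i) - (1 + l i / N i : ℝ)) *
      (((t / √(N i) : ℝ) : ℂ) * Complex.I))) f (𝓝 0) := by
    have h := ((Complex.continuous_ofReal.tendsto _).comp hmean).mul_const (t * Complex.I)
    rw [Complex.ofReal_zero, zero_mul] at h
    refine h.congr fun i => ?_
    have hsq : N i * (t / √(N i)) = √(N i) * t := by
      rw [mul_div_left_comm, Real.div_sqrt, mul_comm]
    calc _ = ((√(N i) * t : ℝ) : ℂ) * (edgeMean (c i) - (1 + l i / N i : ℝ)) * Complex.I := by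
          simp only [Function.comp_apply]
          push_cast
          ring
      _ = _ := by
          rw [← hsq]
          push_cast
          ring
  have hlim : (ballotProb c₀ * rexp (-(edgeVariance c₀ / 2) * t ^ 2) : ℝ) =
      Complex.exp (edgeVariance c₀ * -t ^ 2 / 2) * ballotProb c₀ := by
    push_cast
    ring_nf
  rw [hlim]
  refine (tendsto_connGenFun_div hN hc₀ hc (tendsto_div_sqrt_mul_I hN t) hNθ hB hbB).congr' ?_
  filter_upwards [hN.eventually_gt_atTop 0] with i hNi
  exact (saddleIntegrand_eq hNi _ _ _).symm

lemma tendsto_integral_saddleIntegrand [f.IsCountablyGenerated] (hN : Tendsto N f atTop)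
    (hc₀ : 0 < c₀) (hc : Tendsto c f (𝓝 c₀))
    (hmean : Tendsto (fun i => √(N i) * (edgeMean (c i) - (1 + (l i : ℝ) / N i))) f (𝓝 0)) :
    Tendsto (fun i => ∫ t in (-(π * √(N i)))..(π * √(N i)), saddleIntegrand (N i) (l i) (c i) t) f
      (𝓝 (ballotProb c₀ * √(π / (edgeVariance c₀ / 2)) : ℝ)) := by
  have hpt := tendsto_saddleIntegrand hN hc₀ hc hmean
  have hradius : Tendsto (fun i => π * √(N i : ℝ)) f atTop :=
    (Real.tendsto_sqrt_atTop.comp (tendsto_natCast_atTop_atTop.comp hN)).const_mul_atTop pi_pos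
  obtain ⟨α, hα, hbound⟩ := exists_eventually_norm_saddleIntegrand_le hN hc₀ hc
    ((hpt 0).norm.eventually_le_const (lt_add_one _))
  have hgauss : ∫ t : ℝ, ((ballotProb c₀ * rexp (-(edgeVariance c₀ / 2) * t ^ 2) : ℝ) : ℂ) =
      (ballotProb c₀ * √(π / (edgeVariance c₀ / 2)) : ℝ) := by
    rw [integral_complex_ofReal, MeasureTheory.integral_const_mul, integral_gaussian]
  have hinterval (i : ι) : ∫ t in (-(π * √(N i)))..(π * √(N i)),
      saddleIntegrand (N i) (l i) (c i) t = ∫ t,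
        (Set.Ioc (-(π * √(N i))) (π * √(N i))).indicator (saddleIntegrand (N i) (l i) (c i)) t := by
    have : 0 ≤ π * √(N i : ℝ) := by positivity
    rw [MeasureTheory.integral_indicator measurableSet_Ioc,
      intervalIntegral.integral_of_le (by linarith)]
  simp only [hinterval]
  rw [← hgauss]
  refine MeasureTheory.tendsto_integral_filter_of_dominated_convergence _
    (Eventually.of_forall fun i => ((continuous_saddleIntegrand _ _ _).measurable.indicator
      measurableSet_Ioc).aestronglyMeasurable) ?_
    ((integrable_exp_neg_mul_sq hα).const_mul
      (‖((ballotProb c₀ * rexp (-(edgeVariance c₀ / 2) * 0 ^ 2) : ℝ) : ℂ)‖ + 1 + 1)) ?_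
  · filter_upwards [hbound] with i hi
    refine Eventually.of_forall fun t => ?_
    rw [norm_indicator_eq_indicator_norm]
    exact Set.indicator_apply_le' (fun ht => hi t (abs_le.2 ⟨ht.1.le, ht.2⟩))
      fun _ => by positivity
  · refine Eventually.of_forall fun t => (hpt t).congr' ?_
    filter_upwards [hradius.eventually_gt_atTop |t|] with i hi
    exact (Set.indicator_of_mem (Set.mem_Ioc.2 ⟨(abs_lt.1 hi).1, (abs_lt.1 hi).2.le⟩) _).symm

lemma tendsto_connGraphCount [f.IsCountablyGenerated] (hN : Tendsto N f atTop) (hc₀ : 0 < c₀)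
    (hvar : 0 < edgeVariance c₀) (hc : Tendsto c f (𝓝 c₀))
    (hmean : Tendsto (fun i => √(N i) * (edgeMean (c i) - (1 + (l i : ℝ) / N i))) f (𝓝 0)) :
    Tendsto (fun i => √(N i) * (connGraphCount (N i + 1) (l i) *
      (rexp (c i / N i) - 1) ^ (N i + l i) / saddleScale (N i) (c i))) f
      (𝓝 (ballotProb c₀ / √(2 * π * edgeVariance c₀))) := by
  have hint := tendsto_integral_saddleIntegrand hN hc₀ hc hmean
  have hre := ((Complex.continuous_re.tendsto _).comp hint).div_const (2 * π)
  have hlim : ballotProb c₀ * √(π / (edgeVariance c₀ / 2)) / (2 * π) =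
      ballotProb c₀ / √(2 * π * edgeVariance c₀) := by
    have hsqrt : √(π / (edgeVariance c₀ / 2)) = 2 * π / √(2 * π * edgeVariance c₀) := by
      rw [Real.sqrt_eq_iff_mul_self_eq (by positivity) (by positivity), div_mul_div_comm,
        Real.mul_self_sqrt (by positivity)]
      field_simp
    rw [hsqrt]
    field_simp
  rw [Complex.ofReal_re, hlim] at hre
  refine hre.congr' ?_
  filter_upwards [hN.eventually_gt_atTop 0] with i hNi
  rw [Function.comp_apply, integral_saddleIntegrand hNi, Complex.ofReal_re,
    mul_div_cancel_left₀ _ (by positivity)]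

end CoefficientAsymptotics

section Constants

variable {c : ℝ}

lemma two_mul_sinh_half (c : ℝ) : 2 * sinh (c / 2) = rexp (c / 2) * (1 - rexp (-c)) := by
  rw [Real.sinh_eq, mul_sub, ← Real.exp_add]
  ring_nf

lemma two_mul_cosh_half (c : ℝ) : 2 * cosh (c / 2) = rexp (c / 2) * (1 + rexp (-c)) := by
  rw [Real.cosh_eq, mul_add, ← Real.exp_add]
  ring_nf

lemma edgeMean_eq_tailRate_add (hc : 0 < c) : edgeMean c = tailRate c + c / 2 := by
  have := one_sub_exp_neg_pos hc
  rw [edgeMean, ← mul_div_mul_left (cosh (c / 2)) _ two_ne_zero, two_mul_cosh_half,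
    two_mul_sinh_half, mul_div_mul_left _ _ (Real.exp_ne_zero _), tailRate, headRate]
  field_simp
  ring

lemma one_lt_edgeMean (hc : 0 < c) : 1 < edgeMean c := by
  have hderiv (x : ℝ) : HasDerivAt (fun x => x * cosh x - sinh x) (x * sinh x) x :=
    (((hasDerivAt_id' x).mul (Real.hasDerivAt_cosh x)).sub
      (Real.hasDerivAt_sinh x)).congr_deriv (by ring)
  have hmono : StrictMonoOn (fun x => x * cosh x - sinh x) (Set.Ici 0) := by
    refine strictMonoOn_of_deriv_pos (convex_Ici 0) (by fun_prop) fun x hx => ?_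
    rw [interior_Ici] at hx
    rw [(hderiv x).deriv]
    exact mul_pos hx (Real.sinh_pos_iff.2 hx)
  have hlt := hmono Set.self_mem_Ici (half_pos hc).le (half_pos hc)
  simp only [zero_mul, Real.sinh_zero, sub_zero, sub_pos] at hlt
  rwa [edgeMean, ← mul_div_assoc, one_lt_div (sinh_half_pos hc)]

lemma edgeMean_eq_of_exp_neg_eq {b : ℝ} (hb : 0 < b) (hc : 0 < c)
    (h : rexp (-c) = (2 * b - c) / (2 * b + c)) : edgeMean c = b := by
  have := one_sub_exp_neg_pos hc
  have hmul : rexp (-c) * (2 * b + c) = 2 * b - c := by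
    rw [h]
    field_simp
  rw [edgeMean_eq_tailRate_add hc, tailRate, headRate]
  field_simp
  linarith

lemma edgeVariance_eq_tailRate (hc : 0 < c) :
    edgeVariance c = tailRate c + c / 2 - tailRate c ^ 2 - tailRate c * c := by
  rw [edgeVariance, edgeMean_eq_tailRate_add hc]
  ring

lemma edgeVariance_eq_add_mul_f2 (hc : 0 < c) :
    edgeVariance c = (edgeMean c - 1) + c ^ 2 * f2 c := by
  have := one_sub_exp_neg_pos hc
  rw [edgeVariance_eq_tailRate hc, edgeMean_eq_tailRate_add hc, f2, tailRate, headRate]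
  field_simp
  ring

lemma edgeVariance_pos (hc : 0 < c) : 0 < edgeVariance c := by
  have := one_sub_exp_neg_pos hc
  have hexp : rexp c * rexp (-c) = 1 := by rw [← Real.exp_add, add_neg_cancel, Real.exp_zero]
  have heq : edgeVariance c =
      c * rexp (-c) * (sinh c - c) / (1 - rexp (-c)) ^ 2 := by
    rw [edgeVariance_eq_tailRate hc, tailRate, headRate, Real.sinh_eq]
    field_simp
    linear_combination -hexp
  rw [heq]
  have := sub_pos.2 (Real.self_lt_sinh_iff.2 hc)
  positivity

lemma sqrt_four_mul_edgeMean_sq_sub (hc : 0 < c) :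
    √(4 * edgeMean c ^ 2 - c ^ 2) = c / sinh (c / 2) := by
  have := sinh_half_pos hc
  rw [Real.sqrt_eq_iff_mul_self_eq_of_pos (by positivity), edgeMean]
  field_simp
  linear_combination -4 * Real.cosh_sq (c / 2)

lemma Bterm_edgeMean_sub_one (hc : 0 < c) :
    Bterm (edgeMean c - 1) c = 2 * sinh (c / 2) / (c * c ^ (edgeMean c - 1)) := by
  have := sinh_half_pos hc
  have := Real.rpow_pos_of_pos hc (edgeMean c - 1)
  rw [Bterm, sub_add_cancel, sqrt_four_mul_edgeMean_sq_sub hc]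
  field_simp

lemma Aterm_edgeMean_sub_one (hc : 0 < c) :
    Aterm (edgeMean c - 1) c =
      c * (1 - tailRate c) / √(2 * π * edgeVariance c) * rexp (-(c * (edgeMean c + 1) / 2)) := by
  have := (sub_pos.2 (one_lt_edgeMean hc)).ne'
  have hvar : 8 * π * (edgeMean c - 1) * (1 + c ^ 2 * f2 c / (edgeMean c - 1)) =
      2 ^ 2 * (2 * π * edgeVariance c) := by
    rw [edgeVariance_eq_add_mul_f2 hc]
    field_simp
    ring
  have hnum : c * (c - 2 * (edgeMean c - 1)) = 2 * (c * (1 - tailRate c)) := by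
    rw [edgeMean_eq_tailRate_add hc]
    ring
  rw [Aterm, hvar, hnum, Real.sqrt_mul (by positivity), Real.sqrt_sq two_pos.le,
    mul_div_mul_left _ _ two_ne_zero]
  ring_nf

lemma Aterm_edgeMean_sub_one_ne_zero (hc : 0 < c) : Aterm (edgeMean c - 1) c ≠ 0 := by
  have := sub_pos.2 (tailRate_lt_one hc)
  have := edgeVariance_pos hc
  rw [Aterm_edgeMean_sub_one hc]
  positivity

lemma Bterm_pow_mul {k l : ℕ} (hk : 0 < k) (hc : 0 < c) (hβ : edgeMean c - 1 = l / k) :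
    Bterm (l / k) c ^ k * (k : ℝ) ^ ((1 + (l : ℝ) / k) * k) * (k : ℝ) ^ (-(3 : ℝ) / 2) =
      (2 * sinh (c / 2)) ^ k * (k / c) ^ (k + l) * (√k / k ^ 2) := by
  have hk₀ : (0 : ℝ) < k := Nat.cast_pos.2 hk
  have hexponent : (1 + (l : ℝ) / k) * k = (k + l : ℕ) := by
    push_cast
    field_simp
  have hB : Bterm (l / k) c ^ k = (2 * sinh (c / 2)) ^ k / c ^ (k + l) := by
    rw [← hβ, Bterm_edgeMean_sub_one hc, hβ, div_pow, mul_pow c, ← Real.rpow_natCast (c ^ _),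
      ← Real.rpow_mul hc.le, div_mul_cancel₀ _ hk₀.ne', Real.rpow_natCast, ← pow_add]
  have hsqrt : (k : ℝ) ^ (-(3 : ℝ) / 2) = √k / k ^ 2 := by
    rw [Real.sqrt_eq_rpow, ← Real.rpow_natCast, ← Real.rpow_sub hk₀]
    norm_num
  rw [hexponent, hB, hsqrt, Real.rpow_natCast, div_pow]
  ring

lemma div_mul_Bterm_pow_eq {n l : ℕ} (hn : 0 < n) (hc : 0 < c)
    (hβ : edgeMean c - 1 = l / (n + 1 : ℕ)) (a A : ℝ) :
    a / (A * Bterm (l / (n + 1 : ℕ)) c ^ (n + 1) *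
        ((n + 1 : ℕ) : ℝ) ^ ((1 + (l : ℝ) / (n + 1 : ℕ)) * (n + 1 : ℕ)) *
          ((n + 1 : ℕ) : ℝ) ^ (-(3 : ℝ) / 2)) =
      √n * (a * (rexp (c / n) - 1) ^ (n + l) / saddleScale n c) * headRate c /
        ((n + 1 : ℕ) * (rexp (c / n) - 1) / c) ^ (n + l) * (√(n + 1 : ℕ) / √n) / A := by
  have hx : 0 < rexp (c / n) - 1 := sub_pos.2 (Real.one_lt_exp_iff.2 (by positivity))
  have := one_sub_exp_neg_pos hc
  have hk : (0 : ℝ) < (n + 1 : ℕ) := by positivity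
  have hr := Real.sqrt_pos.2 hk
  have hsq := Real.sq_sqrt hk.le
  rw [mul_assoc A, mul_assoc A, Bterm_pow_mul n.add_one_pos hc hβ, saddleScale, headRate,
    two_mul_sinh_half, add_right_comm n 1 l, pow_succ _ n, pow_succ _ (n + l)]
  generalize √((n + 1 : ℕ) : ℝ) = r at *
  generalize ((n + 1 : ℕ) : ℝ) = k at *
  simp only [mul_pow, div_pow]
  field_simp
  rw [← hsq]

end Constants

section Asymptotics

variable {ι : Type*} {f : Filter ι} {N l : ι → ℕ} {c : ι → ℝ} {c₀ : ℝ}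

lemma tendsto_mul_mul_exp_sub_one_div_sub_one (hN : Tendsto N f atTop) (hc₀ : 0 < c₀)
    (hc : Tendsto c f (𝓝 c₀)) :
    Tendsto (fun i => N i * ((N i + 1 : ℕ) * (rexp (c i / N i) - 1) / c i - 1)) f
      (𝓝 (1 + c₀ / 2)) := by
  have hNr : Tendsto (fun i => (N i : ℝ)) f atTop := tendsto_natCast_atTop_atTop.comp hN
  have hy : Tendsto (fun i => c i / N i) f (𝓝 0) := hc.div_atTop hNr
  have hNy : Tendsto (fun i => N i * (c i / N i)) f (𝓝 c₀) := by
    refine hc.congr' ?_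
    filter_upwards [hN.eventually_gt_atTop 0] with i hi
    field_simp
  have hsecond : Tendsto (fun i => (N i : ℝ) ^ 2 * (rexp (c i / N i) - 1 - c i / N i)) f
      (𝓝 (c₀ ^ 2 / 2)) := by
    have h := hNy.pow 2
    simp only [mul_pow] at h
    rw [← tendsto_ofReal_iff] at hy h ⊢
    push_cast at hy h ⊢
    exact tendsto_mul_exp_sub_one_sub hy h
  have hfirst : Tendsto (fun i => N i * (rexp (c i / N i) - 1)) f (𝓝 c₀) := by
    have h := (hsecond.mul hNr.inv_tendsto_atTop).add hNy
    rw [mul_zero, zero_add] at h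
    refine h.congr' ?_
    filter_upwards [hN.eventually_gt_atTop 0] with i hi
    rw [Pi.inv_apply]
    field_simp
    ring
  have h := (hsecond.add hfirst).div hc hc₀.ne'
  convert h.congr' ?_ using 2
  · field_simp
    ring
  · filter_upwards [hN.eventually_gt_atTop 0, hc.eventually_ne hc₀.ne'] with i hi hci
    simp only [Pi.div_apply]
    push_cast
    field_simp
    ring

lemma tendsto_mul_exp_sub_one_div_pow (hN : Tendsto N f atTop) (hc₀ : 0 < c₀)
    (hc : Tendsto c f (𝓝 c₀)) {b : ℝ} (hl : Tendsto (fun i => 1 + (l i : ℝ) / N i) f (𝓝 b)) :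
    Tendsto (fun i => ((N i + 1 : ℕ) * (rexp (c i / N i) - 1) / c i) ^ (N i + l i)) f
      (𝓝 (rexp (b * (1 + c₀ / 2)))) := by
  have hexponent : Tendsto (fun i => ((N i + l i : ℕ) : ℝ) *
      ((N i + 1 : ℕ) * (rexp (c i / N i) - 1) / c i - 1)) f (𝓝 (b * (1 + c₀ / 2))) := by
    refine (hl.mul (tendsto_mul_mul_exp_sub_one_div_sub_one hN hc₀ hc)).congr' ?_
    filter_upwards [hN.eventually_gt_atTop 0] with i hi
    push_cast
    field_simp
  rw [← tendsto_ofReal_iff] at hexponent ⊢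
  push_cast at hexponent ⊢
  convert tendsto_one_add_pow_sub_exp (tendsto_atTop_mono (fun i => Nat.le_add_right _ (l i)) hN)
    (by push_cast; exact hexponent) 0 using 2
  rw [add_sub_cancel, Nat.sub_zero]

lemma tendsto_sqrt_add_one_div_sqrt (hN : Tendsto N f atTop) :
    Tendsto (fun i => √(N i + 1 : ℕ) / √(N i)) f (𝓝 1) := by
  have hinv := (tendsto_inv_atTop_zero.comp (tendsto_natCast_atTop_atTop.comp hN)).const_add (1 : ℝ)
  rw [add_zero] at hinv
  have hsqrt := hinv.sqrt
  rw [Real.sqrt_one] at hsqrt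
  refine hsqrt.congr' ?_
  filter_upwards [hN.eventually_gt_atTop 0] with i hi
  rw [← Real.sqrt_div (Nat.cast_nonneg _), Function.comp_apply, Function.comp_apply]
  congr 1
  push_cast
  field_simp

lemma tendsto_Aterm (hc₀ : 0 < c₀) (hc : Tendsto c f (𝓝 c₀)) :
    Tendsto (fun i => Aterm (edgeMean (c i) - 1) (c i)) f (𝓝 (Aterm (edgeMean c₀ - 1) c₀)) := by
  have hmean := tendsto_edgeMean hc₀ hc
  have hpos := hc.eventually_const_lt hc₀
  have htail : Tendsto (fun i => tailRate (c i)) f (𝓝 (tailRate c₀)) := by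
    rw [eq_sub_of_add_eq (edgeMean_eq_tailRate_add hc₀).symm]
    refine (hmean.sub (hc.div_const 2)).congr' ?_
    filter_upwards [hpos] with i hi
    rw [edgeMean_eq_tailRate_add hi, add_sub_cancel_right]
  have hvar : Tendsto (fun i => edgeVariance (c i)) f (𝓝 (edgeVariance c₀)) :=
    (hmean.add ((hc.pow 2).div_const 4)).sub (hmean.pow 2)
  have hsqrt : √(2 * π * edgeVariance c₀) ≠ 0 := by
    have := edgeVariance_pos hc₀
    positivity
  have hfrac := (hc.mul (htail.const_sub 1)).div (hvar.const_mul (2 * π)).sqrt hsqrt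
  rw [Aterm_edgeMean_sub_one hc₀]
  refine (hfrac.mul ((hc.mul (hmean.add_const 1)).div_const 2).neg.rexp).congr' ?_
  filter_upwards [hpos] with i hi
  rw [Aterm_edgeMean_sub_one hi]
  rfl

lemma tendsto_sqrt_mul_edgeMean_sub (hN : Tendsto N f atTop) (hc₀ : 0 < c₀)
    (hc : Tendsto c f (𝓝 c₀)) (hβ : ∀ᶠ i in f, edgeMean (c i) - 1 = l i / (N i + 1 : ℕ)) :
    Tendsto (fun i => √(N i) * (edgeMean (c i) - (1 + (l i : ℝ) / N i))) f (𝓝 0) := by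
  have hsqrt : Tendsto (fun i => √(N i : ℝ)) f atTop :=
    Real.tendsto_sqrt_atTop.comp (tendsto_natCast_atTop_atTop.comp hN)
  have h := (((tendsto_edgeMean hc₀ hc).sub_const 1).mul hsqrt.inv_tendsto_atTop).neg
  rw [mul_zero, neg_zero] at h
  refine h.congr' ?_
  filter_upwards [hN.eventually_gt_atTop 0, hβ] with i hi hβi
  rw [← sub_sub, hβi, Pi.inv_apply, ← Real.sqrt_div_self]
  push_cast
  field_simp
  ring

lemma Aterm_mul_exp_eq (hc : 0 < c₀) :
    Aterm (edgeMean c₀ - 1) c₀ * rexp (edgeMean c₀ * (1 + c₀ / 2)) =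
      ballotProb c₀ / √(2 * π * edgeVariance c₀) * headRate c₀ := by
  have := one_sub_exp_neg_pos hc
  have hexp : rexp (tailRate c₀) =
      rexp (-(c₀ * (edgeMean c₀ + 1) / 2)) * rexp (edgeMean c₀ * (1 + c₀ / 2)) := by
    rw [← Real.exp_add, edgeMean_eq_tailRate_add hc]
    ring_nf
  rw [Aterm_edgeMean_sub_one hc, ballotProb, headRate, hexp]
  field_simp

lemma tendsto_connGraphCount_succ_div [f.IsCountablyGenerated] (hN : Tendsto N f atTop)
    (hc₀ : 0 < c₀) (hc : Tendsto c f (𝓝 c₀))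
    (hβ : ∀ᶠ i in f, edgeMean (c i) - 1 = l i / (N i + 1 : ℕ)) :
    Tendsto (fun i => connGraphCount (N i + 1) (l i) /
      (Aterm (l i / (N i + 1 : ℕ)) (c i) * Bterm (l i / (N i + 1 : ℕ)) (c i) ^ (N i + 1) *
        ((N i + 1 : ℕ) : ℝ) ^ ((1 + (l i : ℝ) / (N i + 1 : ℕ)) * (N i + 1 : ℕ)) *
          ((N i + 1 : ℕ) : ℝ) ^ (-(3 : ℝ) / 2))) f (𝓝 1) := by
  have hmean := tendsto_sqrt_mul_edgeMean_sub hN hc₀ hc hβ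
  have hcount := tendsto_connGraphCount hN hc₀ (edgeVariance_pos hc₀) hc hmean
  have hhead : Tendsto (fun i => headRate (c i)) f (𝓝 (headRate c₀)) :=
    hc.div (hc.neg.rexp.const_sub 1) (one_sub_exp_neg_pos hc₀).ne'
  have hpow := tendsto_mul_exp_sub_one_div_pow hN hc₀ hc (tendsto_one_add_div hN hc₀ hc hmean)
  have hA := Aterm_edgeMean_sub_one_ne_zero hc₀
  have hlim := (((hcount.mul hhead).div hpow (Real.exp_ne_zero _)).mul
    (tendsto_sqrt_add_one_div_sqrt hN)).div (tendsto_Aterm hc₀ hc) hA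
  rw [← Aterm_mul_exp_eq hc₀, mul_div_cancel_right₀ _ (Real.exp_ne_zero _), mul_one,
    div_self hA] at hlim
  refine hlim.congr' ?_
  filter_upwards [hβ, hN.eventually_gt_atTop 0, hc.eventually_const_lt hc₀] with i hβi hNi hci
  rw [div_mul_Bterm_pow_eq hNi hci hβi, ← hβi]
  rfl

lemma tendsto_connGraphCount_div [f.IsCountablyGenerated] {k : ι → ℕ} (hk : Tendsto k f atTop)
    (hc₀ : 0 < c₀) (hc : Tendsto c f (𝓝 c₀)) (hβ : ∀ᶠ i in f, edgeMean (c i) - 1 = l i / k i) :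
    Tendsto (fun i => connGraphCount (k i) (l i) /
      (Aterm (l i / k i) (c i) * Bterm (l i / k i) (c i) ^ k i *
        (k i : ℝ) ^ ((1 + (l i : ℝ) / k i) * k i) * (k i : ℝ) ^ (-(3 : ℝ) / 2))) f (𝓝 1) := by
  have hsucc : ∀ᶠ i in f, k i - 1 + 1 = k i :=
    (hk.eventually_gt_atTop 0).mono fun _ hi => Nat.sub_add_cancel hi
  have hN := (tendsto_sub_atTop_nat 1).comp hk
  refine (tendsto_connGraphCount_succ_div (l := l) hN hc₀ hc ?_).congr' ?_
  · filter_upwards [hsucc, hβ] with i hi hβi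
    rw [hβi, Function.comp_apply, hi]
  · filter_upwards [hsucc] with i hi
    rw [Function.comp_apply, hi]

end Asymptotics

section Compactness

lemma tendsto_of_eventually_mem_isCompact {α β X : Type*} [TopologicalSpace X]
    [TopologicalSpace β] {f : Filter α} {u : α → X} {v : α → β} {y : β} {K : Set X}
    (hK : IsCompact K) (hu : ∀ᶠ a in f, u a ∈ K)
    (h : ∀ x ∈ K, Tendsto v (f ⊓ comap u (𝓝 x)) (𝓝 y)) : Tendsto v f (𝓝 y) := by
  refine tendsto_iff_ultrafilter _ _ _ |>.2 fun g hg => ?_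
  obtain ⟨x, hx, hgx⟩ := hK.ultrafilter_le_nhds (g.map u) (le_principal_iff.2 (hg hu))
  exact (h x hx).mono_left (le_inf hg (map_le_iff_le_comap.1 hgx))

lemma edgeMean_eq_and_mem_Icc {ε β c : ℝ} (hε : 0 < ε) (hc : 0 < c) (hβ : β ∈ Set.Icc ε ε⁻¹)
    (h : rexp (-c) = (2 * (β + 1) - c) / (2 * (β + 1) + c)) :
    edgeMean c - 1 = β ∧ c ∈ Set.Icc (2 * ε) (2 * (ε⁻¹ + 1)) := by
  have hmean := edgeMean_eq_of_exp_neg_eq (by linarith [hβ.1]) hc h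
  have htail := edgeMean_eq_tailRate_add hc
  have hnonneg := tailRate_nonneg hc
  have hlt := tailRate_lt_one hc
  exact ⟨by linarith, by linarith [hβ.1], by linarith [hβ.2]⟩

end Compactness

end ConnGraph

/-- Theorem `thm-Cllarge`, `l` large: fix `ε > 0` and let
`l = l(k)` be positive integers with `l(k) ∈ [εk, ε⁻¹k]`.  With `β = l/k` and
`c = c(β) > 0` the solution of `e^{-c} = (2(β+1)-c)/(2(β+1)+c)`, we have, as
`k → ∞`, `C(k, kβ) ∼ A · B^k · k^{(1+β)k} · k^{-3/2}`. -/
theorem C_asymp_large (ε : ℝ) (hε : 0 < ε) (l : ℕ → ℕ) (hpos : ∀ k, 0 < l k)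
    (hrange : ∀ᶠ k : ℕ in atTop, ε * k ≤ (l k : ℝ) ∧ (l k : ℝ) ≤ ε⁻¹ * k)
    (c : ℕ → ℝ) (hcpos : ∀ k, 0 < c k)
    (hceq : ∀ᶠ k : ℕ in atTop,
        Real.exp (-c k) =
          (2 * ((l k : ℝ) / k + 1) - c k) / (2 * ((l k : ℝ) / k + 1) + c k)) :
    Tendsto (fun k : ℕ =>
        (connGraphCount k (l k) : ℝ) /
          (Aterm ((l k : ℝ) / k) (c k) * Bterm ((l k : ℝ) / k) (c k) ^ (k : ℕ) *
            (k : ℝ) ^ ((1 + (l k : ℝ) / k) * k) * (k : ℝ) ^ (-(3 : ℝ) / 2)))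
      atTop (𝓝 1) := by
  have hmem : ∀ᶠ k in atTop, ConnGraph.edgeMean (c k) - 1 = l k / k ∧
      c k ∈ Set.Icc (2 * ε) (2 * (ε⁻¹ + 1)) := by
    filter_upwards [hrange, hceq, eventually_gt_atTop 0] with k hl he hk
    have hk₀ : (0 : ℝ) < k := Nat.cast_pos.2 hk
    exact ConnGraph.edgeMean_eq_and_mem_Icc hε (hcpos k)
      ⟨(le_div_iff₀ hk₀).2 hl.1, (div_le_iff₀ hk₀).2 hl.2⟩ he
  refine ConnGraph.tendsto_of_eventually_mem_isCompact isCompact_Icc (hmem.mono fun _ => And.right)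
    fun c₀ hc₀ => ?_
  exact ConnGraph.tendsto_connGraphCount_div (tendsto_id.mono_left inf_le_left)
    ((mul_pos two_pos hε).trans_le hc₀.1) (tendsto_comap.mono_left inf_le_right)
    ((hmem.mono fun _ => And.left).filter_mono inf_le_left)
end

section
/- Let ε = ε(n) → 0⁺ and L = L(n) → ∞ with L·ε² → ∞. Consider the leftwalk with i.i.d. steps Z_i ~ Po(1+ε). Then Pr[ESC_L] ~ 2ε as n → ∞, i.e. Pr[ESC_L]/(2ε) → 1. -/
open Filter Topology Real Finset

-- Indicator of a proposition, as a real number.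
open Classical in
noncomputable def ind (P : Prop) : ℝ := if P then 1 else 0

/-- Poisson point mass: `Pr[Po(r) = n]`. -/
noncomputable def poissonP (r : ℝ) (n : ℕ) : ℝ := Real.exp (-r) * r ^ n / n.factorial

/-- The escape condition for the leftwalk `Y_0 = 1`, `Y_i = Y_{i-1} + Z_i - 1` up to
time `L`: `Y_t > 0` for `1 ≤ t ≤ L`, i.e. `Z_1 + ⋯ + Z_t ≥ t`.  Here bin `i+1`
contains `z i` balls (0-based indexing). -/
def leftOK (L : ℕ) (z : Fin L → ℕ) : Prop :=
  ∀ t, 1 ≤ t → t ≤ L → t ≤ ∑ i ∈ Finset.univ.filter (fun i : Fin L => (i : ℕ) < t), z i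

/-- The escape condition for the rightwalk `Y_0^R = 0`, `Y_i^R = Y_{i-1}^R + 1 - Z_i^R`
up to time `L`: `Y_t^R > 0` for `1 ≤ t ≤ L`, i.e. `Z_1^R + ⋯ + Z_t^R ≤ t - 1`. -/
def rightOK (L : ℕ) (z : Fin L → ℕ) : Prop :=
  ∀ t, 1 ≤ t → t ≤ L → (∑ i ∈ Finset.univ.filter (fun i : Fin L => (i : ℕ) < t), z i) < t

/-- `Pr[ESC_L]` for the leftwalk with independent steps `Z_i ∼ Po(lam i)`. -/
noncomputable def escLProbV (lam : ℕ → ℝ) (L : ℕ) : ℝ :=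
  ∑' z : Fin L → ℕ, (∏ i : Fin L, poissonP (lam (i : ℕ)) (z i)) * ind (leftOK L z)

/-- `Pr[ESC_L]` for the leftwalk with i.i.d. steps `Z_i ∼ Po(r)`. -/
noncomputable def escLProb (r : ℝ) (L : ℕ) : ℝ := escLProbV (fun _ => r) L

/-- `Pr[ESC]` for the leftwalk with i.i.d. steps `Z_i ∼ Po(r)`: since
`ESC = ⋂_L ESC_L` is a decreasing intersection, `Pr[ESC] = inf_L Pr[ESC_L]`. -/
noncomputable def escProb (r : ℝ) : ℝ := ⨅ L : ℕ, escLProb r L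

/-- `Pr[ESC_L^R]` for the rightwalk with independent steps `Z_i^R ∼ Po(lam i)`. -/
noncomputable def escRLProbV (lam : ℕ → ℝ) (L : ℕ) : ℝ :=
  ∑' z : Fin L → ℕ, (∏ i : Fin L, poissonP (lam (i : ℕ)) (z i)) * ind (rightOK L z)

/-- `Pr[ESC_L^R]` for the rightwalk with i.i.d. steps `Z_i^R ∼ Po(r)`. -/
noncomputable def escRLProb (r : ℝ) (L : ℕ) : ℝ := escRLProbV (fun _ => r) L

/-- `Pr[ESC^R]` for the rightwalk with i.i.d. steps `Z_i^R ∼ Po(r)`. -/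
noncomputable def escRProb (r : ℝ) : ℝ := ⨅ L : ℕ, escRLProb r L

/-!
For `r > 1` let `x < 1` be the root of `exp (r * (x - 1)) = x`, the fixed point of the generating
function of `Po(r)`. From height `y` the leftwalk ever reaches `0` with probability `x ^ y`, so
`Pr[ESC_L]` exceeds `1 - x` by the probability that the absorption time `T` is finite but larger
than `L`. By Markov's inequality this excess is at most `E[T; T < ∞] / L = x / ((1 - r * x) * L)`:
conditioned to die, the walk has drift `r * x - 1`. Both bounds are propagated by induction on `L`
through the first step of the walk. For `r = 1 + ε` the excess is `O(1 / (ε * L)) = o(ε)`, and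
`1 - x ∼ 2 * ε`: as `r⁻¹` is the logarithmic mean of `x` and `1`, it lies between their geometric
and arithmetic means, which says `1 - r⁻² ≤ 1 - x ≤ 2 * (1 - r⁻¹)`.
-/

lemma ind_nonneg (P : Prop) : 0 ≤ ind P := by
  unfold ind
  split_ifs <;> norm_num

lemma ind_le_one (P : Prop) : ind P ≤ 1 := by
  unfold ind
  split_ifs <;> norm_num

section SurvivalProbability

/-- The walk with steps `z`, started at height `y` in place of `1`, is positive at all times
`t ≤ L`. Time `0` is included, so that no walk from height `0` survives. -/
def StaysPositive (y L : ℕ) (z : Fin L → ℕ) : Prop :=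
  ∀ t ≤ L, t < y + ∑ i ∈ Finset.univ.filter (fun i : Fin L => (i : ℕ) < t), z i

/-- The probability that the walk with independent steps of mass function `p`, started at
height `y`, stays positive up to time `L`. -/
noncomputable def survivalProb (p : ℕ → ℝ) (y L : ℕ) : ℝ :=
  ∑' z : Fin L → ℕ, (∏ i, p (z i)) * ind (StaysPositive y L z)

lemma leftOK_iff_staysPositive (L : ℕ) (z : Fin L → ℕ) : leftOK L z ↔ StaysPositive 1 L z := by
  constructor
  · intro h t ht
    rcases Nat.eq_zero_or_pos t with rfl | ht0
    · omega
    · have := h t ht0 ht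
      omega
  · intro h t _ ht
    have := h t ht
    omega

lemma escLProb_eq_survivalProb (r : ℝ) (L : ℕ) :
    escLProb r L = survivalProb (poissonP r) 1 L := by
  simp only [escLProb, escLProbV, survivalProb, leftOK_iff_staysPositive]

lemma not_staysPositive_zero (L : ℕ) (z : Fin L → ℕ) : ¬ StaysPositive 0 L z := fun h => by
  simpa using h 0 L.zero_le

lemma staysPositive_cons (m L k : ℕ) (z : Fin L → ℕ) :
    StaysPositive (m + 1) (L + 1) (Fin.cons k z) ↔ StaysPositive (m + k) L z := by
  have sum_cons (t : ℕ) :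
      ∑ i ∈ Finset.univ.filter (fun i : Fin (L + 1) => (i : ℕ) < t + 1),
        (Fin.cons k z : Fin (L + 1) → ℕ) i =
      k + ∑ i ∈ Finset.univ.filter (fun i : Fin L => (i : ℕ) < t), z i := by
    simp [Finset.sum_filter, Fin.sum_univ_succ]
  constructor
  · intro h t ht
    have := h (t + 1) (by omega)
    rw [sum_cons] at this
    omega
  · rintro h (_ | t) ht
    · omega
    · have := h t (by omega)
      rw [sum_cons]
      omega

lemma survivalProb_zero_left (p : ℕ → ℝ) (L : ℕ) : survivalProb p 0 L = 0 := by
  simp [survivalProb, ind, not_staysPositive_zero]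

lemma survivalProb_succ_zero (p : ℕ → ℝ) (m : ℕ) : survivalProb p (m + 1) 0 = 1 := by
  simp [survivalProb, ind, StaysPositive]

lemma hasSum_fin_prod {α : Type*} {n : ℕ} {f : Fin n → α → ℝ} {a : Fin n → ℝ}
    (hf0 : ∀ i x, 0 ≤ f i x) (hf : ∀ i, HasSum (f i) (a i)) :
    HasSum (fun z : Fin n → α => ∏ i, f i (z i)) (∏ i, a i) := by
  induction n with
  | zero => simp
  | succ n ih =>
    have htail := ih (fun i => hf0 i.succ) (fun i => hf i.succ)
    have hhead0 : 0 ≤ f 0 := hf0 0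
    have htail0 (z : Fin n → α) : 0 ≤ ∏ i, f i.succ (z i) :=
      Finset.prod_nonneg fun i _ => hf0 i.succ (z i)
    have hsummable := (hf 0).summable.mul_of_nonneg htail.summable hhead0 htail0
    have hmul := (hf 0).mul htail hsummable
    rw [← (Fin.consEquiv fun _ : Fin (n + 1) => α).hasSum_iff, Fin.prod_univ_succ]
    refine hmul.congr_fun fun z => ?_
    simp [Fin.consEquiv, Fin.prod_univ_succ]

variable {p : ℕ → ℝ} (hp0 : ∀ k, 0 ≤ p k) (hp : HasSum p 1)

include hp0 hp

lemma summable_survivalProb (y L : ℕ) :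
    Summable fun z : Fin L → ℕ => (∏ i, p (z i)) * ind (StaysPositive y L z) :=
  have hprod (z : Fin L → ℕ) : 0 ≤ ∏ i, p (z i) := Finset.prod_nonneg fun _ _ => hp0 _
  .of_nonneg_of_le (fun z => mul_nonneg (hprod z) (ind_nonneg _))
    (fun z => mul_le_of_le_one_right (hprod z) (ind_le_one _))
    (hasSum_fin_prod (fun _ => hp0) fun _ => hp).summable

lemma survivalProb_le_one (y L : ℕ) : survivalProb p y L ≤ 1 := by
  refine hasSum_le (fun z => ?_) (summable_survivalProb hp0 hp y L).hasSum
    (by simpa using hasSum_fin_prod (n := L) (fun _ => hp0) fun _ => hp)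
  exact mul_le_of_le_one_right (Finset.prod_nonneg fun _ _ => hp0 _) (ind_le_one _)

lemma hasSum_survivalProb_succ (m L : ℕ) :
    HasSum (fun k => p k * survivalProb p (m + k) L) (survivalProb p (m + 1) (L + 1)) := by
  have hpaths := (Fin.consEquiv fun _ : Fin (L + 1) => ℕ).hasSum_iff.2
    (summable_survivalProb hp0 hp (m + 1) (L + 1)).hasSum
  refine hpaths.prod_fiberwise fun k => ?_
  convert! (summable_survivalProb hp0 hp (m + k) L).hasSum.mul_left (p k) using 2 with z
  simp [Fin.consEquiv, Fin.prod_univ_succ, staysPositive_cons, mul_assoc]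

variable {x : ℝ} (hx0 : 0 ≤ x) (hx : HasSum (fun k => p k * x ^ k) x)

include hx0 hx

theorem one_sub_pow_le_survivalProb (y L : ℕ) : 1 - x ^ y ≤ survivalProb p y L := by
  induction L generalizing y with
  | zero =>
    rcases y with _ | m
    · simp [survivalProb_zero_left]
    · rw [survivalProb_succ_zero]
      exact sub_le_self 1 (pow_nonneg hx0 _)
  | succ L ih =>
    rcases y with _ | m
    · simp [survivalProb_zero_left]
    · rw [pow_succ]
      refine hasSum_le (fun k => ?_) (hp.sub (hx.mul_left (x ^ m)))
        (hasSum_survivalProb_succ hp0 hp m L)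
      calc p k - x ^ m * (p k * x ^ k) = p k * (1 - x ^ (m + k)) := by ring
        _ ≤ p k * survivalProb p (m + k) L := mul_le_mul_of_nonneg_left (ih _) (hp0 k)

variable {q : ℝ} (hq1 : q < 1) (hq : HasSum (fun k => p k * (k * x ^ k)) (q * x))

include hq1 hq

-- The right-hand side is `E[T; T < ∞]` for the hitting time `T` of `0` from height `y`. It solves
-- the first-step equation, which is why the induction closes.
theorem mul_survivalProb_sub_le (y L : ℕ) :
    L * (survivalProb p y L - (1 - x ^ y)) ≤ y * x ^ y / (1 - q) := by
  have hq0 : 0 < 1 - q := sub_pos.2 hq1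
  induction L generalizing y with
  | zero =>
    rw [Nat.cast_zero, zero_mul]
    positivity
  | succ L ih =>
    rcases y with _ | m
    · simp [survivalProb_zero_left]
    · set S := survivalProb p (m + 1) (L + 1)
      have hlhs : HasSum (fun k => p k * (L * (survivalProb p (m + k) L - (1 - x ^ (m + k)))))
          (L * (S - (1 - x ^ (m + 1)))) := by
        convert! ((hasSum_survivalProb_succ hp0 hp m L).sub
          (hp.sub (hx.mul_left (x ^ m)))).mul_left (L : ℝ) using 1
        ext k
        ring
      have hrhs : HasSum (fun k => p k * ((m + k : ℕ) * x ^ (m + k) / (1 - q)))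
          (x ^ m * (m * x + q * x) / (1 - q)) := by
        convert! (((hx.mul_left (m : ℝ)).add hq).mul_left (x ^ m)).div_const (1 - q) using 2
        push_cast
        ring
      have hstep := hasSum_le (fun k => mul_le_mul_of_nonneg_left (ih _) (hp0 k)) hlhs hrhs
      have hlast : S - (1 - x ^ (m + 1)) ≤ x ^ (m + 1) := by
        linarith [survivalProb_le_one hp0 hp (m + 1) (L + 1)]
      calc ((L + 1 : ℕ) : ℝ) * (S - (1 - x ^ (m + 1)))
          = L * (S - (1 - x ^ (m + 1))) + (S - (1 - x ^ (m + 1))) := by push_cast; ring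
        _ ≤ x ^ m * (m * x + q * x) / (1 - q) + x ^ (m + 1) := add_le_add hstep hlast
        _ = (m + 1 : ℕ) * x ^ (m + 1) / (1 - q) := by
          field_simp
          push_cast
          ring

end SurvivalProbability

section PoissonSteps

lemma poissonP_nonneg {r : ℝ} (hr : 0 ≤ r) (k : ℕ) : 0 ≤ poissonP r k := by
  unfold poissonP
  positivity

lemma poissonP_succ_mul (r : ℝ) (k : ℕ) :
    poissonP r (k + 1) * (k + 1 : ℕ) = r * poissonP r k := by
  unfold poissonP
  rw [Nat.factorial_succ, pow_succ]
  push_cast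
  field_simp

lemma hasSum_poissonP_mul_pow (r x : ℝ) :
    HasSum (fun k => poissonP r k * x ^ k) (exp (r * (x - 1))) := by
  convert! (NormedSpace.expSeries_div_hasSum_exp (r * x)).mul_left (exp (-r)) using 1
  · ext k
    rw [poissonP, mul_pow]
    ring
  · rw [← exp_eq_exp_ℝ, ← exp_add]
    ring_nf

lemma hasSum_poissonP (r : ℝ) : HasSum (poissonP r) 1 := by
  simpa using hasSum_poissonP_mul_pow r 1

lemma hasSum_poissonP_mul_mul_pow (r x : ℝ) :
    HasSum (fun k => poissonP r k * (k * x ^ k)) (r * x * exp (r * (x - 1))) := by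
  rw [← hasSum_nat_add_iff' 1]
  convert! (hasSum_poissonP_mul_pow r x).mul_left (r * x) using 1
  · ext k
    rw [← mul_assoc, poissonP_succ_mul]
    ring
  · simp

lemma exp_inv_sub_self_le {r : ℝ} (hr : 1 ≤ r) : exp (r⁻¹ - r) ≤ (r ^ 2)⁻¹ := by
  have hr0 : 0 < r := by linarith
  have hlog : log r ≤ (r - r⁻¹) / 2 := by
    rw [← sinh_log hr0]
    exact self_le_sinh_iff.2 (log_nonneg hr)
  rw [← le_log_iff_exp_le (by positivity), log_inv, log_pow]
  push_cast
  linarith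

lemma two_mul_inv_sub_one_le_of_exp_eq {r x : ℝ} (hr : 0 < r) (hx0 : 0 < x) (hx1 : x < 1)
    (hx : exp (r * (x - 1)) = x) : 2 * r⁻¹ - 1 ≤ x := by
  have hlog : 2 * (x⁻¹ - 1) / (x⁻¹ - 1 + 2) ≤ r * (1 - x) := by
    have h := le_log_one_add_of_nonneg (x := x⁻¹ - 1) (sub_nonneg.2 ((one_le_inv₀ hx0).2 hx1.le))
    rw [add_sub_cancel, log_inv, ← hx, log_exp, hx] at h
    linarith
  have hratio : 2 * (x⁻¹ - 1) / (x⁻¹ - 1 + 2) = 2 / (1 + x) * (1 - x) := by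
    rw [show x⁻¹ - 1 + 2 = (1 + x) / x by field_simp; ring]
    field_simp
  rw [hratio, mul_le_mul_iff_left₀ (sub_pos.2 hx1), div_le_iff₀ (by linarith)] at hlog
  rw [← div_eq_mul_inv, sub_le_iff_le_add, div_le_iff₀ hr]
  linarith

theorem exists_poisson_extinction_root {r : ℝ} (hr : 1 < r) :
    ∃ x, 2 * r⁻¹ - 1 ≤ x ∧ 0 < x ∧ x ≤ (r ^ 2)⁻¹ ∧ exp (r * (x - 1)) = x := by
  have hr0 : 0 < r := by linarith
  have hlt : (r ^ 2)⁻¹ < 1 := inv_lt_one_of_one_lt₀ (one_lt_pow₀ hr two_ne_zero)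
  have hcont : Continuous fun x => exp (r * (x - 1)) - x := by fun_prop
  have hend : exp (r * ((r ^ 2)⁻¹ - 1)) - (r ^ 2)⁻¹ ≤ 0 := by
    have : r * ((r ^ 2)⁻¹ - 1) = r⁻¹ - r := by field_simp
    rw [this]
    exact sub_nonpos.2 (exp_inv_sub_self_le hr.le)
  obtain ⟨x, ⟨-, hxle⟩, hroot⟩ := intermediate_value_Icc' (by positivity : 0 ≤ (r ^ 2)⁻¹)
    hcont.continuousOn ⟨hend, by simpa using (exp_pos _).le⟩
  have hx : exp (r * (x - 1)) = x := sub_eq_zero.1 hroot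
  have hx0 : 0 < x := hx ▸ exp_pos _
  exact ⟨x, two_mul_inv_sub_one_le_of_exp_eq hr0 hx0 (hxle.trans_lt hlt) hx, hx0, hxle, hx⟩

theorem one_sub_inv_sq_le_escLProb {r : ℝ} (hr : 1 < r) (L : ℕ) :
    1 - (r ^ 2)⁻¹ ≤ escLProb r L := by
  obtain ⟨x, -, hx0, hxle, hx⟩ := exists_poisson_extinction_root hr
  have hgf : HasSum (fun k => poissonP r k * x ^ k) x := by
    simpa only [hx] using hasSum_poissonP_mul_pow r x
  have hsurv := one_sub_pow_le_survivalProb (poissonP_nonneg (by linarith)) (hasSum_poissonP r)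
    hx0.le hgf 1 L
  rw [pow_one] at hsurv
  rw [escLProb_eq_survivalProb]
  linarith

theorem mul_escLProb_sub_le {r : ℝ} (hr : 1 < r) (L : ℕ) :
    L * (escLProb r L - 2 * (1 - r⁻¹)) ≤ (r * (r - 1))⁻¹ := by
  obtain ⟨x, hlex, hx0, hxle, hx⟩ := exists_poisson_extinction_root hr
  have hr0 : 0 < r := by linarith
  have hgf : HasSum (fun k => poissonP r k * x ^ k) x := by
    simpa only [hx] using hasSum_poissonP_mul_pow r x
  have hgf' : HasSum (fun k => poissonP r k * (k * x ^ k)) (r * x * x) := by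
    simpa only [hx] using hasSum_poissonP_mul_mul_pow r x
  have hrx : r * x ≤ r⁻¹ := by
    calc r * x ≤ r * (r ^ 2)⁻¹ := mul_le_mul_of_nonneg_left hxle hr0.le
      _ = r⁻¹ := by field_simp
  have hrinv : r⁻¹ < 1 := inv_lt_one_of_one_lt₀ hr
  have hsurv := mul_survivalProb_sub_le (poissonP_nonneg hr0.le) (hasSum_poissonP r) hx0.le hgf
    (hrx.trans_lt hrinv) hgf' 1 L
  rw [← escLProb_eq_survivalProb, pow_one, Nat.cast_one, one_mul] at hsurv
  calc L * (escLProb r L - 2 * (1 - r⁻¹)) ≤ L * (escLProb r L - (1 - x)) := by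
        gcongr
        linarith
    _ ≤ x / (1 - r * x) := hsurv
    _ ≤ (r ^ 2)⁻¹ / (1 - r⁻¹) := by
        have : 0 < 1 - r⁻¹ := sub_pos.2 hrinv
        gcongr
    _ = (r * (r - 1))⁻¹ := by
        have : r - 1 ≠ 0 := by linarith
        field_simp

end PoissonSteps

theorem le_escLProb_div {e : ℝ} (he : 0 < e) (L : ℕ) :
    (1 + e / 2) / (1 + e) ^ 2 ≤ escLProb (1 + e) L / (2 * e) := by
  rw [le_div_iff₀ (by positivity)]
  calc (1 + e / 2) / (1 + e) ^ 2 * (2 * e) = 1 - ((1 + e) ^ 2)⁻¹ := by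
        field_simp
        ring
    _ ≤ escLProb (1 + e) L := one_sub_inv_sq_le_escLProb (by linarith) L

theorem escLProb_div_le {e : ℝ} (he : 0 < e) {L : ℕ} (hL : 0 < L) :
    escLProb (1 + e) L / (2 * e) ≤ (1 + (L * e ^ 2)⁻¹ / 2) / (1 + e) := by
  have hL' : (0 : ℝ) < L := Nat.cast_pos.2 hL
  have hexcess : escLProb (1 + e) L - 2 * (1 - (1 + e)⁻¹) ≤ ((1 + e) * e)⁻¹ / L := by
    rw [le_div_iff₀' hL']
    simpa only [add_sub_cancel_left] using mul_escLProb_sub_le (r := 1 + e) (by linarith) L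
  rw [div_le_iff₀ (by positivity)]
  calc escLProb (1 + e) L ≤ 2 * (1 - (1 + e)⁻¹) + ((1 + e) * e)⁻¹ / L := by linarith
    _ = (1 + (L * e ^ 2)⁻¹ / 2) / (1 + e) * (2 * e) := by
        field_simp
        ring

theorem escL_asymp_general {ι : Type*} {l : Filter ι} {ε : ι → ℝ} {L : ι → ℕ}
    (hεpos : ∀ᶠ n in l, 0 < ε n) (hε0 : Tendsto ε l (𝓝 0))
    (hLε : Tendsto (fun n => (L n : ℝ) * ε n ^ 2) l atTop) :
    Tendsto (fun n => escLProb (1 + ε n) (L n) / (2 * ε n)) l (𝓝 1) := by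
  have hlower : Tendsto (fun n => (1 + ε n / 2) / (1 + ε n) ^ 2) l (𝓝 1) := by
    simpa [Pi.div_def] using ((hε0.div_const 2).const_add 1).div ((hε0.const_add 1).pow 2)
      (by norm_num)
  have hupper : Tendsto (fun n => (1 + (L n * ε n ^ 2)⁻¹ / 2) / (1 + ε n)) l (𝓝 1) := by
    simpa [Pi.div_def] using ((hLε.inv_tendsto_atTop.div_const 2).const_add 1).div (hε0.const_add 1)
      (by norm_num)
  have hLpos : ∀ᶠ n in l, 0 < L n := by
    filter_upwards [hLε.eventually_gt_atTop 0] with n hn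
    exact Nat.cast_pos.1 (pos_of_mul_pos_left hn (sq_nonneg _))
  refine tendsto_of_tendsto_of_tendsto_of_le_of_le' hlower hupper ?_ ?_
  · filter_upwards [hεpos] with n hn using le_escLProb_div hn (L n)
  · filter_upwards [hεpos, hLpos] with n hn hLn using escLProb_div_le hn hLn

/-- Proposition `t3`: if `ε = ε(n) → 0⁺` and `L = L(n) → ∞` with
`L ε² → ∞`, then for the leftwalk with i.i.d. steps `Z_i ∼ Po(1+ε)` one has
`Pr[ESC_L] ∼ 2ε`. -/
theorem escL_asymp (ε : ℕ → ℝ) (L : ℕ → ℕ)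
    (hεpos : ∀ n, 0 < ε n) (hε0 : Tendsto ε atTop (𝓝 0))
    (hL : Tendsto L atTop atTop)
    (hLε : Tendsto (fun n : ℕ => (L n : ℝ) * ε n ^ 2) atTop atTop) :
    Tendsto (fun n : ℕ => escLProb (1 + ε n) (L n) / (2 * ε n)) atTop (𝓝 1) :=
  escL_asymp_general (.of_forall hεpos) hε0 hLε
end
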